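/- arXiv:math/0406335 — 5 statements merged into one kernel-verified Lean document; each statement's English description precedes it below -/
import Mathlib

section
/- There is a constant C > 0 such that for every positive integer b and every real t > e^e: (a) if b > t^{1/4}, then Σ_{r prime, r ≡ 1 (mod b)} π(t; r, 1) ≤ C·t·log t/b; (b) if b ≤ t^{1/4}, then Σ_{r prime, r ≡ 1 (mod b), r > t^{1/3}} π(t; r, 1) ≤ C·b·t/(φ(b)²·log t), and Σ_{r prime, r ≡ 1 (mod b)} π(t; r, 1) ≤ C·t·(log log t)/(φ(b)·log t). -/
/-!
Two different arguments give the estimates.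

If `b` is large, the trivial bound `π(t; r, 1) ≤ t / r` is enough: writing `r = b k + 1`, the sum is
at most `(t / b) ∑_{k ≤ t} 1 / k` (`part_a`).

If `b ≤ t ^ (1 / 4)`, the terms with `r > t ^ (1 / 3)` are handled by switching divisors. A prime
counted by `π(t; r, 1)` is `p = r m + 1` with `m < t ^ (2 / 3)`, so for each such `m` one has to count
the `k < t / (b m)` with `b k + 1` and `m (b k + 1) + 1` both prime. An upper bound sieve of dimension
two gives `≪ (b / φ(b)) ^ 2 (m / φ(m)) M / (log M) ^ 2`, with `M` about `t / (b m) ≥ t ^ (1 / 12)`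
(`pair_count`, `pair_bound`), and the sum over `m` costs `∑_{m ≤ t} 1 / φ(m) ≪ log t`
(`sum_inv_totient_le`, `part_b1`). For `r ≤ t ^ (1 / 3)`, the Brun–Titchmarsh inequality gives
`π(t; r, 1) ≪ t / (r log t)`, and a dyadic decomposition together with Brun–Titchmarsh modulo `b`
gives `∑ 1 / r ≪ log log t / φ(b)` (`sum_inv_ap`). The large `r` are absorbed in the bound for the
full sum by means of `b / φ(b) ≪ log log t` (`div_totient_le`), which comes from the upper bound in
Mertens' product theorem (`prod_primesLE_le`).

Both sieve bounds come from `sieve`, a dual form of Selberg's sieve. For squarefree `d` let `glob d`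
be the product over `p ∣ d` of the function modulo `p` that equals `-1` on the `ρ(p)` excluded classes
and `ρ(p) / (p - ρ(p))` on the others, hence has mean zero. These functions are nearly orthogonal on
intervals, and on the sifted set their sum over `d ≤ R` is the constant `selSum`, so its second moment
bounds the size of the sifted set by about `M / selSum`. The Selberg sum is bounded below by
comparison with `∑_{n ≤ R} 1 / n` (`log_le_selSum`), multiplied by itself for dimension two
(`selSum_mul_le`); changing the densities at the primes dividing `b m` costs the factors `b / φ(b)` and
`m / φ(m)` (`selSum_removal`).
-/

/-- `pi1 t m` is `π(t; m, 1)`, the number of primes `p ≤ t` with `p ≡ 1 (mod m)`. -/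
noncomputable def pi1 (t : ℝ) (m : ℕ) : ℕ :=
  Set.ncard {p : ℕ | p.Prime ∧ (p : ℝ) ≤ t ∧ p ≡ 1 [MOD m]}

namespace SumPi1

open Finset

/-! ### Selberg's sieve for at most two excluded classes -/

/-- Splitting a sum over a full period by the Chinese remainder theorem. -/
lemma sum_range_mul_coprime {M q : ℕ} (hM : 0 < M) (hq : 0 < q) (hc : M.Coprime q)
    (f g : ℕ → ℝ) (hf : ∀ n, f (n % M) = f n) (hg : ∀ n, g (n % q) = g n) :
    ∑ n ∈ range (M * q), f n * g n = (∑ n ∈ range M, f n) * ∑ n ∈ range q, g n := by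
  rw [sum_mul_sum, ← sum_product']
  refine sum_bij (fun n _ => (n % M, n % q)) ?_ ?_ ?_ ?_
  · intro n _
    simp [Nat.mod_lt _ hM, Nat.mod_lt _ hq]
  · intro a ha b hb hab
    simp only [Prod.mk.injEq] at hab
    have h : a ≡ b [MOD M * q] := (Nat.modEq_and_modEq_iff_modEq_mul hc).1 ⟨hab.1, hab.2⟩
    exact Nat.ModEq.eq_of_lt_of_lt h (mem_range.1 ha) (mem_range.1 hb)
  · rintro ⟨a, b⟩ hab
    simp only [mem_product, mem_range] at hab
    refine ⟨Nat.chineseRemainder hc a b, mem_range.2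
      (Nat.chineseRemainder_lt_mul hc a b hM.ne' hq.ne'), ?_⟩
    have h1 := (Nat.chineseRemainder hc a b).2.1
    have h2 := (Nat.chineseRemainder hc a b).2.2
    simp only [Nat.ModEq] at h1 h2
    rw [h1, h2, Nat.mod_eq_of_lt hab.1, Nat.mod_eq_of_lt hab.2]
  · intro n _
    simp [hf, hg]

lemma prod_mod_period (s : Finset ℕ) (f : ℕ → ℕ → ℝ) (hf : ∀ p n, f p (n % p) = f p n)
    (n : ℕ) : ∏ p ∈ s, f p (n % ∏ p ∈ s, p) = ∏ p ∈ s, f p n := by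
  refine prod_congr rfl fun p hp => ?_
  rw [← hf p (n % _), Nat.mod_mod_of_dvd _ (dvd_prod_of_mem _ hp), hf]

/-- Over a full period, the sum of a product of functions modulo distinct primes factors, by the
Chinese remainder theorem. -/
lemma sum_range_prod (s : Finset ℕ) (hs : ∀ p ∈ s, p.Prime) (f : ℕ → ℕ → ℝ)
    (hf : ∀ p n, f p (n % p) = f p n) :
    ∑ n ∈ range (∏ p ∈ s, p), ∏ p ∈ s, f p n = ∏ p ∈ s, ∑ n ∈ range p, f p n := by
  induction s using Finset.induction_on with
  | empty => simp
  | insert a s ha ih =>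
    have hs' : ∀ p ∈ s, p.Prime := fun p hp => hs p (mem_insert_of_mem hp)
    have hap := hs a (mem_insert_self _ _)
    rw [prod_insert ha, prod_insert ha, ← ih hs']
    rw [← sum_range_mul_coprime hap.pos (prod_pos fun p hp => (hs' p hp).pos) ?_ (f a) _ (hf a)
      (prod_mod_period s f hf)]
    · exact sum_congr rfl fun n _ => prod_insert ha
    · refine Nat.Coprime.prod_right fun p hp => (Nat.coprime_primes hap (hs' p hp)).2 ?_
      rintro rfl
      exact ha hp

/-- A bounded `q`-periodic function has on `[0, N)` about `N` times its mean as sum. -/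
lemma abs_sum_range_periodic (F : ℕ → ℝ) {q : ℕ} (hq : 0 < q) (B : ℝ)
    (hF : ∀ n, F (n % q) = F n) (hB : ∀ n, |F n| ≤ B) (N : ℕ) :
    |∑ n ∈ range N, F n - N / q * ∑ n ∈ range q, F n| ≤ 2 * q * B := by
  have hB0 : 0 ≤ B := (abs_nonneg _).trans (hB 0)
  have hq' : (0 : ℝ) < q := by exact_mod_cast hq
  have hFa : ∀ a n, F (q * a + n) = F n := fun a n => by
    rw [← hF (q * a + n), Nat.mul_add_mod, hF]
  have h1 : ∀ a : ℕ, ∑ n ∈ range (q * a), F n = a * ∑ n ∈ range q, F n := by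
    intro a
    induction a with
    | zero => simp
    | succ a ih =>
      rw [Nat.mul_succ, sum_range_add, ih]
      simp only [hFa]
      push_cast; ring
  have hsum : ∀ r : ℕ, |∑ n ∈ range r, F n| ≤ r * B := fun r => by
    refine (abs_sum_le_sum_abs _ _).trans ((sum_le_sum fun n _ => hB n).trans ?_)
    simp
  have hN : ∑ n ∈ range N, F n =
      (N / q : ℕ) * ∑ n ∈ range q, F n + ∑ n ∈ range (N % q), F n := by
    conv_lhs => rw [← Nat.div_add_mod N q]
    rw [sum_range_add, h1]
    simp only [hFa]
  have hNq : (N : ℝ) = q * (N / q : ℕ) + (N % q : ℕ) := by exact_mod_cast (Nat.div_add_mod N q).symm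
  have hr : ((N % q : ℕ) : ℝ) ≤ q := by exact_mod_cast (Nat.mod_lt N hq).le
  have e : ∑ n ∈ range N, F n - N / q * ∑ n ∈ range q, F n
      = ∑ n ∈ range (N % q), F n - (N % q : ℕ) / q * ∑ n ∈ range q, F n := by
    rw [hN]
    have : (N : ℝ) / q = (N / q : ℕ) + (N % q : ℕ) / q := by
      rw [hNq]; field_simp
    rw [this]; ring
  rw [e]
  refine (abs_sub _ _).trans ?_
  have h2 : |((N % q : ℕ) : ℝ) / q * ∑ n ∈ range q, F n| ≤ q * B := by
    rw [abs_mul]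
    have : |((N % q : ℕ) : ℝ) / q| ≤ 1 := by
      rw [abs_of_nonneg (by positivity)]
      exact (div_le_one hq').2 hr
    calc _ ≤ 1 * (q * B) := by
          gcongr
          exact hsum q
      _ = _ := one_mul _
  have h3 := hsum (N % q)
  have h4 : ((N % q : ℕ) : ℝ) * B ≤ q * B := by gcongr
  linarith

/-- The Selberg density `ρ(p) / (p - ρ(p))`, where `ρ(p)` is the number of excluded residue
classes modulo `p`. -/
noncomputable def dens (Ω : ℕ → Finset ℕ) (p : ℕ) : ℝ := (Ω p).card / (p - (Ω p).card)

/-- The function on `ℤ/pℤ` (periodically extended) that is `-1` on the excluded classes and has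
mean zero. -/
noncomputable def loc (Ω : ℕ → Finset ℕ) (p n : ℕ) : ℝ := if n % p ∈ Ω p then -1 else dens Ω p

/-- The orthogonal system used by the sieve: products of the local functions `loc`. -/
noncomputable def glob (Ω : ℕ → Finset ℕ) (d n : ℕ) : ℝ := ∏ p ∈ d.primeFactors, loc Ω p n

/-- The sum over squarefree `d ≤ R` of the multiplicative extension of `h`. -/
noncomputable def selSum (h : ℕ → ℝ) (R : ℕ) : ℝ :=
  ∑ d ∈ (Icc 1 R).filter Squarefree, ∏ p ∈ d.primeFactors, h p

/-- Admissible systems of excluded classes for a sieve of dimension at most two. -/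
structure Adm (Ω : ℕ → Finset ℕ) : Prop where
  sub : ∀ p, p.Prime → Ω p ⊆ range p
  card_le : ∀ p, p.Prime → (Ω p).card ≤ 2
  card_lt : ∀ p, p.Prime → (Ω p).card < p

variable {Ω : ℕ → Finset ℕ}

lemma dens_nonneg (h : Adm Ω) {p : ℕ} (hp : p.Prime) : 0 ≤ dens Ω p := by
  have : ((Ω p).card : ℝ) < p := by exact_mod_cast h.card_lt p hp
  exact div_nonneg (by positivity) (by linarith)

lemma dens_le (h : Adm Ω) {p : ℕ} (hp : p.Prime) : dens Ω p ≤ p := by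
  have h1 : ((Ω p).card : ℝ) + 1 ≤ p := by exact_mod_cast h.card_lt p hp
  have h2 : ((Ω p).card : ℝ) ≤ 2 := by exact_mod_cast h.card_le p hp
  have h3 : (2 : ℝ) ≤ p := by exact_mod_cast hp.two_le
  rw [dens, div_le_iff₀ (by linarith)]
  nlinarith

lemma abs_loc_le (h : Adm Ω) {p : ℕ} (hp : p.Prime) (n : ℕ) : |loc Ω p n| ≤ p := by
  have h3 : (2 : ℝ) ≤ p := by exact_mod_cast hp.two_le
  unfold loc
  split_ifs
  · rw [abs_neg, abs_one]; linarith
  · rw [abs_of_nonneg (dens_nonneg h hp)]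
    exact dens_le h hp

lemma loc_mod (p n : ℕ) : loc Ω p (n % p) = loc Ω p n := by simp [loc]

lemma sum_ite_loc (h : Adm Ω) {p : ℕ} (hp : p.Prime) (a b : ℝ) :
    ∑ n ∈ range p, (if n % p ∈ Ω p then a else b) =
      (Ω p).card * a + (p - (Ω p).card) * b := by
  have e : ∑ n ∈ range p, (if n % p ∈ Ω p then a else b) =
      ∑ n ∈ range p, (if n ∈ Ω p then a else b) :=
    sum_congr rfl fun n hn => by rw [Nat.mod_eq_of_lt (mem_range.1 hn)]
  rw [e, sum_ite, filter_mem_eq_inter, inter_eq_right.2 (h.sub p hp), sum_const, sum_const,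
    filter_notMem_eq_sdiff, card_sdiff_of_subset (h.sub p hp), card_range, nsmul_eq_mul,
    nsmul_eq_mul, Nat.cast_sub (h.card_lt p hp).le]

lemma sum_loc (h : Adm Ω) {p : ℕ} (hp : p.Prime) : ∑ n ∈ range p, loc Ω p n = 0 := by
  have h1 : ((Ω p).card : ℝ) < p := by exact_mod_cast h.card_lt p hp
  simp only [loc]
  rw [sum_ite_loc h hp, dens]
  have : (p : ℝ) - (Ω p).card ≠ 0 := sub_ne_zero.2 h1.ne'
  field_simp
  ring

lemma sum_loc_sq (h : Adm Ω) {p : ℕ} (hp : p.Prime) :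
    ∑ n ∈ range p, loc Ω p n * loc Ω p n = p * dens Ω p := by
  have h1 : ((Ω p).card : ℝ) < p := by exact_mod_cast h.card_lt p hp
  have e : ∀ n, loc Ω p n * loc Ω p n =
      if n % p ∈ Ω p then 1 else dens Ω p * dens Ω p := fun n => by
    unfold loc; split_ifs <;> ring
  simp only [e]
  rw [sum_ite_loc h hp, dens]
  have : (p : ℝ) - (Ω p).card ≠ 0 := sub_ne_zero.2 h1.ne'
  field_simp
  ring

lemma abs_glob_le (h : Adm Ω) {d : ℕ} (hd : d ≠ 0) (n : ℕ) : |glob Ω d n| ≤ d := by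
  unfold glob
  rw [abs_prod]
  calc _ ≤ ∏ p ∈ d.primeFactors, (p : ℝ) :=
        prod_le_prod (fun _ _ => abs_nonneg _)
          fun p hp => abs_loc_le h (Nat.prime_of_mem_primeFactors hp) n
    _ = ((∏ p ∈ d.primeFactors, p : ℕ) : ℝ) := by push_cast; rfl
    _ ≤ d := by exact_mod_cast Nat.le_of_dvd (Nat.pos_of_ne_zero hd) (Nat.prod_primeFactors_dvd d)

/-- Approximate orthogonality of the functions `glob Ω d` on an interval. -/
lemma sum_glob_mul_glob (h : Adm Ω) {d e : ℕ} (hd : Squarefree d) (he : Squarefree e) (N : ℕ) :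
    ∑ n ∈ range N, glob Ω d n * glob Ω e n ≤
      (if d = e then N * ∏ p ∈ d.primeFactors, dens Ω p else 0) + 2 * (d * e) * (d * e) := by
  classical
  set s := d.primeFactors with hs
  set t := e.primeFactors with ht
  have hpr : ∀ p ∈ s ∪ t, p.Prime := fun p hp => by
    rcases mem_union.1 hp with hp | hp <;> exact Nat.prime_of_mem_primeFactors hp
  let f : ℕ → ℕ → ℝ := fun p n =>
    (if p ∈ s then loc Ω p n else 1) * (if p ∈ t then loc Ω p n else 1)
  have hf : ∀ p n, f p (n % p) = f p n := fun p n => by simp only [f, loc_mod]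
  have hFe : ∀ n, glob Ω d n * glob Ω e n = ∏ p ∈ s ∪ t, f p n := fun n => by
    simp only [f]
    rw [prod_mul_distrib, prod_ite_mem, prod_ite_mem, inter_eq_right.2 subset_union_left,
      inter_eq_right.2 subset_union_right]
    rfl
  set q := ∏ p ∈ s ∪ t, p with hq
  have hq0 : 0 < q := prod_pos fun p hp => (hpr p hp).pos
  have hqle : (q : ℝ) ≤ d * e := by
    have h1 : q ∣ d * e := by
      refine prod_primes_dvd _ (fun p hp => (hpr p hp).prime) fun p hp => ?_
      rcases mem_union.1 hp with hp | hp
      · exact (Nat.dvd_of_mem_primeFactors hp).mul_right _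
      · exact (Nat.dvd_of_mem_primeFactors hp).mul_left _
    exact_mod_cast Nat.le_of_dvd (Nat.pos_of_ne_zero (mul_ne_zero hd.ne_zero he.ne_zero)) h1
  have key := abs_sum_range_periodic (fun n => glob Ω d n * glob Ω e n) hq0 (d * e)
    (fun n => by simp only [hFe]; exact prod_mod_period _ f hf n)
    (fun n => by
      rw [abs_mul]
      exact mul_le_mul (abs_glob_le h hd.ne_zero n) (abs_glob_le h he.ne_zero n)
        (abs_nonneg _) (by positivity)) N
  have hsum : ∑ n ∈ range q, glob Ω d n * glob Ω e n =
      ∏ p ∈ s ∪ t, ∑ n ∈ range p, f p n := by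
    simp only [hFe]
    exact sum_range_prod _ hpr f hf
  have hmain : (N : ℝ) / q * ∑ n ∈ range q, glob Ω d n * glob Ω e n =
      if d = e then N * ∏ p ∈ d.primeFactors, dens Ω p else 0 := by
    rw [hsum]
    split_ifs with hde
    · have hst : t = s := by rw [ht, ← hde]
      have : ∏ p ∈ s ∪ t, ∑ n ∈ range p, f p n = q * ∏ p ∈ s, dens Ω p := by
        rw [hq, hst, union_self]
        push_cast
        rw [← prod_mul_distrib]
        refine prod_congr rfl fun p hp => ?_
        rw [← sum_loc_sq h (Nat.prime_of_mem_primeFactors hp)]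
        refine sum_congr rfl fun n _ => ?_
        simp [f, hst, hp]
      rw [this]
      have : (q : ℝ) ≠ 0 := by exact_mod_cast hq0.ne'
      field_simp
      rfl
    · have hst : s ≠ t := fun hst => hde (by
        rw [← Nat.prod_primeFactors_of_squarefree hd, ← Nat.prod_primeFactors_of_squarefree he,
          ← hs, ← ht, hst])
      obtain ⟨p, hp⟩ : ∃ p, ¬ (p ∈ s ↔ p ∈ t) := by
        by_contra! hcon
        exact hst (Finset.ext hcon)
      have hz : ∑ n ∈ range p, f p n = 0 ∧ p ∈ s ∪ t := by
        by_cases h1 : p ∈ s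
        · have h2 : p ∉ t := fun h2 => hp (by simp [h1, h2])
          have hm := mem_union_left t h1
          refine ⟨?_, hm⟩
          simp only [f, h1, h2, if_true, if_false, mul_one]
          exact sum_loc h (hpr p hm)
        · have h2 : p ∈ t := by by_contra h2; exact hp (by simp [h1, h2])
          have hm := mem_union_right s h2
          refine ⟨?_, hm⟩
          simp only [f, h1, h2, if_true, if_false, one_mul]
          exact sum_loc h (hpr p hm)
      rw [prod_eq_zero hz.2 hz.1, mul_zero]
  rw [hmain] at key
  have k2 := (abs_le.1 key).2
  have : 2 * (q : ℝ) * (d * e) ≤ 2 * (d * e) * (d * e) := by gcongr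
  linarith

/-- Selberg's upper bound sieve: test the set against `∑ glob Ω d`, which is constant, equal to
`selSum`, on the sifted set. -/
theorem sieve (h : Adm Ω) (S : Finset ℕ) (N R : ℕ) (hS : S ⊆ range N)
    (hav : ∀ n ∈ S, ∀ p, p.Prime → p ≤ R → n % p ∉ Ω p) :
    (S.card : ℝ) * selSum (dens Ω) R ^ 2 ≤ N * selSum (dens Ω) R + 2 * (R : ℝ) ^ 6 := by
  set D := (Icc 1 R).filter Squarefree with hD
  have hconst : ∀ n ∈ S, ∑ d ∈ D, glob Ω d n = selSum (dens Ω) R := fun n hn => by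
    refine sum_congr rfl fun d hd => prod_congr rfl fun p hp => ?_
    have hd' := mem_filter.1 hd
    have : p ≤ R := (Nat.le_of_mem_primeFactors hp).trans (mem_Icc.1 hd'.1).2
    simp [loc, hav n hn p (Nat.prime_of_mem_primeFactors hp) this]
  have h1 : (S.card : ℝ) * selSum (dens Ω) R ^ 2 ≤ ∑ n ∈ range N, (∑ d ∈ D, glob Ω d n) ^ 2 :=
    calc _ = ∑ n ∈ S, (∑ d ∈ D, glob Ω d n) ^ 2 := by
          rw [sum_congr rfl fun n hn => by rw [hconst n hn], sum_const, nsmul_eq_mul]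
      _ ≤ _ := sum_le_sum_of_subset_of_nonneg hS fun _ _ _ => sq_nonneg _
  refine h1.trans ?_
  have h2 : ∑ n ∈ range N, (∑ d ∈ D, glob Ω d n) ^ 2 =
      ∑ d ∈ D, ∑ e ∈ D, ∑ n ∈ range N, glob Ω d n * glob Ω e n := by
    simp only [sq, sum_mul_sum]
    rw [sum_comm]
    exact sum_congr rfl fun d _ => sum_comm
  rw [h2]
  have hR : ∀ d ∈ D, (d : ℝ) ≤ R := fun d hd => by
    exact_mod_cast (mem_Icc.1 (mem_filter.1 hd).1).2
  have hcard : (D.card : ℝ) ≤ R := by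
    have : D.card ≤ (Icc 1 R).card := card_le_card (filter_subset _ _)
    simp only [Nat.card_Icc, Nat.add_sub_cancel] at this
    exact_mod_cast this
  have h3 : ∀ d ∈ D, ∀ e ∈ D, ∑ n ∈ range N, glob Ω d n * glob Ω e n ≤
      (if d = e then N * ∏ p ∈ d.primeFactors, dens Ω p else 0) + 2 * (R : ℝ) ^ 4 := by
    intro d hd e he
    refine (sum_glob_mul_glob h (mem_filter.1 hd).2 (mem_filter.1 he).2 N).trans ?_
    have : (d : ℝ) * e ≤ R * R := mul_le_mul (hR d hd) (hR e he) (by positivity) (by positivity)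
    have : 2 * ((d : ℝ) * e) * (d * e) ≤ 2 * (R * R) * (R * R) := by gcongr
    nlinarith
  calc _ ≤ ∑ d ∈ D, ∑ e ∈ D,
        ((if d = e then N * ∏ p ∈ d.primeFactors, dens Ω p else 0) + 2 * (R : ℝ) ^ 4) :=
        sum_le_sum fun d hd => sum_le_sum fun e he => h3 d hd e he
    _ = N * selSum (dens Ω) R + D.card * (D.card * (2 * (R : ℝ) ^ 4)) := by
        simp only [sum_add_distrib, sum_const, nsmul_eq_mul, selSum, mul_sum]
        congr 1
        refine sum_congr rfl fun d hd => ?_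
        rw [sum_ite_eq, if_pos hd]
    _ ≤ N * selSum (dens Ω) R + R * (R * (2 * (R : ℝ) ^ 4)) := by gcongr
    _ = _ := by ring

/-! ### Multiplicative sums over squarefree integers -/

lemma selSum_mono {g h : ℕ → ℝ} (hg : ∀ p, p.Prime → 0 ≤ g p)
    (hgh : ∀ p, p.Prime → g p ≤ h p) {x y : ℕ} (hxy : x ≤ y) : selSum g x ≤ selSum h y := by
  unfold selSum
  refine (sum_le_sum fun d _ => prod_le_prod (fun p hp => hg p (Nat.prime_of_mem_primeFactors hp))
    fun p hp => hgh p (Nat.prime_of_mem_primeFactors hp)).trans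
    (sum_le_sum_of_subset_of_nonneg (filter_subset_filter _ (Icc_subset_Icc_right hxy))
      fun d _ _ => prod_nonneg fun p hp => ?_)
  have := Nat.prime_of_mem_primeFactors hp
  exact (hg p this).trans (hgh p this)

lemma selSum_nonneg {h : ℕ → ℝ} (hh : ∀ p, p.Prime → 0 ≤ h p) (x : ℕ) : 0 ≤ selSum h x :=
  sum_nonneg fun _ _ => prod_nonneg fun p hp => hh p (Nat.prime_of_mem_primeFactors hp)

/-- Splitting off the prime `p` from the multiplicative sum. -/
lemma selSum_split (h : ℕ → ℝ) {p : ℕ} (hp : p.Prime) (R : ℕ) :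
    selSum h R = selSum (Function.update h p 0) R +
      h p * selSum (Function.update h p 0) (R / p) := by
  set h0 := Function.update h p 0 with hh0
  have hz : ∀ d : ℕ, d ≠ 0 → p ∣ d → ∏ q ∈ d.primeFactors, h0 q = 0 := fun d hd hpd =>
    prod_eq_zero (Nat.mem_primeFactors.2 ⟨hp, hpd, hd⟩) (by simp [hh0])
  have he : ∀ d : ℕ, ¬ p ∣ d → ∏ q ∈ d.primeFactors, h0 q = ∏ q ∈ d.primeFactors, h q :=
    fun d hpd => prod_congr rfl fun q hq => by
      have : q ≠ p := by rintro rfl; exact hpd (Nat.dvd_of_mem_primeFactors hq)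
      simp [hh0, this]
  have hsel : ∀ x, selSum h0 x =
      ∑ d ∈ ((Icc 1 x).filter Squarefree).filter (fun d => ¬ p ∣ d),
        ∏ q ∈ d.primeFactors, h q := fun x => by
    rw [selSum, ← sum_filter_add_sum_filter_not _ (fun d => p ∣ d), sum_eq_zero, zero_add]
    · exact sum_congr rfl fun d hd => he d (mem_filter.1 hd).2
    · intro d hd
      simp only [mem_filter, mem_Icc] at hd
      exact hz d (by lia) hd.2
  rw [hsel, hsel, selSum, ← sum_filter_add_sum_filter_not _ (fun d => p ∣ d), add_comm]
  congr 1
  rw [mul_sum]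
  symm
  refine sum_bij (fun d _ => p * d) ?_ ?_ ?_ ?_
  · intro d hd
    simp only [mem_filter, mem_Icc] at hd ⊢
    refine ⟨⟨⟨Nat.mul_pos hp.pos (by lia), ?_⟩, ?_⟩, dvd_mul_right _ _⟩
    · rw [mul_comm]; exact (Nat.le_div_iff_mul_le hp.pos).1 hd.1.1.2
    · exact (Nat.squarefree_mul ((Nat.Prime.coprime_iff_not_dvd hp).2 hd.2)).2
        ⟨hp.prime.squarefree, hd.1.2⟩
  · intro a _ b _ hab
    exact Nat.eq_of_mul_eq_mul_left hp.pos hab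
  · intro d hd
    simp only [mem_filter, mem_Icc] at hd
    obtain ⟨e, rfl⟩ := hd.2
    have hcop := Nat.coprime_of_squarefree_mul hd.1.2
    refine ⟨e, ?_, rfl⟩
    simp only [mem_filter, mem_Icc]
    refine ⟨⟨⟨Nat.pos_of_mul_pos_left (by lia : 0 < p * e), ?_⟩, ?_⟩,
      (Nat.Prime.coprime_iff_not_dvd hp).1 hcop⟩
    · rw [Nat.le_div_iff_mul_le hp.pos, mul_comm]; exact hd.1.1.2
    · exact hd.1.2.of_mul_right
  · intro d hd
    simp only [mem_filter, mem_Icc] at hd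
    have hcop := (Nat.Prime.coprime_iff_not_dvd hp).2 hd.2
    rw [hcop.primeFactors_mul, hp.primeFactors, prod_union, prod_singleton]
    rw [disjoint_singleton_left]
    exact fun h => hd.2 (Nat.dvd_of_mem_primeFactors h)

lemma update_zero_nonneg {h : ℕ → ℝ} (hh : ∀ p, p.Prime → 0 ≤ h p) (p : ℕ) :
    ∀ q, q.Prime → 0 ≤ Function.update h p 0 q := fun q hq => by
  by_cases hqp : q = p
  · simp [hqp]
  · simp [hqp, hh q hq]

/-- Comparison of the sums for `H` and `h`, where `H` may exceed `h` at the primes of a finite set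
`P`. If `1 + H p ≤ r p (1 + h p)` for `p ∈ P`, replacing `H` by `h` costs at most `∏_{p ∈ P} r p`. -/
lemma selSum_removal (P : Finset ℕ) (h r : ℕ → ℝ) (R : ℕ) (hP : ∀ p ∈ P, p.Prime)
    (hr : ∀ p ∈ P, 1 ≤ r p) (hh : ∀ p, p.Prime → 0 ≤ h p) :
    ∀ H : ℕ → ℝ, (∀ p, p.Prime → 0 ≤ H p) → (∀ p ∈ P, 1 + H p ≤ r p * (1 + h p)) →
      (∀ p, p.Prime → p ∉ P → H p ≤ h p) →
      selSum H R ≤ (∏ p ∈ P, r p) * selSum h R := by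
  induction P using Finset.induction_on with
  | empty =>
    intro H hH _ hle
    rw [prod_empty, one_mul]
    exact selSum_mono hH (fun p hp => hle p hp (notMem_empty p)) le_rfl
  | insert p P hpP ih =>
    intro H hH hHr hle
    have hpp := hP p (mem_insert_self _ _)
    have hrp := hr p (mem_insert_self _ _)
    have hHrp := hHr p (mem_insert_self _ _)
    set H' := Function.update H p (h p) with hH'
    have hH'0 : ∀ q, q.Prime → 0 ≤ H' q := fun q hq => by
      by_cases hqp : q = p
      · rw [hqp]; simp [hH', hh p hpp]
      · simp [hH', hqp, hH q hq]
    have key := ih (fun q hq => hP q (mem_insert_of_mem hq))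
      (fun q hq => hr q (mem_insert_of_mem hq)) H' hH'0
      (fun q hq => by
        have : q ≠ p := by rintro rfl; exact hpP hq
        simp only [hH', Function.update_of_ne this]
        exact hHr q (mem_insert_of_mem hq))
      (fun q hq hqP => by
        by_cases hqp : q = p
        · rw [hqp]; simp [hH']
        · simp only [hH', Function.update_of_ne hqp]
          exact hle q hq (by simp [hqp, hqP]))
    have h1 : selSum H R ≤ r p * selSum H' R := by
      rw [selSum_split H hpp, selSum_split H' hpp]
      have e1 : Function.update H' p 0 = Function.update H p 0 := by simp [hH']
      have e2 : H' p = h p := by simp [hH']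
      rw [e1, e2]
      have hA := selSum_mono (update_zero_nonneg hH p)
        (fun q _ => le_refl (Function.update H p 0 q)) (Nat.div_le_self R p)
      have hB := selSum_nonneg (update_zero_nonneg hH p) (R / p)
      nlinarith [mul_le_mul_of_nonneg_left hA (sub_nonneg.2 hrp),
        mul_le_mul_of_nonneg_right hHrp hB]
    calc _ ≤ r p * selSum H' R := h1
      _ ≤ r p * ((∏ p ∈ P, r p) * selSum h R) := by gcongr
      _ = _ := by rw [prod_insert hpP, mul_assoc]

/-- The product of two sums up to `x` and `y` is at most the sum up to `x y` whose densities are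
given by the Euler factors `1 + (f + g + f g) = (1 + f)(1 + g)`. -/
lemma selSum_mul_le (P : Finset ℕ) (f g : ℕ → ℝ) (hP : ∀ p ∈ P, p.Prime)
    (hf : ∀ p, p.Prime → 0 ≤ f p) (hg : ∀ p, p.Prime → 0 ≤ g p) : ∀ x y : ℕ,
    selSum (fun p => if p ∈ P then f p else 0) x * selSum (fun p => if p ∈ P then g p else 0) y ≤
      selSum (fun p => if p ∈ P then f p + g p + f p * g p else 0) (x * y) := by
  induction P using Finset.induction_on with
  | empty =>
    intro x y
    have hz : ∀ x : ℕ, selSum (fun _ => 0) x = if 1 ≤ x then 1 else 0 := by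
      intro x
      rw [selSum]
      split_ifs with hx
      · rw [sum_eq_single_of_mem 1 (by simp [hx])]
        · simp
        · intro d hd hd1
          obtain ⟨p, hp, hpd⟩ := Nat.exists_prime_and_dvd hd1
          simp only [mem_filter, mem_Icc] at hd
          exact prod_eq_zero (Nat.mem_primeFactors.2 ⟨hp, hpd, by lia⟩) rfl
      · rw [Icc_eq_empty hx]; simp
    simp only [notMem_empty, if_false, hz]
    split_ifs with h1 h2 h3 <;> norm_num
    exact absurd (Nat.mul_pos h1 h2) (by lia)
  | insert p P hpP ih =>
    intro x y
    have ih := ih (fun q hq => hP q (mem_insert_of_mem hq))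
    have hpp := hP p (mem_insert_self _ _)
    have hupd : ∀ f : ℕ → ℝ, Function.update (fun q => if q ∈ insert p P then f q else 0) p 0 =
        fun q => if q ∈ P then f q else 0 := fun f => by
      funext q
      by_cases hqp : q = p
      · rw [hqp]; simp [hpP]
      · simp [hqp]
    rw [selSum_split _ hpp, selSum_split (fun q => if q ∈ insert p P then g q else 0) hpp,
      selSum_split (fun q => if q ∈ insert p P then f q + g q + f q * g q else 0) hpp]
    rw [hupd f, hupd g, hupd (fun q => f q + g q + f q * g q)]
    simp only [mem_insert_self, if_true]
    set T := selSum (fun q => if q ∈ P then f q + g q + f q * g q else 0) with hT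
    have hTm : ∀ {x y : ℕ}, x ≤ y → T x ≤ T y := fun hxy => by
      have h0 : ∀ q : ℕ, q.Prime → 0 ≤ if q ∈ P then f q + g q + f q * g q else 0 := by
        intro q hq
        have := hf q hq; have := hg q hq
        split_ifs
        · positivity
        · exact le_rfl
      exact selSum_mono h0 (fun q _ => le_rfl) hxy
    have i1 := ih x y
    have i2 := (ih (x / p) y).trans (hTm (y := x * y / p) (by
      rw [Nat.le_div_iff_mul_le hpp.pos]
      calc x / p * y * p = x / p * p * y := by ring
        _ ≤ x * y := Nat.mul_le_mul_right _ (Nat.div_mul_le_self x p)))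
    have i3 := (ih x (y / p)).trans (hTm (y := x * y / p) (by
      rw [Nat.le_div_iff_mul_le hpp.pos, mul_assoc]
      exact Nat.mul_le_mul_left _ (Nat.div_mul_le_self y p)))
    have i4 := (ih (x / p) (y / p)).trans (hTm (y := x * y / p) (by
      rw [Nat.le_div_iff_mul_le hpp.pos, mul_assoc]
      exact Nat.mul_le_mul (Nat.div_le_self x p) (Nat.div_mul_le_self y p)))
    have hfp := hf p hpp
    have hgp := hg p hpp
    nlinarith [mul_le_mul_of_nonneg_left i2 hfp, mul_le_mul_of_nonneg_left i3 hgp,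
      mul_le_mul_of_nonneg_left i4 (mul_nonneg hfp hgp)]

/-- `n ↦ 1 / n` as a monoid homomorphism. -/
noncomputable def invHom : ℕ →* ℝ where
  toFun n := (n : ℝ)⁻¹
  map_one' := by simp
  map_mul' a b := by push_cast; rw [mul_inv]

/-- The reciprocals of integers with radical `d` sum to at most `1 / φ(d)`. -/
lemma sum_radical_le (d R : ℕ) (hd : Squarefree d) :
    ∑ n ∈ (Icc 1 R).filter (fun n => ∏ p ∈ n.primeFactors, p = d), (n : ℝ)⁻¹ ≤
      ∏ p ∈ d.primeFactors, 1 / ((p : ℝ) - 1) := by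
  set T := (Icc 1 R).filter (fun n => ∏ p ∈ n.primeFactors, p = d) with hT
  have hmem : ∀ n ∈ T, n ≠ 0 ∧ d ∣ n ∧ n.primeFactors = d.primeFactors := fun n hn => by
    simp only [hT, mem_filter, mem_Icc] at hn
    refine ⟨by lia, hn.2 ▸ Nat.prod_primeFactors_dvd n, ?_⟩
    rw [← hn.2, Nat.primeFactors_prod fun p hp => Nat.prime_of_mem_primeFactors hp]
  have hd0 : (0 : ℝ) < d := by exact_mod_cast Nat.pos_of_ne_zero hd.ne_zero
  have hs := (EulerProduct.summable_and_hasSum_factoredNumbers_prod_filter_prime_geometric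
    (f := invHom) (fun {p} hp => by
      simp only [invHom, MonoidHom.coe_mk, OneHom.coe_mk, norm_inv, RCLike.norm_natCast]
      exact inv_lt_one_of_one_lt₀ (by exact_mod_cast hp.one_lt)) d.primeFactors).2
  set U := T.image (fun n => n / d) with hU
  have hUf : ∀ m ∈ U, m ∈ Nat.factoredNumbers d.primeFactors := fun m hm => by
    obtain ⟨n, hn, rfl⟩ := mem_image.1 hm
    obtain ⟨h0, h1, h2⟩ := hmem n hn
    rw [Nat.mem_factoredNumbers_iff_primeFactors_subset, ← h2]
    obtain ⟨e, rfl⟩ := h1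
    rw [Nat.mul_div_cancel_left _ (Nat.pos_of_ne_zero hd.ne_zero)]
    exact ⟨right_ne_zero_of_mul h0, Nat.primeFactors_mono (dvd_mul_left e d) h0⟩
  have h1 : ∑ m ∈ U, (m : ℝ)⁻¹ ≤ ∏ p ∈ d.primeFactors with p.Prime, (1 - invHom p)⁻¹ := by
    rw [← sum_subtype_of_mem (fun m : ℕ => (m : ℝ)⁻¹) hUf]
    exact sum_le_hasSum _ (fun m _ => by simp) hs
  have h2 : ∑ n ∈ T, (n : ℝ)⁻¹ = (d : ℝ)⁻¹ * ∑ m ∈ U, (m : ℝ)⁻¹ := by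
    rw [hU, sum_image, mul_sum]
    · refine sum_congr rfl fun n hn => ?_
      obtain ⟨e, rfl⟩ := (hmem n hn).2.1
      rw [Nat.mul_div_cancel_left _ (Nat.pos_of_ne_zero hd.ne_zero)]
      push_cast
      rw [mul_inv]
    · intro a ha b hb hab
      exact (Nat.div_left_inj (hmem a ha).2.1 (hmem b hb).2.1).1 hab
  rw [h2]
  have h3 : (∏ p ∈ d.primeFactors, 1 / ((p : ℝ) - 1)) =
      (d : ℝ)⁻¹ * ∏ p ∈ d.primeFactors with p.Prime, (1 - invHom p)⁻¹ := by
    rw [filter_true_of_mem fun p hp => Nat.prime_of_mem_primeFactors hp]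
    conv_rhs => rw [← Nat.prod_primeFactors_of_squarefree hd]
    push_cast
    rw [← prod_inv_distrib, Nat.primeFactors_prod fun p hp => Nat.prime_of_mem_primeFactors hp,
      ← prod_mul_distrib]
    refine prod_congr rfl fun p hp => ?_
    have : (1 : ℝ) < p := by exact_mod_cast (Nat.prime_of_mem_primeFactors hp).one_lt
    have h' : (p : ℝ) - 1 ≠ 0 := by linarith
    simp only [invHom, MonoidHom.coe_mk, OneHom.coe_mk]
    rw [← mul_inv, mul_sub, mul_inv_cancel₀ (by linarith), mul_one, one_div]
  rw [h3]
  gcongr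

/-- Grouping the integers `n ≤ R` by their radical `d` compares `∑_{n ≤ R} 1 / n` with
`∑_{d ≤ R} 1 / φ(d)` over squarefree `d`. -/
lemma log_le_selSum (R : ℕ) :
    Real.log (R + 1) ≤ selSum (fun p => 1 / ((p : ℝ) - 1)) R := by
  have h1 : Real.log (R + 1) ≤ ∑ n ∈ Icc 1 R, (n : ℝ)⁻¹ := by
    have := log_add_one_le_harmonic R
    rw [harmonic_eq_sum_Icc] at this
    push_cast at this
    exact this
  refine h1.trans ?_
  rw [selSum, ← sum_fiberwise_of_maps_to (t := (Icc 1 R).filter Squarefree)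
    (g := fun n => ∏ p ∈ n.primeFactors, p)]
  · exact sum_le_sum fun d hd => sum_radical_le d R (mem_filter.1 hd).2
  · intro n hn
    simp only [mem_filter, mem_Icc] at hn ⊢
    have hpos : 0 < ∏ p ∈ n.primeFactors, p := prod_pos fun p hp =>
      (Nat.prime_of_mem_primeFactors hp).pos
    refine ⟨⟨hpos, (Nat.le_of_dvd (by lia) (Nat.prod_primeFactors_dvd n)).trans hn.2⟩, ?_⟩
    refine Finset.squarefree_prod_of_pairwise_isCoprime (fun p hp q hq hpq => ?_)
      fun p hp => (Nat.prime_of_mem_primeFactors hp).prime.squarefree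
    exact Nat.coprime_iff_isRelPrime.1 ((Nat.coprime_primes (Nat.prime_of_mem_primeFactors hp)
        (Nat.prime_of_mem_primeFactors hq)).2 hpq)

/-! ### Upper bounds for primes and prime pairs in a progression -/

/-- The residue classes excluded by the pair of forms `b k + 1`, `m (b k + 1) + 1`: none if
`p ∣ b`, the root of the first form if `p ∣ m`, both roots otherwise. For `m = 0` only the first
form is sieved. -/
noncomputable def excl (b m p : ℕ) : Finset ℕ :=
  if p ∣ b then ∅ else if p ∣ m then {(-(b : ZMod p)⁻¹).val} else
    {(-(b : ZMod p)⁻¹).val, ((-(m : ZMod p)⁻¹ - 1) * (b : ZMod p)⁻¹).val}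

lemma excl_card {b m p : ℕ} (hp : p.Prime) :
    (excl b m p).card = if p ∣ b then 0 else if p ∣ m then 1 else 2 := by
  have := Fact.mk hp
  unfold excl
  split_ifs with h1 h2
  · simp
  · simp
  · have hb : (b : ZMod p) ≠ 0 := by rwa [Ne, ZMod.natCast_eq_zero_iff]
    have hm : (m : ZMod p) ≠ 0 := by rwa [Ne, ZMod.natCast_eq_zero_iff]
    refine card_pair fun h => ?_
    have h := ZMod.val_injective p h
    have h3 : (-(m : ZMod p)⁻¹) * (b : ZMod p)⁻¹ = 0 := by linear_combination -h
    simp [hb, hm] at h3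

lemma excl_adm {b m : ℕ} (h2 : 2 ∣ b * m) : Adm (excl b m) where
  sub p hp := by
    have := Fact.mk hp
    intro x hx
    rw [mem_range]
    unfold excl at hx
    split_ifs at hx with h1 h2
    · simp at hx
    · rw [mem_singleton.1 hx]; exact ZMod.val_lt _
    · rcases mem_insert.1 hx with h | h
      · rw [h]; exact ZMod.val_lt _
      · rw [mem_singleton.1 h]; exact ZMod.val_lt _
  card_le p hp := by
    rw [excl_card hp]; split_ifs <;> simp
  card_lt p hp := by
    rw [excl_card hp]
    have := hp.two_le
    split_ifs with h1 h3
    · lia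
    · lia
    · rcases eq_or_lt_of_le this with h | h
      · subst h
        rcases (Nat.prime_two.dvd_mul).1 h2 with h | h
        · exact absurd h h1
        · exact absurd h h3
      · exact h

lemma dvd_of_mem_excl {b m p k : ℕ} (hp : p.Prime) (h : k % p ∈ excl b m p) :
    p ∣ b * k + 1 ∨ (¬ p ∣ m ∧ p ∣ m * (b * k + 1) + 1) := by
  have := Fact.mk hp
  unfold excl at h
  have key : ∀ z : ZMod p, k % p = z.val → (k : ZMod p) = z := fun z hz => by
    rw [← ZMod.natCast_mod, hz, ZMod.natCast_zmod_val]
  have root1 : ¬ p ∣ b → k % p = (-(b : ZMod p)⁻¹).val → p ∣ b * k + 1 := fun hb hk => by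
    have hb : (b : ZMod p) ≠ 0 := by rwa [Ne, ZMod.natCast_eq_zero_iff]
    rw [← ZMod.natCast_eq_zero_iff]
    push_cast
    rw [key _ hk]
    field_simp
    ring
  split_ifs at h with h1 h2
  · simp at h
  · exact Or.inl (root1 h1 (mem_singleton.1 h))
  · rcases mem_insert.1 h with h | h
    · exact Or.inl (root1 h1 h)
    · right
      refine ⟨h2, ?_⟩
      have hb : (b : ZMod p) ≠ 0 := by rwa [Ne, ZMod.natCast_eq_zero_iff]
      have hm : (m : ZMod p) ≠ 0 := by rwa [Ne, ZMod.natCast_eq_zero_iff]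
      rw [← ZMod.natCast_eq_zero_iff]
      push_cast
      rw [key _ (mem_singleton.1 h)]
      field_simp
      ring

lemma one_le_selSum {h : ℕ → ℝ} (hh : ∀ p, p.Prime → 0 ≤ h p) {R : ℕ} (hR : 1 ≤ R) :
    1 ≤ selSum h R := by
  have := single_le_sum (s := (Icc 1 R).filter Squarefree)
    (f := fun d => ∏ p ∈ d.primeFactors, h p)
    (fun d _ => prod_nonneg fun p hp => hh p (Nat.prime_of_mem_primeFactors hp))
    (a := 1) (by simp [hR])
  rw [selSum]
  simpa using this

/-- The sieve applied to `b k + 1` and (if `m ≠ 0`) `m (b k + 1) + 1`, with a lower bound `l` for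
the Selberg sum. -/
lemma count_le {b m : ℕ} (hb : 1 ≤ b) (h2 : 2 ∣ b * m) (M : ℕ) {R : ℕ} (hR : 1 ≤ R) {l : ℝ}
    (hl : 0 < l) (hlL : l ≤ selSum (dens (excl b m)) R) :
    (((range M).filter fun k => (b * k + 1).Prime ∧ (m ≠ 0 → (m * (b * k + 1) + 1).Prime)).card
      : ℝ) ≤ M / l + 2 * (R : ℝ) ^ 6 + R := by
  set T := (range M).filter fun k => (b * k + 1).Prime ∧ (m ≠ 0 → (m * (b * k + 1) + 1).Prime)
    with hT
  set S := T.filter fun k => R < b * k + 1 with hS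
  have hadm := excl_adm h2
  set L := selSum (dens (excl b m)) R with hL
  have hL1 : 1 ≤ L := one_le_selSum (fun p hp => dens_nonneg hadm hp) hR
  have hs := sieve hadm S M R ((filter_subset _ _).trans (filter_subset _ _)) (by
    intro k hk p hp hpR hmem
    simp only [hS, hT, mem_filter, mem_range] at hk
    rcases dvd_of_mem_excl hp hmem with h | ⟨hm, h⟩
    · have := (Nat.prime_dvd_prime_iff_eq hp hk.1.2.1).1 h
      lia
    · have hm0 : m ≠ 0 := by rintro rfl; simp at hm
      have := (Nat.prime_dvd_prime_iff_eq hp (hk.1.2.2 hm0)).1 h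
      have h3 : b * k + 1 ≤ m * (b * k + 1) := Nat.le_mul_of_pos_left _ (Nat.pos_of_ne_zero hm0)
      lia)
  rw [← hL] at hs
  have hSc : (S.card : ℝ) ≤ M / l + 2 * (R : ℝ) ^ 6 := by
    have h1 : (S.card : ℝ) ≤ M / L + 2 * (R : ℝ) ^ 6 / L ^ 2 := by
      have hL0 : 0 < L := by linarith
      have : (M : ℝ) / L + 2 * (R : ℝ) ^ 6 / L ^ 2 = (M * L + 2 * (R : ℝ) ^ 6) / L ^ 2 := by
        field_simp
      rw [this, le_div_iff₀ (by positivity)]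
      exact hs
    have h3 : (M : ℝ) / L ≤ M / l := by gcongr
    have h4 : 2 * (R : ℝ) ^ 6 / L ^ 2 ≤ 2 * (R : ℝ) ^ 6 :=
      div_le_self (by positivity) (one_le_pow₀ hL1)
    linarith
  have hrest : ((T.filter fun k => ¬ R < b * k + 1).card : ℝ) ≤ R := by
    have : (T.filter fun k => ¬ R < b * k + 1) ⊆ range R := fun k hk => by
      simp only [mem_filter, mem_range] at hk ⊢
      have : k ≤ b * k := Nat.le_mul_of_pos_left _ hb
      lia
    have := card_le_card this
    rw [card_range] at this
    exact_mod_cast this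
  have hsplit := card_filter_add_card_filter_not (s := T) (fun k => R < b * k + 1)
  have : (T.card : ℝ) = S.card + (T.filter fun k => ¬ R < b * k + 1).card := by
    exact_mod_cast hsplit.symm
  rw [this]
  linarith

/-- Euler's product for `b / φ(b)`. -/
lemma prod_ratio {b : ℕ} (hb : b ≠ 0) :
    ∏ p ∈ b.primeFactors, ((p : ℝ) / (p - 1)) = b / b.totient := by
  have h := Nat.totient_eq_mul_prod_factors b
  have h' : (b.totient : ℝ) = b * ∏ p ∈ b.primeFactors, (1 - (p : ℝ)⁻¹) := by
    have := congrArg (fun x : ℚ => (x : ℝ)) h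
    push_cast at this
    exact this
  have hb' : (b : ℝ) ≠ 0 := by exact_mod_cast hb
  rw [h', ← div_div, div_self hb', one_div, ← prod_inv_distrib]
  refine prod_congr rfl fun p hp => ?_
  have : (1 : ℝ) < p := by exact_mod_cast (Nat.prime_of_mem_primeFactors hp).one_lt
  have h0 : (p : ℝ) - 1 ≠ 0 := by linarith
  have h1 : (p : ℝ) ≠ 0 := by linarith
  have h2 : 1 - (p : ℝ)⁻¹ ≠ 0 := by
    rw [sub_ne_zero]; exact (inv_lt_one_of_one_lt₀ this).ne'
  field_simp

lemma one_le_ratio {p : ℕ} (hp : p.Prime) : (1 : ℝ) ≤ p / (p - 1) := by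
  have : (1 : ℝ) < p := by exact_mod_cast hp.one_lt
  rw [le_div_iff₀ (by linarith)]
  linarith

lemma one_le_div_totient {b : ℕ} (hb : b ≠ 0) : (1 : ℝ) ≤ b / b.totient := by
  have h : (0 : ℝ) < b.totient := by exact_mod_cast Nat.totient_pos.2 (Nat.pos_of_ne_zero hb)
  rw [le_div_iff₀ h, one_mul]
  exact_mod_cast Nat.totient_le b

lemma dens_excl {b m p : ℕ} (hp : p.Prime) : dens (excl b m) p =
    if p ∣ b then 0 else if p ∣ m then 1 / ((p : ℝ) - 1) else 2 / ((p : ℝ) - 2) := by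
  rw [dens, excl_card hp]
  split_ifs <;> simp

lemma H1_nonneg (p : ℕ) (hp : p.Prime) : 0 ≤ 1 / ((p : ℝ) - 1) := by
  have : (1 : ℝ) < p := by exact_mod_cast hp.one_lt
  exact div_nonneg zero_le_one (by linarith)

lemma one_add_H1 {p : ℕ} (hp : p.Prime) : 1 + 1 / ((p : ℝ) - 1) = p / (p - 1) := by
  have : (1 : ℝ) < p := by exact_mod_cast hp.one_lt
  have h0 : (p : ℝ) - 1 ≠ 0 := by linarith
  field_simp
  ring

/-- One-dimensional lower bound for the Selberg sum; the primes dividing `b`, which are not sieved,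
cost the factor `b / φ(b)`. -/
lemma selSum_excl_one {b : ℕ} (hb : b ≠ 0) (R : ℕ) :
    Real.log (R + 1) ≤ (b / b.totient) * selSum (dens (excl b 0)) R := by
  refine (log_le_selSum R).trans ?_
  rw [← prod_ratio hb]
  refine selSum_removal _ _ _ _ (fun p hp => Nat.prime_of_mem_primeFactors hp)
    (fun p hp => one_le_ratio (Nat.prime_of_mem_primeFactors hp))
    (fun p hp => dens_nonneg (excl_adm (by simp)) hp) _ H1_nonneg ?_ ?_
  · intro p hp
    have hp' := Nat.prime_of_mem_primeFactors hp
    rw [dens_excl hp', if_pos (Nat.dvd_of_mem_primeFactors hp), one_add_H1 hp']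
    linarith
  · intro p hp hpb
    have : ¬ p ∣ b := fun h => hpb (Nat.mem_primeFactors.2 ⟨hp, h, hb⟩)
    rw [dens_excl hp, if_neg this, if_pos (dvd_zero p)]

/-- The square of the one-dimensional bound `log_le_selSum`, as a sum with Euler factors
`(p / (p - 1)) ^ 2`. Densities are truncated to primes `p ≤ r` to apply `selSum_mul_le`. -/
lemma log_sq_le_selSum (r : ℕ) : Real.log (r + 1) ^ 2 ≤
    selSum (fun p => ((p : ℝ) / (p - 1)) ^ 2 - 1) (r * r) := by
  set P := (range (r + 1)).filter Nat.Prime with hP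
  have hPp : ∀ p ∈ P, p.Prime := fun p hp => (mem_filter.1 hp).2
  have e : selSum (fun p => 1 / ((p : ℝ) - 1)) r =
      selSum (fun p => if p ∈ P then 1 / ((p : ℝ) - 1) else 0) r := by
    refine sum_congr rfl fun d hd => prod_congr rfl fun p hp => ?_
    refine (if_pos ?_).symm
    have := (mem_Icc.1 (mem_filter.1 hd).1).2
    have := Nat.le_of_mem_primeFactors hp
    exact mem_filter.2 ⟨mem_range.2 (by lia), Nat.prime_of_mem_primeFactors hp⟩
  have h0 : 0 ≤ Real.log ((r : ℝ) + 1) := Real.log_nonneg (by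
    have : (0 : ℝ) ≤ r := by positivity
    linarith)
  have h1 := log_le_selSum r
  calc _ = Real.log (r + 1) * Real.log (r + 1) := sq _
    _ ≤ selSum (fun p => 1 / ((p : ℝ) - 1)) r * selSum (fun p => 1 / ((p : ℝ) - 1)) r :=
        mul_le_mul h1 h1 h0 (h0.trans h1)
    _ ≤ selSum (fun p => if p ∈ P then 1 / ((p : ℝ) - 1) + 1 / ((p : ℝ) - 1) +
          1 / ((p : ℝ) - 1) * (1 / ((p : ℝ) - 1)) else 0) (r * r) := by
        rw [e]
        exact selSum_mul_le P _ _ hPp H1_nonneg H1_nonneg r r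
    _ ≤ _ := by
        have hid : ∀ p : ℕ, p.Prime → 1 / ((p : ℝ) - 1) + 1 / ((p : ℝ) - 1) +
            1 / ((p : ℝ) - 1) * (1 / ((p : ℝ) - 1)) = ((p : ℝ) / (p - 1)) ^ 2 - 1 :=
          fun p hp => by rw [← one_add_H1 hp]; ring
        have hn : ∀ p : ℕ, p.Prime → 0 ≤ ((p : ℝ) / (p - 1)) ^ 2 - 1 := fun p hp =>
          sub_nonneg.2 (one_le_pow₀ (one_le_ratio hp))
        refine selSum_mono (fun p hp => ?_) (fun p hp => ?_) le_rfl
        · split_ifs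
          · rw [hid p hp]; exact hn p hp
          · exact le_rfl
        · split_ifs
          · rw [hid p hp]
          · exact hn p hp

/-- Two-dimensional lower bound for the Selberg sum. A prime `p ∣ b` loses both excluded classes,
a prime `p ∣ m` loses one, which costs `(b / φ(b)) ^ 2 (m / φ(m))`. -/
lemma selSum_excl_two {b m : ℕ} (hb : b ≠ 0) (hm : m ≠ 0) (h2 : 2 ∣ b * m) (r : ℕ) :
    Real.log (r + 1) ^ 2 ≤
      (((b : ℝ) / b.totient) ^ 2 * (m / m.totient)) * selSum (dens (excl b m)) (r * r) := by
  refine (log_sq_le_selSum r).trans ?_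
  set P := b.primeFactors ∪ m.primeFactors with hP
  have hPp : ∀ p ∈ P, p.Prime := fun p hp => by
    rcases mem_union.1 hp with h | h <;> exact Nat.prime_of_mem_primeFactors h
  let w : ℕ → ℝ := fun p => (if p ∈ b.primeFactors then ((p : ℝ) / (p - 1)) ^ 2 else 1) *
    (if p ∈ m.primeFactors then ((p : ℝ) / (p - 1)) else 1)
  have hw : ∏ p ∈ P, w p = ((b : ℝ) / b.totient) ^ 2 * (m / m.totient) := by
    simp only [w]
    rw [prod_mul_distrib, prod_ite_mem, prod_ite_mem, inter_eq_right.2 subset_union_left,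
      inter_eq_right.2 subset_union_right, prod_pow, prod_ratio hb, prod_ratio hm]
  rw [← hw]
  have hb1 : ∀ p ∈ P, (1 : ℝ) ≤ if p ∈ b.primeFactors then ((p : ℝ) / (p - 1)) ^ 2 else 1 :=
    fun p hp => by
      split_ifs
      · exact one_le_pow₀ (one_le_ratio (hPp p hp))
      · exact le_rfl
  have hm1 : ∀ p ∈ P, (1 : ℝ) ≤ if p ∈ m.primeFactors then ((p : ℝ) / (p - 1)) else 1 :=
    fun p hp => by
      split_ifs
      · exact one_le_ratio (hPp p hp)
      · exact le_rfl
  refine selSum_removal _ _ w _ hPp (fun p hp => one_le_mul_of_one_le_of_one_le (hb1 p hp)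
    (hm1 p hp)) (fun p hp => dens_nonneg (excl_adm h2) hp) _
    (fun p hp => sub_nonneg.2 (one_le_pow₀ (one_le_ratio hp))) ?_ ?_
  · intro p hp
    have hp' := hPp p hp
    have h1 := one_le_ratio hp'
    rw [dens_excl hp']
    by_cases hpb : p ∈ b.primeFactors
    · rw [if_pos (Nat.dvd_of_mem_primeFactors hpb)]
      simp only [w, if_pos hpb]
      have := hm1 p hp
      nlinarith [mul_le_mul_of_nonneg_left this (sq_nonneg ((p : ℝ) / (p - 1)))]
    · have hpb' : ¬ p ∣ b := fun h => hpb (Nat.mem_primeFactors.2 ⟨hp', h, hb⟩)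
      have hpm : p ∈ m.primeFactors := (mem_union.1 hp).resolve_left hpb
      rw [if_neg hpb', if_pos (Nat.dvd_of_mem_primeFactors hpm), one_add_H1 hp']
      simp only [w, if_neg hpb, if_pos hpm]
      exact le_of_eq (by ring)
  · intro p hp hpP
    have hpb : ¬ p ∣ b := fun h => hpP (mem_union_left _ (Nat.mem_primeFactors.2 ⟨hp, h, hb⟩))
    have hpm : ¬ p ∣ m := fun h => hpP (mem_union_right _ (Nat.mem_primeFactors.2 ⟨hp, h, hm⟩))
    rw [dens_excl hp, if_neg hpb, if_neg hpm]
    -- `2 ∣ b * m` rules out `p = 2`, so `p - 2` is positive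
    have hp2 : p ≠ 2 := by
      rintro rfl
      rcases (Nat.prime_two.dvd_mul).1 h2 with h | h
      · exact hpb h
      · exact hpm h
    have h3 : (3 : ℝ) ≤ p := by exact_mod_cast lt_of_le_of_ne hp.two_le (Ne.symm hp2)
    rw [div_pow, div_sub_one (pow_ne_zero 2 (by linarith)), div_le_div_iff₀ (by nlinarith)
      (by linarith)]
    nlinarith

/-- Choice of the sieve level `⌊M ^ (1 / n)⌋`. -/
lemma exists_level (n M : ℕ) (hn : 1 ≤ n) (hM : 2 ≤ M) : ∃ r : ℕ, 1 ≤ r ∧ r ^ n ≤ M ∧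
    Real.log M / n ≤ Real.log (r + 1) := by
  have hn' : (0 : ℝ) < n := by exact_mod_cast hn
  have hM' : (1 : ℝ) ≤ M := by exact_mod_cast (by lia : 1 ≤ M)
  set x : ℝ := (M : ℝ) ^ ((1 : ℝ) / n) with hx
  have hx1 : 1 ≤ x := Real.one_le_rpow hM' (by positivity)
  refine ⟨⌊x⌋₊, (Nat.one_le_floor_iff x).2 hx1, ?_, ?_⟩
  · have h1 : ((⌊x⌋₊ : ℝ)) ^ n ≤ x ^ n :=
      pow_le_pow_left₀ (by positivity) (Nat.floor_le (by linarith)) n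
    have h2 : x ^ n = M := by
      rw [hx, ← Real.rpow_natCast, ← Real.rpow_mul (by linarith), one_div,
        inv_mul_cancel₀ hn'.ne', Real.rpow_one]
    rw [h2] at h1
    exact_mod_cast h1
  · have h2 : Real.log x = Real.log M / n := by
      rw [hx, Real.log_rpow (by linarith)]; ring
    rw [← h2]
    exact Real.log_le_log (by linarith) (Nat.lt_floor_add_one x).le

/-- Brun–Titchmarsh with an absolute constant. -/
theorem brun_titchmarsh {b : ℕ} (hb : 1 ≤ b) {M : ℕ} (hM : 2 ≤ M) :
    (((range M).filter fun k => (b * k + 1).Prime).card : ℝ) ≤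
      18 * (b / b.totient) * M / Real.log M := by
  -- `R ^ 12 ≤ M` keeps the error term `R ^ 6` of the sieve below `√M`
  obtain ⟨R, hR1, hRM, hlog⟩ := exists_level 12 M (by norm_num) hM
  have hM' : (2 : ℝ) ≤ M := by exact_mod_cast hM
  have hlM : 0 < Real.log M := Real.log_pos (by linarith)
  set ρ : ℝ := b / b.totient with hρ
  have hρ1 : 1 ≤ ρ := one_le_div_totient (by lia)
  have hsel := selSum_excl_one (b := b) (by lia) R
  have hc := count_le (m := 0) hb (by simp) M hR1 (l := Real.log M / 12 / ρ)
    (by positivity) (by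
      rw [div_le_iff₀ (by linarith), mul_comm]
      refine le_trans ?_ hsel
      exact_mod_cast hlog)
  simp only [ne_eq, not_true_eq_false, IsEmpty.forall_iff, and_true] at hc
  refine hc.trans ?_
  have hR6 : (R : ℝ) ^ 6 ≤ √M := by
    apply Real.le_sqrt_of_sq_le
    rw [← pow_mul]
    exact_mod_cast hRM
  have hRR : (R : ℝ) ≤ R ^ 6 := le_self_pow₀ (by exact_mod_cast hR1) (by norm_num)
  have hsq : √(M : ℝ) * Real.log M ≤ 2 * M := by
    have h1 : Real.log √(M : ℝ) ≤ √M := Real.log_le_self (Real.sqrt_nonneg _)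
    rw [Real.log_sqrt (by linarith)] at h1
    nlinarith [Real.mul_self_sqrt (show (0 : ℝ) ≤ M by linarith), Real.sqrt_nonneg (M : ℝ)]
  rw [le_div_iff₀ hlM]
  have e1 : (M : ℝ) / (Real.log M / 12 / ρ) * Real.log M = 12 * ρ * M := by
    field_simp
  have : (2 * (R : ℝ) ^ 6 + R) * Real.log M ≤ 3 * (√M * Real.log M) := by nlinarith
  nlinarith

/-- The upper bound sieve for prime pairs `b k + 1`, `m (b k + 1) + 1`. -/
theorem pair_count {b m : ℕ} (hb : 1 ≤ b) (hm : 1 ≤ m) (h2 : 2 ∣ b * m) {M : ℕ} (hM : 2 ≤ M) :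
    (((range M).filter fun k => (b * k + 1).Prime ∧ (m * (b * k + 1) + 1).Prime).card : ℝ) ≤
      624 * (((b : ℝ) / b.totient) ^ 2 * (m / m.totient)) * M / Real.log M ^ 2 := by
  -- the sieve level is `r ^ 2`, so `r ^ 24 ≤ M` keeps its error term `r ^ 12` below `√M`
  obtain ⟨r, hr1, hrM, hlog⟩ := exists_level 24 M (by norm_num) hM
  have hM' : (2 : ℝ) ≤ M := by exact_mod_cast hM
  have hlM : 0 < Real.log M := Real.log_pos (by linarith)
  set ρ : ℝ := ((b : ℝ) / b.totient) ^ 2 * (m / m.totient) with hρ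
  have hρ1 : 1 ≤ ρ := one_le_mul_of_one_le_of_one_le
    (one_le_pow₀ (one_le_div_totient (by lia))) (one_le_div_totient (by lia))
  have hsel := selSum_excl_two (b := b) (m := m) (by lia) (by lia) h2 r
  have hc := count_le hb h2 M (Nat.mul_pos hr1 hr1) (l := (Real.log M / 24) ^ 2 / ρ)
    (by positivity) (by
      rw [div_le_iff₀ (by linarith), mul_comm]
      refine le_trans ?_ hsel
      have := hlog
      push_cast at this
      gcongr)
  have hm0 : m ≠ 0 := by lia
  simp only [ne_eq, hm0, not_false_eq_true, forall_const] at hc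
  refine hc.trans ?_
  push_cast
  have hR6 : ((r : ℝ) * r) ^ 6 ≤ √M := by
    apply Real.le_sqrt_of_sq_le
    have : (((r : ℝ) * r) ^ 6) ^ 2 = r ^ 24 := by ring
    rw [this]
    exact_mod_cast hrM
  have hr1' : (1 : ℝ) ≤ r := by exact_mod_cast hr1
  have hRR : (r : ℝ) * r ≤ (r * r) ^ 6 := le_self_pow₀ (by nlinarith) (by norm_num)
  have hsq : √(M : ℝ) * Real.log M ^ 2 ≤ 16 * M := by
    have h1 : Real.log √√(M : ℝ) ≤ √√M := Real.log_le_self (Real.sqrt_nonneg _)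
    rw [Real.log_sqrt (Real.sqrt_nonneg _), Real.log_sqrt (by linarith)] at h1
    have h3 : Real.log M ^ 2 ≤ (4 * √√(M : ℝ)) ^ 2 := by
      apply pow_le_pow_left₀ hlM.le; linarith
    rw [mul_pow, Real.sq_sqrt (Real.sqrt_nonneg _)] at h3
    nlinarith [Real.mul_self_sqrt (show (0 : ℝ) ≤ M by linarith), Real.sqrt_nonneg (M : ℝ)]
  rw [le_div_iff₀ (by positivity)]
  have e1 : (M : ℝ) / ((Real.log M / 24) ^ 2 / ρ) * Real.log M ^ 2 = 576 * ρ * M := by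
    field_simp
    norm_num
  have h5 : (2 * ((r : ℝ) * r) ^ 6 + r * r) * Real.log M ^ 2 ≤ 3 * (√M * Real.log M ^ 2) := by
    have : 0 < Real.log M ^ 2 := by positivity
    nlinarith
  nlinarith

/-! ### Mertens' bounds and the size of `b / φ(b)` -/

/-- Mertens' first theorem, upper bound: each `n ≤ Y` satisfies `∑_{p ∣ n} log p ≤ log n`, and
summing over `n` counts every prime `p` exactly `⌊Y / p⌋` times. -/
lemma sum_log_div_le {Y : ℕ} (hY : 1 ≤ Y) :
    ∑ p ∈ Nat.primesLE Y, Real.log p / p ≤ Real.log Y + Real.log 4 := by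
  have hY' : (0 : ℝ) < Y := by exact_mod_cast hY
  have h1 : ∀ n ∈ Ioc 0 Y, ∑ p ∈ Nat.primesLE Y with p ∣ n, Real.log p ≤ Real.log Y := by
    intro n hn
    obtain ⟨hn0, hnY⟩ := mem_Ioc.1 hn
    have hsub : (Nat.primesLE Y).filter (· ∣ n) ⊆ n.primeFactors := fun p hp => by
      obtain ⟨h, h'⟩ := mem_filter.1 hp
      exact Nat.mem_primeFactors.2 ⟨Nat.prime_of_mem_primesLE h, h', by lia⟩
    calc _ ≤ ∑ p ∈ n.primeFactors, Real.log p :=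
          sum_le_sum_of_subset_of_nonneg hsub fun p _ _ => Real.log_natCast_nonneg p
      _ = Real.log ((∏ p ∈ n.primeFactors, p : ℕ) : ℝ) := by
          rw [Nat.cast_prod, Real.log_prod]
          intro p hp
          exact_mod_cast (Nat.prime_of_mem_primeFactors hp).ne_zero
      _ ≤ Real.log Y := by
          apply Real.log_le_log
          · exact_mod_cast prod_pos fun p hp => (Nat.prime_of_mem_primeFactors hp).pos
          · exact_mod_cast (Nat.le_of_dvd hn0 (Nat.prod_primeFactors_dvd n)).trans hnY
  have h2 : ∑ p ∈ Nat.primesLE Y, Real.log p * ((Y / p : ℕ) : ℝ) ≤ Y * Real.log Y := by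
    calc _ = ∑ p ∈ Nat.primesLE Y, ∑ n ∈ Ioc 0 Y, if p ∣ n then Real.log p else 0 := by
          refine sum_congr rfl fun p _ => ?_
          rw [← sum_filter, sum_const, Nat.Ioc_filter_dvd_card_eq_div, nsmul_eq_mul, mul_comm]
      _ = ∑ n ∈ Ioc 0 Y, ∑ p ∈ Nat.primesLE Y with p ∣ n, Real.log p := by
          rw [sum_comm]
          exact sum_congr rfl fun n _ => (sum_filter _ _).symm
      _ ≤ ∑ n ∈ Ioc 0 Y, Real.log Y := sum_le_sum h1
      _ = _ := by simp
  have h3 : ∑ p ∈ Nat.primesLE Y, Real.log p ≤ Real.log 4 * Y := by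
    rw [← Chebyshev.theta_eq_sum_primesLE_log]
    exact Chebyshev.theta_le_log4_mul_x hY'.le
  have h4 : Y * ∑ p ∈ Nat.primesLE Y, Real.log p / p ≤
      ∑ p ∈ Nat.primesLE Y, Real.log p * ((Y / p : ℕ) : ℝ) + ∑ p ∈ Nat.primesLE Y, Real.log p := by
    rw [mul_sum, ← sum_add_distrib]
    refine sum_le_sum fun p hp => ?_
    have hp0 : (0 : ℝ) < p := by exact_mod_cast (Nat.prime_of_mem_primesLE hp).pos
    have h5 : (Y : ℝ) / p ≤ ((Y / p : ℕ) : ℝ) + 1 := by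
      rw [← Nat.floor_div_eq_div (K := ℝ)]
      exact (Nat.lt_floor_add_one _).le
    have : (Y : ℝ) * (Real.log p / p) = Real.log p * (Y / p) := by ring
    rw [this]
    nlinarith [Real.log_natCast_nonneg p]
  nlinarith

/-- `n ↦ n ^ (-s)` as a monoid homomorphism. -/
noncomputable def rpowHom (s : ℝ) : ℕ →* ℝ where
  toFun n := (n : ℝ) ^ (-s)
  map_one' := by simp
  map_mul' m n := by
    push_cast
    exact Real.mul_rpow (Nat.cast_nonneg m) (Nat.cast_nonneg n)

/-- The Euler product over primes `p < N` is at most `ζ(s) ≤ 1 + 1 / (s - 1)`. -/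
lemma prod_euler_le {s : ℝ} (hs : 1 < s) (N : ℕ) :
    ∏ p ∈ N.primesBelow, (1 - (p : ℝ) ^ (-s))⁻¹ ≤ 1 + 1 / (s - 1) := by
  have hsum : Summable (rpowHom s) := by
    change Summable fun n : ℕ => (n : ℝ) ^ (-s)
    rw [Real.summable_nat_rpow]
    linarith
  have h0 : ∀ n, 0 ≤ rpowHom s n := fun n => Real.rpow_nonneg (Nat.cast_nonneg n) _
  have h1 := EulerProduct.prod_primesBelow_geometric_eq_tsum_smoothNumbers hsum N
  change ∏ p ∈ N.primesBelow, (1 - (rpowHom s) p)⁻¹ ≤ _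
  rw [h1]
  refine (hsum.tsum_subtype_le _ _ h0).trans ?_
  rw [hsum.tsum_eq_zero_add]
  have h2 : rpowHom s 0 = 0 := by
    change ((0 : ℕ) : ℝ) ^ (-s) = 0
    rw [Nat.cast_zero, Real.zero_rpow (by linarith)]
  have h3 : ∑' n : ℕ, rpowHom s (n + 1) = ∑' n : ℕ, 1 / (n + 1 : ℝ) ^ s := by
    refine tsum_congr fun n => ?_
    change ((n + 1 : ℕ) : ℝ) ^ (-s) = _
    rw [Real.rpow_neg (Nat.cast_nonneg _), one_div]
    push_cast
    rfl
  rw [h2, h3]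
  have h4 := ZetaAsymptotics.zeta_limit_aux1 hs
  have h5 : 0 ≤ ZetaAsymptotics.termTSum s :=
    tsum_nonneg fun n => ZetaAsymptotics.term_nonneg _ _
  have : 0 ≤ s * ZetaAsymptotics.termTSum s := mul_nonneg (by linarith) h5
  linarith

/-- Comparison of an Euler factor at `1` with the one at `1 + δ`. -/
lemma euler_factor_le {p : ℕ} (hp : p.Prime) {δ : ℝ} (hδ : 0 < δ) :
    (p : ℝ) / (p - 1) ≤
      (1 - (p : ℝ) ^ (-(1 + δ)))⁻¹ * Real.exp (2 * δ * (Real.log p / p)) := by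
  have hp2 : (2 : ℝ) ≤ p := by exact_mod_cast hp.two_le
  have hp0 : (0 : ℝ) < p := by linarith
  have hl : 0 < Real.log p := Real.log_pos (by linarith)
  have e1 : (p : ℝ) ^ (-(1 + δ)) = Real.exp (-(δ * Real.log p)) / p := by
    rw [neg_add, Real.rpow_add hp0, Real.rpow_neg_one, Real.rpow_def_of_pos hp0]
    rw [mul_comm, div_eq_mul_inv]
    congr 2
    ring
  set y := δ * Real.log p with hy
  have hy0 : 0 < y := by positivity
  have h1 : 1 - y ≤ Real.exp (-y) := by linarith [Real.add_one_le_exp (-y)]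
  have h2 : Real.exp (-y) < 1 := Real.exp_lt_one_iff.2 (by linarith)
  have h3 : 1 + 2 * y / p ≤ Real.exp (2 * δ * (Real.log p / p)) := by
    have : 2 * δ * (Real.log p / p) = 2 * y / p := by rw [hy]; ring
    rw [this]
    linarith [Real.add_one_le_exp (2 * y / p)]
  rw [e1]
  have e2 : (1 - Real.exp (-y) / p)⁻¹ = p / (p - Real.exp (-y)) := by
    have : (p : ℝ) - Real.exp (-y) ≠ 0 := by linarith
    field_simp
  rw [e2, div_mul_eq_mul_div, div_le_div_iff₀ (by linarith) (by linarith)]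
  have h4 : (p : ℝ) - Real.exp (-y) ≤ (1 + 2 * y / p) * (p - 1) := by
    have : (1 + 2 * y / p) * ((p : ℝ) - 1) = p - 1 + 2 * y * ((p - 1) / p) := by
      field_simp
    rw [this]
    have h5 : (1 : ℝ) / 2 ≤ (p - 1) / p := by
      rw [div_le_div_iff₀ (by norm_num) hp0]; linarith
    nlinarith
  have h6 : (p : ℝ) - Real.exp (-y) ≤ Real.exp (2 * δ * (Real.log p / p)) * (p - 1) :=
    h4.trans (mul_le_mul_of_nonneg_right h3 (by linarith))
  nlinarith

/-- Mertens' product, upper bound, with Rankin's choice `s = 1 + 1 / log Y`. -/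
lemma prod_primesLE_le : ∃ C : ℝ, 0 < C ∧ ∀ Y : ℕ, 2 ≤ Y →
    ∏ p ∈ Nat.primesLE Y, ((p : ℝ) / (p - 1)) ≤ C * Real.log Y := by
  refine ⟨3 * Real.exp 6, by positivity, fun Y hY => ?_⟩
  have hY' : (2 : ℝ) ≤ Y := by exact_mod_cast hY
  have hl2 : (0.69 : ℝ) < Real.log 2 := by linarith [Real.log_two_gt_d9]
  have hl : Real.log 2 ≤ Real.log Y := Real.log_le_log (by norm_num) hY'
  have hl0 : 0 < Real.log Y := by linarith
  have h4 : Real.log 4 = 2 * Real.log 2 := by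
    rw [show (4 : ℝ) = 2 ^ 2 by norm_num, Real.log_pow]; norm_num
  have hδ : 0 < 1 / Real.log Y := by positivity
  calc _ ≤ ∏ p ∈ Nat.primesLE Y, ((1 - (p : ℝ) ^ (-(1 + 1 / Real.log Y)))⁻¹ *
        Real.exp (2 * (1 / Real.log Y) * (Real.log p / p))) :=
        prod_le_prod (fun p hp => (zero_le_one.trans
          (one_le_ratio (Nat.prime_of_mem_primesLE hp)))) fun p hp =>
          euler_factor_le (Nat.prime_of_mem_primesLE hp) hδ
    _ = (∏ p ∈ (Y + 1).primesBelow, (1 - (p : ℝ) ^ (-(1 + 1 / Real.log Y)))⁻¹) *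
        Real.exp (2 * (1 / Real.log Y) * ∑ p ∈ Nat.primesLE Y, Real.log p / p) := by
        rw [prod_mul_distrib, ← Real.exp_sum, ← mul_sum]; rfl
    _ ≤ (3 * Real.log Y) * Real.exp 6 := by
        refine mul_le_mul ?_ ?_ (Real.exp_nonneg _) (by positivity)
        · refine (prod_euler_le (by linarith) _).trans ?_
          rw [add_sub_cancel_left, one_div_one_div]
          linarith
        · apply Real.exp_le_exp.2
          have := sum_log_div_le (Y := Y) (by lia)
          have e : 2 * (1 / Real.log Y) * ∑ p ∈ Nat.primesLE Y, Real.log p / p =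
            2 * (∑ p ∈ Nat.primesLE Y, Real.log p / p) / Real.log Y := by ring
          rw [e, div_le_iff₀ hl0]
          linarith
    _ = _ := by ring

/-- `b / φ(b) ≪ log log t` for `b ≤ t`: the prime factors of `b` beyond `log t` are at most
`log t / log 2` in number, so they contribute a bounded factor. -/
lemma div_totient_le : ∃ C : ℝ, 0 < C ∧ ∀ b : ℕ, 1 ≤ b → ∀ t : ℝ, Real.exp (Real.exp 1) < t →
    (b : ℝ) ≤ t → (b : ℝ) / b.totient ≤ C * Real.log (Real.log t) := by
  obtain ⟨C, hC, hprod⟩ := prod_primesLE_le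
  refine ⟨C * Real.exp 3, by positivity, fun b hb t ht hbt => ?_⟩
  have ht0 : 0 < t := (Real.exp_pos _).trans ht
  have hlt : Real.exp 1 < Real.log t := (Real.lt_log_iff_exp_lt ht0).2 ht
  have he : (2.7 : ℝ) < Real.exp 1 := by linarith [Real.exp_one_gt_d9]
  set Y := ⌊Real.log t⌋₊ with hY
  have hY2 : 2 ≤ Y := Nat.le_floor (by push_cast; linarith)
  have hY2' : (2 : ℝ) ≤ Y := by exact_mod_cast hY2
  have hYle : (Y : ℝ) ≤ Real.log t := Nat.floor_le (by linarith)
  have hYlt : Real.log t < Y + 1 := Nat.lt_floor_add_one _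
  rw [← prod_ratio (by lia), ← prod_filter_mul_prod_filter_not _ (fun p => p ≤ Y)]
  have h1 : ∏ p ∈ b.primeFactors with p ≤ Y, ((p : ℝ) / (p - 1)) ≤ C * Real.log (Real.log t) := by
    have hsub : (b.primeFactors.filter fun p => p ≤ Y) ⊆ Nat.primesLE Y := fun p hp => by
      obtain ⟨h, h'⟩ := mem_filter.1 hp
      exact Nat.mem_primesLE.2 ⟨h', Nat.prime_of_mem_primeFactors h⟩
    have h2 : ∏ p ∈ b.primeFactors with p ≤ Y, ((p : ℝ) / (p - 1)) ≤
        ∏ p ∈ Nat.primesLE Y, ((p : ℝ) / (p - 1)) := by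
      rw [← prod_sdiff hsub]
      refine le_mul_of_one_le_left (prod_nonneg fun p hp => zero_le_one.trans
        (one_le_ratio (Nat.prime_of_mem_primesLE (hsub hp)))) ?_
      exact one_le_prod fun p hp => one_le_ratio (Nat.prime_of_mem_primesLE (mem_sdiff.1 hp).1)
    refine h2.trans ((hprod Y hY2).trans ?_)
    gcongr
  have h2 : ∏ p ∈ b.primeFactors with ¬ p ≤ Y, ((p : ℝ) / (p - 1)) ≤ Real.exp 3 := by
    have hcard : ((b.primeFactors.filter fun p => ¬ p ≤ Y).card : ℝ) ≤ 3 * Y := by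
      have h3 : 2 ^ (b.primeFactors.filter fun p => ¬ p ≤ Y).card ≤ b := by
        calc _ ≤ ∏ p ∈ b.primeFactors with ¬ p ≤ Y, p := by
              rw [← prod_const]
              exact prod_le_prod' fun p hp =>
                (Nat.prime_of_mem_primeFactors (mem_filter.1 hp).1).two_le
          _ ≤ ∏ p ∈ b.primeFactors, p :=
              prod_le_prod_of_subset_of_one_le' (filter_subset _ _) fun p hp _ =>
                (Nat.prime_of_mem_primeFactors hp).one_le
          _ ≤ b := Nat.le_of_dvd (by lia) (Nat.prod_primeFactors_dvd b)
      have h4 : Real.log ((2 : ℝ) ^ (b.primeFactors.filter fun p => ¬ p ≤ Y).card) ≤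
          Real.log t := Real.log_le_log (by positivity) (le_trans (by exact_mod_cast h3) hbt)
      rw [Real.log_pow] at h4
      have hl2 : (0.69 : ℝ) < Real.log 2 := by linarith [Real.log_two_gt_d9]
      nlinarith
    calc _ ≤ ∏ p ∈ b.primeFactors with ¬ p ≤ Y, Real.exp (1 / Y) := by
          refine prod_le_prod (fun p hp => zero_le_one.trans
            (one_le_ratio (Nat.prime_of_mem_primeFactors (mem_filter.1 hp).1))) fun p hp => ?_
          obtain ⟨h5, h6⟩ := mem_filter.1 hp
          have h7 : (Y : ℝ) ≤ p - 1 := by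
            have : ((Y + 1 : ℕ) : ℝ) ≤ p := by exact_mod_cast (by lia : Y + 1 ≤ p)
            push_cast at this
            linarith
          rw [← one_add_H1 (Nat.prime_of_mem_primeFactors h5)]
          have : 1 / ((p : ℝ) - 1) ≤ 1 / Y := by gcongr
          linarith [Real.add_one_le_exp (1 / (Y : ℝ))]
      _ = Real.exp ((b.primeFactors.filter fun p => ¬ p ≤ Y).card * (1 / Y)) := by
          rw [prod_const, ← Real.exp_nat_mul]
      _ ≤ Real.exp 3 := by
          apply Real.exp_le_exp.2
          rw [mul_one_div, div_le_iff₀ (by linarith)]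
          exact hcard
  have h0 : 0 ≤ ∏ p ∈ b.primeFactors with ¬ p ≤ Y, ((p : ℝ) / (p - 1)) :=
    prod_nonneg fun p hp => zero_le_one.trans
      (one_le_ratio (Nat.prime_of_mem_primeFactors (mem_filter.1 hp).1))
  have hll : 0 < Real.log (Real.log t) := Real.log_pos (by linarith)
  calc _ ≤ (C * Real.log (Real.log t)) * Real.exp 3 :=
        mul_le_mul h1 h2 h0 (by positivity)
    _ = _ := by ring

/-! ### The sum of `1 / φ(m)` -/

/-- `m / φ(m) = ∏_{p ∣ m} (1 + 1 / (p - 1))`, expanded over the squarefree divisors of `m`. -/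
lemma ratio_le_sum {m X : ℕ} (hm : 1 ≤ m) (hmX : m ≤ X) : (m : ℝ) / m.totient ≤
    ∑ d ∈ (Icc 1 X).filter Squarefree with d ∣ m, ∏ p ∈ d.primeFactors, 1 / ((p : ℝ) - 1) := by
  have hpf : ∀ t ∈ m.primeFactors.powerset, (∏ p ∈ t, p).primeFactors = t := fun t ht =>
    Nat.primeFactors_prod fun p hp => Nat.prime_of_mem_primeFactors (mem_powerset.1 ht hp)
  rw [← prod_ratio (by lia), ← prod_congr rfl fun p hp =>
    one_add_H1 (Nat.prime_of_mem_primeFactors hp), prod_one_add]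
  calc _ = ∑ d ∈ m.primeFactors.powerset.image (fun t => ∏ p ∈ t, p),
        ∏ p ∈ d.primeFactors, 1 / ((p : ℝ) - 1) := by
        rw [sum_image]
        · exact sum_congr rfl fun t ht => by rw [hpf t ht]
        · intro s hs t ht hst
          have := congrArg Nat.primeFactors hst
          rwa [hpf s hs, hpf t ht] at this
    _ ≤ _ := by
        refine sum_le_sum_of_subset_of_nonneg ?_ fun d _ _ => prod_nonneg fun p hp =>
          H1_nonneg p (Nat.prime_of_mem_primeFactors hp)
        intro d hd
        obtain ⟨t, ht, rfl⟩ := mem_image.1 hd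
        have hdvd : ∏ p ∈ t, p ∣ m :=
          (prod_dvd_prod_of_subset _ _ _ (mem_powerset.1 ht)).trans (Nat.prod_primeFactors_dvd m)
        have hle := Nat.le_of_dvd (by lia) hdvd
        have hpos := Nat.pos_of_dvd_of_pos hdvd (by lia)
        refine mem_filter.2 ⟨mem_filter.2 ⟨mem_Icc.2 ⟨hpos, hle.trans hmX⟩, ?_⟩, hdvd⟩
        refine squarefree_prod_of_pairwise_isCoprime (fun p hp q hq hpq => ?_) fun p hp =>
          (Nat.prime_of_mem_primeFactors (mem_powerset.1 ht hp)).prime.squarefree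
        exact Nat.coprime_iff_isRelPrime.1 <| (Nat.coprime_primes
          (Nat.prime_of_mem_primeFactors (mem_powerset.1 ht hp))
          (Nat.prime_of_mem_primeFactors (mem_powerset.1 ht hq))).2 hpq

/-- The complete Euler product `∏ (1 + 1 / (p (p - 1)))` is bounded, since `∑ 1 / (n (n - 1))`
telescopes to `1`. -/
lemma selSum_sq_le (X : ℕ) : selSum (fun p => 1 / (((p : ℝ) - 1) * p)) X ≤ Real.exp 1 := by
  have hinj : Set.InjOn Nat.primeFactors ((Icc 1 X).filter Squarefree) := by
    intro a ha b hb hab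
    rw [← Nat.prod_primeFactors_of_squarefree (mem_filter.1 (mem_coe.1 ha)).2,
      ← Nat.prod_primeFactors_of_squarefree (mem_filter.1 (mem_coe.1 hb)).2, hab]
  have hn : ∀ p : ℕ, p.Prime → 0 ≤ 1 / (((p : ℝ) - 1) * p) := fun p hp => by
    have : (1 : ℝ) < p := by exact_mod_cast hp.one_lt
    exact div_nonneg zero_le_one (mul_nonneg (by linarith) (by linarith))
  have htel : ∀ X : ℕ, 1 ≤ X →
      ∑ n ∈ range (X + 1), 1 / (((n : ℝ) - 1) * n) ≤ 1 - 1 / X := by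
    intro X hX
    induction X, hX using Nat.le_induction with
    | base => norm_num [sum_range_succ]
    | succ n hn ih =>
      rw [sum_range_succ]
      have hn' : (0 : ℝ) < n := by exact_mod_cast hn
      have : 1 / ((((n + 1 : ℕ) : ℝ) - 1) * (n + 1 : ℕ)) = 1 / n - 1 / (n + 1 : ℕ) := by
        push_cast
        rw [add_sub_cancel_right]
        field_simp
        ring
      linarith
  calc _ = ∑ t ∈ ((Icc 1 X).filter Squarefree).image Nat.primeFactors,
        ∏ p ∈ t, 1 / (((p : ℝ) - 1) * p) := by rw [sum_image hinj]; rfl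
    _ ≤ ∑ t ∈ (Nat.primesLE X).powerset, ∏ p ∈ t, 1 / (((p : ℝ) - 1) * p) := by
        refine sum_le_sum_of_subset_of_nonneg ?_ fun t ht _ => prod_nonneg fun p hp =>
          hn p (Nat.prime_of_mem_primesLE (mem_powerset.1 ht hp))
        intro t ht
        obtain ⟨d, hd, rfl⟩ := mem_image.1 ht
        refine mem_powerset.2 fun p hp => Nat.mem_primesLE.2 ⟨?_, Nat.prime_of_mem_primeFactors hp⟩
        exact (Nat.le_of_mem_primeFactors hp).trans (mem_Icc.1 (mem_filter.1 hd).1).2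
    _ = ∏ p ∈ Nat.primesLE X, (1 + 1 / (((p : ℝ) - 1) * p)) := (prod_one_add _).symm
    _ ≤ ∏ p ∈ Nat.primesLE X, Real.exp (1 / (((p : ℝ) - 1) * p)) :=
        prod_le_prod (fun p hp => by linarith [hn p (Nat.prime_of_mem_primesLE hp)])
          fun p _ => by linarith [Real.add_one_le_exp (1 / (((p : ℝ) - 1) * p))]
    _ = Real.exp (∑ p ∈ Nat.primesLE X, 1 / (((p : ℝ) - 1) * p)) := (Real.exp_sum _ _).symm
    _ ≤ Real.exp 1 := by
        apply Real.exp_le_exp.2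
        rcases Nat.eq_zero_or_pos X with rfl | hX
        · simp
        · rw [Nat.primesLE_eq_filter_range]
          refine (sum_le_sum_of_subset_of_nonneg (filter_subset _ _) fun n _ _ => ?_).trans
            ((htel X hX).trans ?_)
          · rcases Nat.eq_zero_or_pos n with rfl | h
            · simp
            · have : (1 : ℝ) ≤ n := by exact_mod_cast h
              exact div_nonneg zero_le_one (mul_nonneg (by linarith) (by linarith))
          · have : (0 : ℝ) ≤ 1 / X := by positivity
            linarith

lemma sum_inv_le (X : ℕ) : ∑ k ∈ Icc 1 X, 1 / (k : ℝ) ≤ 1 + Real.log X := by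
  have := harmonic_le_one_add_log X
  rw [harmonic_eq_sum_Icc] at this
  push_cast at this
  simpa using this

/-- `∑_{m ≤ X} 1 / φ(m) ≪ 1 + log X`. -/
lemma sum_inv_totient_le (X : ℕ) :
    ∑ m ∈ Icc 1 X, 1 / (m.totient : ℝ) ≤ Real.exp 1 * (1 + Real.log X) := by
  set D := (Icc 1 X).filter Squarefree with hD
  set g : ℕ → ℝ := fun d => ∏ p ∈ d.primeFactors, 1 / ((p : ℝ) - 1) with hg
  have hg0 : ∀ d, 0 ≤ g d := fun d => prod_nonneg fun p hp =>
    H1_nonneg p (Nat.prime_of_mem_primeFactors hp)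
  have hH : 0 ≤ ∑ k ∈ Icc 1 X, 1 / (k : ℝ) := sum_nonneg fun k _ => by positivity
  calc _ = ∑ m ∈ Icc 1 X, 1 / (m : ℝ) * ((m : ℝ) / m.totient) := by
        refine sum_congr rfl fun m hm => ?_
        have : (m : ℝ) ≠ 0 := by
          have := (mem_Icc.1 hm).1
          exact_mod_cast (by lia : m ≠ 0)
        rw [← mul_div_assoc, one_div_mul_cancel this]
    _ ≤ ∑ m ∈ Icc 1 X, 1 / (m : ℝ) * ∑ d ∈ D with d ∣ m, g d := by
        refine sum_le_sum fun m hm => ?_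
        obtain ⟨h1, h2⟩ := mem_Icc.1 hm
        exact mul_le_mul_of_nonneg_left (ratio_le_sum h1 h2) (by positivity)
    _ = ∑ d ∈ D, g d * ∑ m ∈ Icc 1 X with d ∣ m, 1 / (m : ℝ) := by
        simp only [mul_sum, sum_filter]
        rw [sum_comm]
        exact sum_congr rfl fun d _ => sum_congr rfl fun m _ => by split_ifs <;> ring
    _ ≤ ∑ d ∈ D, g d * (1 / (d : ℝ) * ∑ k ∈ Icc 1 X, 1 / (k : ℝ)) := by
        refine sum_le_sum fun d hd => mul_le_mul_of_nonneg_left ?_ (hg0 d)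
        have hd1 : 1 ≤ d := (mem_Icc.1 (mem_filter.1 hd).1).1
        have hsub : (Icc 1 X).filter (d ∣ ·) ⊆ (Icc 1 X).image (fun k => d * k) := by
          intro m hm
          obtain ⟨h1, k, rfl⟩ := mem_filter.1 hm
          obtain ⟨h2, h3⟩ := mem_Icc.1 h1
          refine mem_image.2 ⟨k, mem_Icc.2 ⟨Nat.pos_of_mul_pos_left h2, ?_⟩, rfl⟩
          exact (Nat.le_mul_of_pos_left _ hd1).trans h3
        refine (sum_le_sum_of_subset_of_nonneg hsub fun m _ _ => by positivity).trans ?_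
        rw [sum_image fun a _ b _ hab => Nat.eq_of_mul_eq_mul_left hd1 hab, mul_sum]
        refine le_of_eq (sum_congr rfl fun k _ => ?_)
        push_cast
        rw [one_div_mul_one_div]
    _ = selSum (fun p => 1 / (((p : ℝ) - 1) * p)) X * ∑ k ∈ Icc 1 X, 1 / (k : ℝ) := by
        rw [selSum, sum_mul]
        refine sum_congr rfl fun d hd => ?_
        rw [← mul_assoc]
        congr 1
        have h1 : (d : ℝ) = ∏ p ∈ d.primeFactors, (p : ℝ) := by
          conv_lhs => rw [← Nat.prod_primeFactors_of_squarefree (mem_filter.1 hd).2]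
          push_cast
          rfl
        rw [h1, hg, one_div, ← prod_inv_distrib]
        simp only
        rw [← prod_mul_distrib]
        exact prod_congr rfl fun p _ => by rw [one_div, one_div, mul_inv]
    _ ≤ _ := mul_le_mul (selSum_sq_le X) (sum_inv_le X) hH (Real.exp_nonneg _)

/-! ### The sums of `π(t; r, 1)` -/

/-- A finsum over bounded natural numbers is a finite sum. -/
lemma finsum_eq {P : ℕ → Prop} [DecidablePred P] {N : ℕ} (hP : ∀ r, P r → r ≤ N) (f : ℕ → ℝ) :
    (∑ᶠ (r : ℕ) (_ : P r), f r) = ∑ r ∈ (range (N + 1)).filter P, f r := by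
  rw [← finsum_mem_coe_finset]
  refine finsum_congr fun r => ?_
  have : P r ↔ r ∈ (((range (N + 1)).filter P : Finset ℕ) : Set ℕ) := by
    simp only [coe_filter, mem_range, Set.mem_ofPred_eq]
    exact ⟨fun h => ⟨Nat.lt_succ_of_le (hP r h), h⟩, fun h => h.2⟩
  rw [← propext this]

/-- Primes `p ≡ 1 (mod r)` are of the form `r k + 1`. -/
lemma exists_eq {p r : ℕ} (hp : p.Prime) (h : p ≡ 1 [MOD r]) : ∃ k, 1 ≤ k ∧ p = r * k + 1 := by
  have h1 : r ∣ p - 1 := (Nat.modEq_iff_dvd' hp.one_le).1 h.symm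
  obtain ⟨k, hk⟩ := h1
  have := hp.two_le
  refine ⟨k, Nat.pos_of_ne_zero ?_, by lia⟩
  rintro rfl
  lia

/-- `π(t; r, 1)` counts the `k` with `r k + 1` prime and at most `t`. -/
lemma pi1_le {t : ℝ} {r : ℕ} (s : Finset ℕ)
    (hs : ∀ k, 1 ≤ k → (r * k + 1).Prime → ((r * k + 1 : ℕ) : ℝ) ≤ t → k ∈ s) :
    pi1 t r ≤ s.card := by
  have hsub : {p : ℕ | p.Prime ∧ (p : ℝ) ≤ t ∧ p ≡ 1 [MOD r]} ⊆
      ((s.image fun k => r * k + 1 : Finset ℕ) : Set ℕ) := by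
    rintro p ⟨hp, hpt, hpr⟩
    obtain ⟨k, hk, rfl⟩ := exists_eq hp hpr
    exact mem_coe.2 (mem_image.2 ⟨k, hs k hk hp hpt, rfl⟩)
  calc pi1 t r ≤ Set.ncard ((s.image fun k => r * k + 1 : Finset ℕ) : Set ℕ) :=
        Set.ncard_le_ncard hsub (finite_toSet _)
    _ ≤ s.card := by rw [Set.ncard_coe_finset]; exact card_image_le

lemma le_floor_of {t : ℝ} {r k : ℕ} (hr : 1 ≤ r) (h : ((r * k + 1 : ℕ) : ℝ) ≤ t) :
    k ≤ ⌊t / r⌋₊ := by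
  have hr' : (0 : ℝ) < r := by exact_mod_cast hr
  apply Nat.le_floor
  rw [le_div_iff₀ hr']
  push_cast at h
  linarith

lemma pi1_le_div {t : ℝ} {r : ℕ} (ht : 0 ≤ t) (hr : 1 ≤ r) : (pi1 t r : ℝ) ≤ t / r := by
  have h : pi1 t r ≤ (Icc 1 ⌊t / r⌋₊).card :=
    pi1_le _ fun k hk _ h => mem_Icc.2 ⟨hk, le_floor_of hr h⟩
  rw [Nat.card_Icc, Nat.add_sub_cancel] at h
  exact (Nat.cast_le.2 h).trans (Nat.floor_le (by positivity))

lemma basics {t : ℝ} (ht : Real.exp (Real.exp 1) < t) :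
    0 < t ∧ 2.7 < Real.log t ∧ 1 < Real.log (Real.log t) := by
  have ht0 : 0 < t := (Real.exp_pos _).trans ht
  have hlt : Real.exp 1 < Real.log t := (Real.lt_log_iff_exp_lt ht0).2 ht
  have he : (2.7 : ℝ) < Real.exp 1 := by linarith [Real.exp_one_gt_d9]
  exact ⟨ht0, by linarith, (Real.lt_log_iff_exp_lt (by linarith)).2 hlt⟩

/-- The trivial estimate, from `π(t; r, 1) ≤ t / r`. -/
lemma part_a {b : ℕ} (hb : 1 ≤ b) {t : ℝ} (ht : Real.exp (Real.exp 1) < t) :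
    ∑ r ∈ (range (⌊t⌋₊ + 1)).filter (fun r : ℕ => r.Prime ∧ (r : ℝ) ≤ t ∧ r ≡ 1 [MOD b]),
      (pi1 t r : ℝ) ≤ 2 * t * Real.log t / b := by
  obtain ⟨ht0, hl, -⟩ := basics ht
  have hb' : (0 : ℝ) < b := by exact_mod_cast hb
  set T := (range (⌊t⌋₊ + 1)).filter (fun r : ℕ => r.Prime ∧ (r : ℝ) ≤ t ∧ r ≡ 1 [MOD b]) with hT
  have hsub : T ⊆ (Icc 1 ⌊t⌋₊).image fun k : ℕ => b * k + 1 := by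
    intro r hr
    obtain ⟨-, hp, hrt, hrb⟩ := mem_filter.1 hr
    obtain ⟨k, hk, rfl⟩ := exists_eq hp hrb
    refine mem_image.2 ⟨k, mem_Icc.2 ⟨hk, ?_⟩, rfl⟩
    exact (Nat.le_mul_of_pos_left k hb).trans ((Nat.le_succ _).trans (Nat.le_floor hrt))
  have h1t : 1 ≤ t := by
    have := Real.log_le_sub_one_of_pos ht0
    linarith
  have hfl : (1 : ℝ) ≤ ⌊t⌋₊ := by exact_mod_cast (Nat.one_le_floor_iff t).2 h1t
  calc _ ≤ ∑ r ∈ T, t / (r : ℝ) := sum_le_sum fun r hr =>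
        pi1_le_div ht0.le (mem_filter.1 hr).2.1.one_le
    _ ≤ ∑ r ∈ (Icc 1 ⌊t⌋₊).image fun k : ℕ => b * k + 1, t / (r : ℝ) :=
        sum_le_sum_of_subset_of_nonneg hsub fun r _ _ => by positivity
    _ = ∑ k ∈ Icc 1 ⌊t⌋₊, t / ((b * k + 1 : ℕ) : ℝ) := by
        rw [sum_image]
        intro x _ y _ hxy
        exact Nat.eq_of_mul_eq_mul_left hb (Nat.succ_injective hxy)
    _ ≤ ∑ k ∈ Icc 1 ⌊t⌋₊, t / b * (1 / (k : ℝ)) := by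
        refine sum_le_sum fun k hk => ?_
        have hk0 : (0 : ℝ) < k := by exact_mod_cast (mem_Icc.1 hk).1
        rw [div_mul_div_comm, mul_one]
        push_cast
        gcongr
        linarith
    _ ≤ t / b * (1 + Real.log t) := by
        rw [← mul_sum]
        refine mul_le_mul_of_nonneg_left ((sum_inv_le _).trans ?_) (by positivity)
        have := Real.log_le_log (by linarith) (Nat.floor_le ht0.le)
        linarith
    _ ≤ t / b * (2 * Real.log t) := by gcongr; linarith
    _ = _ := by ring

/-- Dyadic summation of the Brun–Titchmarsh bound. -/
lemma sum_inv_dyadic {b : ℕ} (hb : 1 ≤ b) (J : ℕ) :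
    ∑ k ∈ (Ico 1 (2 ^ J)).filter (fun k => (b * k + 1).Prime), 1 / ((b * k + 1 : ℕ) : ℝ) ≤
      60 / b.totient * ∑ j ∈ range J, 1 / ((j : ℝ) + 1) := by
  have hb' : (0 : ℝ) < b := by exact_mod_cast hb
  have hφ : (0 : ℝ) < b.totient := by exact_mod_cast Nat.totient_pos.2 hb
  induction J with
  | zero => simp
  | succ J ih =>
    have h1 : 1 ≤ 2 ^ J := Nat.one_le_two_pow
    have h2 : 2 ^ J ≤ 2 ^ (J + 1) := Nat.pow_le_pow_right (by norm_num) (by lia)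
    have hsplit : (Ico 1 (2 ^ (J + 1))).filter (fun k => (b * k + 1).Prime) =
        (Ico 1 (2 ^ J)).filter (fun k => (b * k + 1).Prime) ∪
          (Ico (2 ^ J) (2 ^ (J + 1))).filter (fun k => (b * k + 1).Prime) := by
      rw [← filter_union, Ico_union_Ico_eq_Ico h1 h2]
    rw [hsplit, sum_range_succ, mul_add]
    rw [sum_union (disjoint_filter_filter (Ico_disjoint_Ico_consecutive _ _ _))]
    refine add_le_add ih ?_
    have hbt := brun_titchmarsh hb (M := 2 ^ (J + 1)) (by
      calc 2 = 2 ^ 1 := rfl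
        _ ≤ _ := Nat.pow_le_pow_right (by norm_num) (by lia))
    have hl2 : (0.69 : ℝ) < Real.log 2 := by linarith [Real.log_two_gt_d9]
    calc _ ≤ ∑ k ∈ (Ico (2 ^ J) (2 ^ (J + 1))).filter (fun k => (b * k + 1).Prime),
          1 / ((b : ℝ) * 2 ^ J) := by
          refine sum_le_sum fun k hk => ?_
          have h3 : ((2 ^ J : ℕ) : ℝ) ≤ k := by
            exact_mod_cast (mem_Ico.1 (mem_filter.1 hk).1).1
          push_cast at h3 ⊢
          have : (b : ℝ) * 2 ^ J ≤ b * k := by gcongr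
          gcongr
          linarith
      _ ≤ ((range (2 ^ (J + 1))).filter fun k => (b * k + 1).Prime).card *
            (1 / ((b : ℝ) * 2 ^ J)) := by
          rw [sum_const, nsmul_eq_mul]
          gcongr
          intro k hk
          exact mem_range.2 (mem_Ico.1 hk).2
      _ ≤ (18 * (b / b.totient) * (2 ^ (J + 1) : ℕ) / Real.log (2 ^ (J + 1) : ℕ)) *
            (1 / ((b : ℝ) * 2 ^ J)) := by gcongr
      _ = 36 / Real.log 2 / b.totient * (1 / ((J : ℝ) + 1)) := by
          push_cast
          rw [Real.log_pow, pow_succ]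
          push_cast
          field_simp
          norm_num
      _ ≤ _ := by
          gcongr
          rw [div_le_iff₀ (by linarith)]
          linarith

/-- `∑ 1 / r ≪ log log t / φ(b)` over primes `r ≤ t`, `r ≡ 1 (mod b)`. -/
lemma sum_inv_ap {b : ℕ} (hb : 1 ≤ b) {t : ℝ} (ht : Real.exp (Real.exp 1) < t) :
    ∑ r ∈ (range (⌊t⌋₊ + 1)).filter (fun r : ℕ => r.Prime ∧ (r : ℝ) ≤ t ∧ r ≡ 1 [MOD b]),
      1 / (r : ℝ) ≤ 240 * Real.log (Real.log t) / b.totient := by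
  obtain ⟨ht0, hl, hll⟩ := basics ht
  have hφ : (0 : ℝ) < b.totient := by exact_mod_cast Nat.totient_pos.2 hb
  have hl2 : (0.69 : ℝ) < Real.log 2 := by linarith [Real.log_two_gt_d9]
  set J := ⌊2 * Real.log t⌋₊ + 1 with hJ
  have hJ1 : 2 * Real.log t < J := by push_cast [hJ]; exact Nat.lt_floor_add_one _
  have hJ2 : (J : ℝ) ≤ 3 * Real.log t := by
    have := Nat.floor_le (show 0 ≤ 2 * Real.log t by linarith)
    push_cast [hJ]
    linarith
  have htJ : t < 2 ^ J := by
    rw [← Real.log_lt_log_iff ht0 (by positivity), Real.log_pow]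
    nlinarith
  set T := (range (⌊t⌋₊ + 1)).filter (fun r : ℕ => r.Prime ∧ (r : ℝ) ≤ t ∧ r ≡ 1 [MOD b]) with hT
  have hsub : T ⊆ ((Ico 1 (2 ^ J)).filter fun k => (b * k + 1).Prime).image
      fun k : ℕ => b * k + 1 := by
    intro r hr
    obtain ⟨-, hp, hrt, hrb⟩ := mem_filter.1 hr
    obtain ⟨k, hk, rfl⟩ := exists_eq hp hrb
    refine mem_image.2 ⟨k, mem_filter.2 ⟨mem_Ico.2 ⟨hk, ?_⟩, hp⟩, rfl⟩
    have h1 : b * k + 1 < 2 ^ J := by exact_mod_cast hrt.trans_lt htJ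
    have h2 : k ≤ b * k := Nat.le_mul_of_pos_left k hb
    lia
  have hharm : ∑ j ∈ range J, 1 / ((j : ℝ) + 1) ≤ 4 * Real.log (Real.log t) := by
    have h1 : ∑ j ∈ range J, 1 / ((j : ℝ) + 1) = ∑ k ∈ Icc 1 J, 1 / (k : ℝ) := by
      rw [range_eq_Ico, ← Ico_add_one_right_eq_Icc, ← sum_Ico_add' _ 0 J 1]
      simp
    have h2 : Real.log J ≤ Real.log 3 + Real.log (Real.log t) := by
      rw [← Real.log_mul (by norm_num) (by linarith)]
      exact Real.log_le_log (by linarith) hJ2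
    have h3 : Real.log 3 ≤ 3 - 1 := Real.log_le_sub_one_of_pos (by norm_num)
    have := sum_inv_le J
    rw [h1]
    linarith
  calc _ ≤ ∑ r ∈ ((Ico 1 (2 ^ J)).filter fun k => (b * k + 1).Prime).image
        fun k : ℕ => b * k + 1, 1 / (r : ℝ) :=
        sum_le_sum_of_subset_of_nonneg hsub fun r _ _ => by positivity
    _ = ∑ k ∈ (Ico 1 (2 ^ J)).filter (fun k => (b * k + 1).Prime), 1 / ((b * k + 1 : ℕ) : ℝ) := by
        rw [sum_image]
        intro x _ y _ hxy
        exact Nat.eq_of_mul_eq_mul_left hb (Nat.succ_injective hxy)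
    _ ≤ 60 / b.totient * ∑ j ∈ range J, 1 / ((j : ℝ) + 1) := sum_inv_dyadic hb J
    _ ≤ 60 / b.totient * (4 * Real.log (Real.log t)) := by gcongr
    _ = _ := by ring

/-- Brun–Titchmarsh for `π(t; r, 1)` with prime `r ≤ t ^ (1 / 3)`. -/
lemma pi1_le_of_small {t : ℝ} (ht : Real.exp (Real.exp 1) < t) {r : ℕ} (hr : r.Prime)
    (hrt : (r : ℝ) ≤ t ^ ((1 : ℝ) / 3)) : (pi1 t r : ℝ) ≤ 108 * t / Real.log t * (1 / r) := by
  obtain ⟨ht0, hl, -⟩ := basics ht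
  have hr2 : (2 : ℝ) ≤ r := by exact_mod_cast hr.two_le
  have hlogr : Real.log r ≤ Real.log t / 3 := by
    have := Real.log_le_log (by linarith) hrt
    rw [Real.log_rpow ht0] at this
    linarith
  have hlq : 2 / 3 * Real.log t ≤ Real.log (t / r) := by
    rw [Real.log_div (by linarith) (by linarith)]
    linarith
  have hq1 : 1 ≤ t / r := by
    have h0 : 0 < t / r := by positivity
    by_contra! h
    have := Real.log_neg h0 h
    linarith
  set M := ⌊t / r⌋₊ + 1 with hM
  have hM2 : 2 ≤ M := by
    have := (Nat.one_le_floor_iff (t / r)).2 hq1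
    lia
  have hMle : (M : ℝ) ≤ 2 * (t / r) := by
    have := Nat.floor_le (show 0 ≤ t / r by positivity)
    push_cast [hM]
    linarith
  have hMge : t / r ≤ M := by push_cast [hM]; exact (Nat.lt_floor_add_one _).le
  have hlM : 2 / 3 * Real.log t ≤ Real.log M :=
    hlq.trans (Real.log_le_log (by positivity) hMge)
  have h1 : pi1 t r ≤ ((range M).filter fun k => (r * k + 1).Prime).card :=
    pi1_le _ fun k _ hp h => mem_filter.2
      ⟨mem_range.2 (Nat.lt_succ_of_le (le_floor_of hr.one_le h)), hp⟩
  have hratio : (r : ℝ) / r.totient ≤ 2 := by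
    rw [Nat.totient_prime hr, Nat.cast_sub hr.one_le, Nat.cast_one, div_le_iff₀ (by linarith)]
    linarith
  calc (pi1 t r : ℝ) ≤ ((range M).filter fun k => (r * k + 1).Prime).card := by exact_mod_cast h1
    _ ≤ 18 * (r / r.totient) * M / Real.log M := brun_titchmarsh hr.one_le hM2
    _ ≤ 18 * 2 * (2 * (t / r)) / (2 / 3 * Real.log t) := by gcongr
    _ = _ := by
        field_simp
        norm_num

/-- The number of primes `r > 2`, `r ≡ 1 (mod b)`, with `m r + 1 ≤ t` also prime, for fixed `m`: the
hypotheses on `b` and `m` leave a range of length at least `t ^ (1 / 12)` for the sieve. -/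
lemma pair_bound {b m : ℕ} (hb : 1 ≤ b) (hm : 1 ≤ m) {t : ℝ} (ht : Real.exp (Real.exp 1) < t)
    (hbt : (b : ℝ) ≤ t ^ ((1 : ℝ) / 4)) (hmt : (m : ℝ) ≤ t ^ ((2 : ℝ) / 3)) (T : Finset ℕ)
    (hT : ∀ r ∈ T, r.Prime ∧ 2 < r ∧ r ≡ 1 [MOD b] ∧ (r * m + 1).Prime ∧
      ((r * m + 1 : ℕ) : ℝ) ≤ t) :
    (T.card : ℝ) ≤ 179712 * b * t / ((b.totient : ℝ) ^ 2 * Real.log t ^ 2) * (1 / m.totient) := by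
  obtain ⟨ht0, hl, -⟩ := basics ht
  have hb' : (0 : ℝ) < b := by exact_mod_cast hb
  have hm' : (0 : ℝ) < m := by exact_mod_cast hm
  have hφb : (0 : ℝ) < b.totient := by exact_mod_cast Nat.totient_pos.2 hb
  have hφm : (0 : ℝ) < m.totient := by exact_mod_cast Nat.totient_pos.2 hm
  rcases T.eq_empty_or_nonempty with rfl | ⟨r₀, hr₀⟩
  · rw [card_empty, Nat.cast_zero]; positivity
  -- `r` and `m r + 1` are odd primes, so `m` is even
  have h2 : 2 ∣ b * m := by
    obtain ⟨hp, h2r, -, hq, -⟩ := hT r₀ hr₀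
    have h1 := hp.eq_two_or_odd'.resolve_left h2r.ne'
    have h3 : r₀ * 1 ≤ r₀ * m := Nat.mul_le_mul_left _ hm
    have h4 := hq.eq_two_or_odd'.resolve_left (by lia)
    refine Dvd.dvd.mul_left (even_iff_two_dvd.1 ?_) b
    by_contra hodd
    exact (Nat.not_even_iff_odd.2 h4) ((h1.mul (Nat.not_even_iff_odd.1 hodd)).add_odd odd_one)
  have hlb : Real.log b ≤ Real.log t / 4 := by
    have := Real.log_le_log hb' hbt
    rw [Real.log_rpow ht0] at this
    linarith
  have hlm : Real.log m ≤ 2 * Real.log t / 3 := by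
    have := Real.log_le_log hm' hmt
    rw [Real.log_rpow ht0] at this
    linarith
  have hlq : Real.log t / 12 ≤ Real.log (t / (b * m)) := by
    rw [Real.log_div ht0.ne' (by positivity), Real.log_mul hb'.ne' hm'.ne']
    linarith
  have hq1 : 1 ≤ t / (b * m) := by
    have h0 : 0 < t / (b * m) := by positivity
    by_contra! h
    have := Real.log_neg h0 h
    linarith
  set M := ⌊t / (b * m)⌋₊ + 1 with hM
  have hM2 : 2 ≤ M := by
    have := (Nat.one_le_floor_iff (t / (b * m))).2 hq1
    lia
  have hMle : (M : ℝ) ≤ 2 * (t / (b * m)) := by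
    have := Nat.floor_le (show 0 ≤ t / (b * m) by positivity)
    push_cast [hM]
    linarith
  have hMge : t / (b * m) ≤ M := by push_cast [hM]; exact (Nat.lt_floor_add_one _).le
  have hlM : Real.log t / 12 ≤ Real.log M :=
    hlq.trans (Real.log_le_log (by positivity) hMge)
  have hsub : T ⊆ ((range M).filter fun k => (b * k + 1).Prime ∧
      (m * (b * k + 1) + 1).Prime).image fun k : ℕ => b * k + 1 := by
    intro r hr
    obtain ⟨hp, -, hrb, hq, hqt⟩ := hT r hr
    obtain ⟨k, hk, rfl⟩ := exists_eq hp hrb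
    refine mem_image.2 ⟨k, mem_filter.2 ⟨mem_range.2 (Nat.lt_succ_of_le (Nat.le_floor ?_)), hp,
      by rwa [mul_comm m]⟩, rfl⟩
    rw [le_div_iff₀ (by positivity)]
    push_cast at hqt
    nlinarith
  have hcard := (card_le_card hsub).trans card_image_le
  calc (T.card : ℝ) ≤ _ := Nat.cast_le.2 hcard
    _ ≤ 624 * (((b : ℝ) / b.totient) ^ 2 * (m / m.totient)) * M / Real.log M ^ 2 :=
        pair_count hb hm h2 hM2
    _ ≤ 624 * (((b : ℝ) / b.totient) ^ 2 * (m / m.totient)) * (2 * (t / (b * m))) /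
          (Real.log t / 12) ^ 2 := by gcongr
    _ = _ := by
        field_simp
        norm_num

/-- Primes `p = r m + 1 ≤ t` with `r > t ^ (1 / 3)` have `m < t ^ (2 / 3)`; the sum over `r` and the
sum over `m` are interchanged. -/
lemma part_b1 {b : ℕ} (hb : 1 ≤ b) {t : ℝ} (ht : Real.exp (Real.exp 1) < t)
    (hbt : (b : ℝ) ≤ t ^ ((1 : ℝ) / 4)) :
    ∑ r ∈ (range (⌊t⌋₊ + 1)).filter
        (fun r : ℕ => r.Prime ∧ (r : ℝ) ≤ t ∧ r ≡ 1 [MOD b] ∧ (r : ℝ) > t ^ ((1 : ℝ) / 3)),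
      (pi1 t r : ℝ) ≤ 1078272 * b * t / ((b.totient : ℝ) ^ 2 * Real.log t) := by
  obtain ⟨ht0, hl, -⟩ := basics ht
  have hφb : (0 : ℝ) < b.totient := by exact_mod_cast Nat.totient_pos.2 hb
  have h1t : 1 ≤ t := by
    have := Real.log_le_sub_one_of_pos ht0
    linarith
  have h2t : 2 < t ^ ((1 : ℝ) / 3) := by
    rw [Real.rpow_def_of_pos ht0, ← Real.log_lt_iff_lt_exp (by norm_num)]
    linarith [Real.log_two_lt_d9]
  set T := (range (⌊t⌋₊ + 1)).filter
    (fun r : ℕ => r.Prime ∧ (r : ℝ) ≤ t ∧ r ≡ 1 [MOD b] ∧ (r : ℝ) > t ^ ((1 : ℝ) / 3)) with hT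
  set X := ⌊t ^ ((2 : ℝ) / 3)⌋₊ with hX
  have hX0 : 0 ≤ t ^ ((2 : ℝ) / 3) := by positivity
  let Q : ℕ → ℕ → Prop := fun r m => (r * m + 1).Prime ∧ ((r * m + 1 : ℕ) : ℝ) ≤ t
  classical
  have h1 : ∀ r ∈ T, pi1 t r ≤ ((Icc 1 X).filter (Q r)).card := by
    intro r hr
    obtain ⟨-, hp, -, -, hrt⟩ := mem_filter.1 hr
    refine pi1_le _ fun m hm hq hqt => mem_filter.2 ⟨mem_Icc.2 ⟨hm, Nat.le_floor ?_⟩, hq, hqt⟩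
    have hmul : t ^ ((1 : ℝ) / 3) * t ^ ((2 : ℝ) / 3) = t := by
      rw [← Real.rpow_add ht0]
      norm_num
    push_cast at hqt
    by_contra! hlt
    have hpos : 0 < t ^ ((1 : ℝ) / 3) := by linarith
    nlinarith [mul_lt_mul'' hrt hlt hpos.le hX0]
  have hlX : Real.log X ≤ Real.log t := by
    rcases Nat.eq_zero_or_pos X with h | h
    · rw [h, Nat.cast_zero, Real.log_zero]; linarith
    · refine Real.log_le_log (by exact_mod_cast h) ((Nat.floor_le hX0).trans ?_)
      calc t ^ ((2 : ℝ) / 3) ≤ t ^ (1 : ℝ) := Real.rpow_le_rpow_of_exponent_le h1t (by norm_num)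
        _ = t := Real.rpow_one t
  calc ∑ r ∈ T, (pi1 t r : ℝ) ≤ ∑ r ∈ T, (((Icc 1 X).filter (Q r)).card : ℝ) :=
        sum_le_sum fun r hr => Nat.cast_le.2 (h1 r hr)
    _ = ∑ m ∈ Icc 1 X, ((T.filter fun r => Q r m).card : ℝ) := by
        exact_mod_cast sum_card_bipartiteAbove_eq_sum_card_bipartiteBelow (s := T)
          (t := Icc 1 X) Q
    _ ≤ ∑ m ∈ Icc 1 X, 179712 * b * t / ((b.totient : ℝ) ^ 2 * Real.log t ^ 2) *
          (1 / m.totient) := by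
        refine sum_le_sum fun m hm => ?_
        obtain ⟨hm1, hmX⟩ := mem_Icc.1 hm
        refine pair_bound hb hm1 ht hbt ((Nat.le_floor_iff hX0).1 hmX) _ fun r hr => ?_
        obtain ⟨hr1, hQ⟩ := mem_filter.1 hr
        obtain ⟨-, hp, -, hrb, hrt⟩ := mem_filter.1 hr1
        exact ⟨hp, by exact_mod_cast h2t.trans hrt, hrb, hQ.1, hQ.2⟩
    _ ≤ 179712 * b * t / ((b.totient : ℝ) ^ 2 * Real.log t ^ 2) * (6 * Real.log t) := by
        rw [← mul_sum]
        refine mul_le_mul_of_nonneg_left ((sum_inv_totient_le X).trans ?_) (by positivity)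
        have he : Real.exp 1 ≤ 3 := by linarith [Real.exp_one_lt_d9]
        nlinarith [Real.exp_pos 1]
    _ = _ := by
        field_simp
        norm_num

/-- The full sum, split at `r = t ^ (1 / 3)`. -/
lemma part_b2 : ∃ C : ℝ, 0 < C ∧ ∀ b : ℕ, 1 ≤ b → ∀ t : ℝ, Real.exp (Real.exp 1) < t →
    (b : ℝ) ≤ t ^ ((1 : ℝ) / 4) →
    ∑ r ∈ (range (⌊t⌋₊ + 1)).filter (fun r : ℕ => r.Prime ∧ (r : ℝ) ≤ t ∧ r ≡ 1 [MOD b]),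
      (pi1 t r : ℝ) ≤ C * t * Real.log (Real.log t) / (b.totient * Real.log t) := by
  obtain ⟨C, hC, hφ⟩ := div_totient_le
  refine ⟨25920 + 1078272 * C, by positivity, fun b hb t ht hbt => ?_⟩
  obtain ⟨ht0, hl, hll⟩ := basics ht
  have hφb : (0 : ℝ) < b.totient := by exact_mod_cast Nat.totient_pos.2 hb
  have h1t : 1 ≤ t := by
    have := Real.log_le_sub_one_of_pos ht0
    linarith
  have hbt' : (b : ℝ) ≤ t := hbt.trans <| by
    calc t ^ ((1 : ℝ) / 4) ≤ t ^ (1 : ℝ) := Real.rpow_le_rpow_of_exponent_le h1t (by norm_num)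
      _ = t := Real.rpow_one t
  have hratio := hφ b hb t ht hbt'
  set T := (range (⌊t⌋₊ + 1)).filter (fun r : ℕ => r.Prime ∧ (r : ℝ) ≤ t ∧ r ≡ 1 [MOD b]) with hT
  classical
  rw [← sum_filter_add_sum_filter_not T fun r : ℕ => (r : ℝ) > t ^ ((1 : ℝ) / 3)]
  have hlarge : ∑ r ∈ T.filter fun r : ℕ => (r : ℝ) > t ^ ((1 : ℝ) / 3), (pi1 t r : ℝ) ≤
      1078272 * C * t * Real.log (Real.log t) / (b.totient * Real.log t) := by
    have := part_b1 hb ht hbt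
    rw [hT, filter_filter]
    simp only [and_assoc]
    refine this.trans ?_
    calc _ = 1078272 * t / (b.totient * Real.log t) * (b / b.totient) := by
          field_simp
      _ ≤ 1078272 * t / (b.totient * Real.log t) * (C * Real.log (Real.log t)) := by gcongr
      _ = _ := by ring
  have hsmall : ∑ r ∈ T.filter fun r : ℕ => ¬ (r : ℝ) > t ^ ((1 : ℝ) / 3), (pi1 t r : ℝ) ≤
      25920 * t * Real.log (Real.log t) / (b.totient * Real.log t) := by
    calc _ ≤ ∑ r ∈ T.filter fun r : ℕ => ¬ (r : ℝ) > t ^ ((1 : ℝ) / 3),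
          108 * t / Real.log t * (1 / (r : ℝ)) :=
          sum_le_sum fun r hr => by
            obtain ⟨h1, h2⟩ := mem_filter.1 hr
            exact pi1_le_of_small ht (mem_filter.1 h1).2.1 (not_lt.1 h2)
      _ ≤ ∑ r ∈ T, 108 * t / Real.log t * (1 / (r : ℝ)) :=
          sum_le_sum_of_subset_of_nonneg (filter_subset _ _) fun r _ _ => by positivity
      _ ≤ 108 * t / Real.log t * (240 * Real.log (Real.log t) / b.totient) := by
          rw [← mul_sum]
          exact mul_le_mul_of_nonneg_left (sum_inv_ap hb ht) (by positivity)
      _ = _ := by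
          field_simp
          norm_num
  calc _ ≤ _ := add_le_add hlarge hsmall
    _ = _ := by ring

end SumPi1

/-- Estimates for `Σ_r π(t; r, 1)` over primes `r ≤ t`, `r ≡ 1 (mod b)`:
(a) if `b > t^{1/4}` the sum is `O(t log t / b)`; (b) if `b ≤ t^{1/4}` then the
subsum over `r > t^{1/3}` is `O(b t / (φ(b)² log t))` and the full sum is
`O(t log log t / (φ(b) log t))`. -/
theorem sum_pi1_estimates :
    ∃ C : ℝ, 0 < C ∧ ∀ b : ℕ, 1 ≤ b → ∀ t : ℝ, Real.exp (Real.exp 1) < t →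
      (((b : ℝ) > t ^ ((1 : ℝ)/4) →
        (∑ᶠ (r : ℕ) (_ : r.Prime ∧ (r : ℝ) ≤ t ∧ r ≡ 1 [MOD b]), (pi1 t r : ℝ)) ≤
          C * t * Real.log t / b) ∧
      ((b : ℝ) ≤ t ^ ((1 : ℝ)/4) →
        (∑ᶠ (r : ℕ) (_ : r.Prime ∧ (r : ℝ) ≤ t ∧ r ≡ 1 [MOD b] ∧ (r : ℝ) > t ^ ((1 : ℝ)/3)),
            (pi1 t r : ℝ)) ≤
          C * b * t / ((Nat.totient b : ℝ)^2 * Real.log t) ∧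
        (∑ᶠ (r : ℕ) (_ : r.Prime ∧ (r : ℝ) ≤ t ∧ r ≡ 1 [MOD b]), (pi1 t r : ℝ)) ≤
          C * t * Real.log (Real.log t) / ((Nat.totient b : ℝ) * Real.log t))) := by
  classical
  obtain ⟨C, hC, h2⟩ := SumPi1.part_b2
  refine ⟨1078272 + C, by positivity, fun b hb t ht => ?_⟩
  obtain ⟨ht0, hl, hll⟩ := SumPi1.basics ht
  have hl0 : 0 < Real.log t := by linarith
  have hll0 : 0 < Real.log (Real.log t) := by linarith
  have e1 := SumPi1.finsum_eq (P := fun r : ℕ => r.Prime ∧ (r : ℝ) ≤ t ∧ r ≡ 1 [MOD b])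
    (N := ⌊t⌋₊) (fun r hr => Nat.le_floor hr.2.1) fun r => (pi1 t r : ℝ)
  have e2 := SumPi1.finsum_eq
    (P := fun r : ℕ => r.Prime ∧ (r : ℝ) ≤ t ∧ r ≡ 1 [MOD b] ∧ (r : ℝ) > t ^ ((1 : ℝ)/3))
    (N := ⌊t⌋₊) (fun r hr => Nat.le_floor hr.2.1) fun r => (pi1 t r : ℝ)
  rw [e1, e2]
  refine ⟨fun _ => ?_, fun hbt => ⟨?_, ?_⟩⟩
  · refine le_trans ?_ ((SumPi1.part_a hb ht).trans ?_)
    · exact le_of_eq (by congr)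
    · gcongr
      linarith
  · refine le_trans ?_ ((SumPi1.part_b1 hb ht hbt).trans ?_)
    · exact le_of_eq (by congr)
    · gcongr
      linarith
  · refine le_trans ?_ ((h2 b hb t ht hbt).trans ?_)
    · exact le_of_eq (by congr)
    · gcongr
      linarith
end

section
/- There is a constant C > 0 such that for all real x > e^{e^e}, Σ_{p prime, p ≤ x} h_x(p)²/p ≤ C·(log log x)³·(log log log x)². -/
/-!
Write `L = log log x`, `Y = L²`. For a prime `p`, `h_x(p) = ∑_{r ∣ p - 1} g(r)` with
`g(r) = ∑_{q ≤ Y} v_q(r - 1) log q = ∑_{q ≤ Y, q^k ∣ r - 1} log q`. Both levels are sums over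
divisors of a shifted prime, so everything rests on a Brun–Titchmarsh bound, uniform in `m`:
`∑_{p ≤ x, p ≡ 1 (m)} 1/p ≪ L / φ(m)` (`sum_inv_primes_ap`). Since it has to hold for moduli as
large as `x`, a sieve of the right order of magnitude is needed; Selberg's `Λ²` sieve is carried out
for `{m k + 1 : k ≤ K}` (`prime_count_le`) and summed over the scales `K = 2^(8j)`, `j ≪ log x`,
which turns the saving `1 / log K` into `∑ 1/j ≪ L`.

Expanding the square, `∑_p h_x(p)²/p ≪ L ∑_{r, r'} g(r) g(r') / φ([r, r'])`
(`second_moment`). The terms `r ≠ r'` contribute at most `(∑ g(r)/φ(r))²`, the terms `r = r'` give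
`∑ g(r)²/φ(r)`. Applying the same Brun–Titchmarsh bound to the prime powers `q^k` dividing `r - 1`
yields `∑ g(r)/r ≪ L ∑ log q / q^k ≪ L log Y` and `∑ g(r)²/r ≪ L (log Y)²`, by
`∑_{q ≤ Y} log q / q ≪ log Y` (`mertens_upper`). As `log Y = 2 log L`, the total is
`≪ L (L log L)² = L³ (log L)²`.
-/

/-- The additive function `h_x(n) = Σ_{p ∣ n} Σ_{r ∣ p−1} Σ_{q ≤ (log log x)²}
v_q(r−1) log q`, where `p`, `r`, `q` range over primes. -/
noncomputable def hAux (x : ℝ) (n : ℕ) : ℝ :=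
  ∑ p ∈ n.primeFactors, ∑ r ∈ (p - 1).primeFactors,
    ∑ᶠ (q : ℕ) (_ : q.Prime ∧ (q : ℝ) ≤ (Real.log (Real.log x))^2),
      ((r - 1).factorization q : ℝ) * Real.log q

open Finset

/-! ### Möbius sums, progressions and an Euler product -/

lemma moebius_sum (n : ℕ) :
    ∑ c ∈ n.divisors, ArithmeticFunction.moebius c = if n = 1 then 1 else 0 := by
  have := congrArg (fun f => f n) ArithmeticFunction.moebius_mul_coe_zeta
  simp only [ArithmeticFunction.coe_mul_zeta_apply, ArithmeticFunction.one_apply] at this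
  exact this

/-- Dual Möbius inversion: the sum of `μ (l / d)` over `e ∣ d ∣ l` detects `l = e`. -/
lemma moebius_interval (e l : ℕ) (hl : 0 < l) :
    ∑ d ∈ l.divisors, (if e ∣ d then ArithmeticFunction.moebius (l / d) else 0)
      = if l = e then 1 else 0 := by
  have h1 := Nat.sum_div_divisors l
    (fun c => if e ∣ l / c then ArithmeticFunction.moebius c else 0)
  have h2 : ∑ d ∈ l.divisors, (if e ∣ d then ArithmeticFunction.moebius (l / d) else 0)
      = ∑ d ∈ l.divisors, (if e ∣ l / (l / d) then ArithmeticFunction.moebius (l / d) else 0) := by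
    refine sum_congr rfl fun d hd => ?_
    rw [Nat.div_div_self (Nat.dvd_of_mem_divisors hd) hl.ne']
  rw [h2, h1]
  by_cases he : e ∣ l
  · obtain ⟨t, rfl⟩ := he
    have he0 : 0 < e := Nat.pos_of_mul_pos_right hl
    have ht0 : 0 < t := Nat.pos_of_mul_pos_left hl
    rw [← sum_filter]
    have : (e * t).divisors.filter (fun c => e ∣ e * t / c) = t.divisors := by
      ext c
      simp only [mem_filter, Nat.mem_divisors]
      constructor
      · rintro ⟨⟨⟨u, hu⟩, h0⟩, h⟩
        refine ⟨?_, ht0.ne'⟩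
        have hc : 0 < c := by
          rcases Nat.eq_zero_or_pos c with rfl | h
          · simp at hu; omega
          · exact h
        rw [hu, Nat.mul_div_cancel_left _ hc] at h
        obtain ⟨v, rfl⟩ := h
        refine ⟨v, ?_⟩
        apply Nat.eq_of_mul_eq_mul_left he0
        rw [hu]; ring
      · rintro ⟨⟨u, rfl⟩, _⟩
        have hc : 0 < c := Nat.pos_of_mul_pos_right ht0
        refine ⟨⟨⟨e * u, by ring⟩, hl.ne'⟩, ⟨u, ?_⟩⟩
        rw [show e * (c * u) = c * (e * u) by ring, Nat.mul_div_cancel_left _ hc]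
    rw [this, moebius_sum t]
    refine if_congr ?_ rfl rfl
    constructor
    · rintro rfl; simp
    · intro h; exact Nat.eq_of_mul_eq_mul_left he0 (by simpa using h)
  · rw [if_neg (by rintro rfl; exact he dvd_rfl)]
    refine sum_eq_zero fun c hc => if_neg fun h => he (h.trans ?_)
    exact Nat.div_dvd_of_dvd (Nat.dvd_of_mem_divisors hc)

lemma progression_count (m D K : ℕ) (hD : 0 < D) (hc : D.Coprime m) :
    |(#{k ∈ Ioc 0 K | D ∣ m * k + 1} : ℝ) - K / D| ≤ 1 := by
  obtain ⟨v, hv⟩ : ∃ v : ℕ, D ∣ m * v + 1 := by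
    obtain ⟨u, hu⟩ := Int.mod_coprime hc.symm
    refine ⟨(-u % D).toNat, ?_⟩
    have h1 : ((-u % D).toNat : ℤ) = -u % D :=
      Int.toNat_of_nonneg (Int.emod_nonneg _ (by exact_mod_cast hD.ne'))
    zify
    rw [h1]
    have h2 : (m : ℤ) * (-u % D) + 1 ≡ m * (-u) + 1 [ZMOD D] :=
      ((Int.mod_modEq _ _).mul_left _).add_right _
    have h3 : (m : ℤ) * (-u) + 1 ≡ 0 [ZMOD D] := by
      have := (hu.symm.sub_right (m * u))
      simpa [sub_eq_neg_add] using this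
    exact (Int.modEq_zero_iff_dvd).1 (h2.trans h3)
  have hset : {k ∈ Ioc 0 K | D ∣ m * k + 1} = {k ∈ Ioc 0 K | k ≡ v [MOD D]} := by
    refine filter_congr fun k _ => ?_
    constructor
    · intro h
      have : m * k + 1 ≡ m * v + 1 [MOD D] :=
        ((Nat.modEq_zero_iff_dvd).2 h).trans ((Nat.modEq_zero_iff_dvd).2 hv).symm
      exact Nat.ModEq.cancel_left_of_coprime hc (Nat.ModEq.add_right_cancel' 1 this)
    · intro h
      have : m * k + 1 ≡ m * v + 1 [MOD D] := (h.mul_left m).add_right 1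
      exact (Nat.modEq_zero_iff_dvd).1 (this.trans ((Nat.modEq_zero_iff_dvd).2 hv))
  rw [hset]
  -- the count is `⌊(K - v) / D⌋ - ⌊(0 - v) / D⌋`
  have h := Nat.Ioc_filter_modEq_card 0 K hD v
  have hD' : (0:ℚ) < D := by exact_mod_cast hD
  have e1 : (((K:ℚ) - v) / D) = K / D + (((0:ℕ):ℚ) - v) / D := by push_cast; ring
  have hge : ⌊(((0:ℕ):ℚ) - v) / D⌋ ≤ ⌊((K:ℚ) - v) / D⌋ := by
    apply Int.floor_le_floor; rw [e1]; have : (0:ℚ) ≤ K / D := by positivity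
    linarith
  rw [max_eq_left (by linarith)] at h
  have f1 := Int.floor_le (((K:ℚ) - v) / D)
  have f2 := Int.lt_floor_add_one (((K:ℚ) - v) / D)
  have f3 := Int.floor_le ((((0:ℕ):ℚ) - v) / D)
  have f4 := Int.lt_floor_add_one ((((0:ℕ):ℚ) - v) / D)
  have hq : |(#{k ∈ Ioc 0 K | k ≡ v [MOD D]} : ℚ) - K / D| ≤ 1 := by
    have h' : (#{k ∈ Ioc 0 K | k ≡ v [MOD D]} : ℚ) = 
      (⌊((K:ℚ) - v) / D⌋ : ℚ) - (⌊(((0:ℕ):ℚ) - v) / D⌋ : ℚ) := by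
      exact_mod_cast h
    rw [h', abs_le]
    constructor <;> linarith
  have hr := (Rat.cast_le (K := ℝ)).2 hq
  push_cast at hr
  exact hr

/-- The Euler product for `N / φ(N)` bounds every finite sum of `1 / c` over integers `c` composed
of primes dividing `N`. -/
lemma sum_inv_factored (N : ℕ) (hN : 0 < N) (T : Finset ℕ)
    (hT : ∀ c ∈ T, c ∈ Nat.factoredNumbers N.primeFactors) :
    ∑ c ∈ T, (1 / c : ℝ) ≤ N / N.totient := by
  let f : ℕ →* ℝ := ⟨⟨fun c => (c:ℝ)⁻¹, by simp⟩, by intro a b; simp [mul_comm]⟩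
  have hf : ∀ {p : ℕ}, p.Prime → ‖f p‖ < 1 := by
    intro p hp
    have : (1:ℝ) < p := by exact_mod_cast hp.one_lt
    simp only [f, MonoidHom.coe_mk, OneHom.coe_mk, norm_inv, Real.norm_natCast]
    exact inv_lt_one_of_one_lt₀ this
  obtain ⟨_, h2⟩ := EulerProduct.summable_and_hasSum_factoredNumbers_prod_filter_prime_geometric
    hf N.primeFactors
  have hprod : (∏ p ∈ N.primeFactors with p.Prime, (1 - f p)⁻¹) = N / N.totient := by
    have h3 : (N.totient : ℝ) = N * ∏ p ∈ N.primeFactors, (1 - (p:ℝ)⁻¹) := by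
      have := congrArg (fun q : ℚ => (q : ℝ)) (Nat.totient_eq_mul_prod_factors N)
      push_cast at this
      exact this
    rw [filter_true_of_mem (fun p hp => Nat.prime_of_mem_primeFactors hp), prod_inv_distrib, h3]
    have hN' : (N:ℝ) ≠ 0 := by exact_mod_cast hN.ne'
    rw [div_mul_eq_div_div, div_self hN', one_div]
    rfl
  rw [hprod] at h2
  have h4 := sum_le_hasSum (T.subtype (· ∈ Nat.factoredNumbers N.primeFactors))
    (fun i _ => by simp [f]) h2
  refine le_trans (le_of_eq ?_) h4
  rw [sum_subtype_of_mem (f := fun c => f c) hT]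
  simp [f]

/-! ### Selberg's sieve for primes `≡ 1 (mod m)` -/

/-- The admissible sieve moduli: squarefree `l ≤ z` coprime to `m`. -/
def sieveSet (m z : ℕ) : Finset ℕ := {l ∈ Icc 1 z | Squarefree l ∧ l.Coprime m}

lemma mem_sieveSet {m z l : ℕ} :
    l ∈ sieveSet m z ↔ (1 ≤ l ∧ l ≤ z) ∧ Squarefree l ∧ l.Coprime m := by
  simp [sieveSet]

lemma sieveSet_of_dvd {m z l d : ℕ} (hl : l ∈ sieveSet m z) (hd : d ∣ l) :
    d ∈ sieveSet m z := by
  rw [mem_sieveSet] at *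
  obtain ⟨⟨h1, h2⟩, h3, h4⟩ := hl
  exact ⟨⟨Nat.pos_of_dvd_of_pos hd h1, (Nat.le_of_dvd h1 hd).trans h2⟩,
    h3.squarefree_of_dvd hd, h4.coprime_dvd_left hd⟩

/-- Selberg's normalising sum `G = ∑ 1/φ(l)` over the admissible moduli. -/
noncomputable def sieveMass (m z : ℕ) : ℝ := ∑ l ∈ sieveSet m z, (1 / l.totient : ℝ)

lemma sieveMass_pos (m z : ℕ) (hz : 1 ≤ z) : 0 < sieveMass m z := by
  refine sum_pos (fun l hl => ?_) ⟨1, ?_⟩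
  · have : 0 < l.totient := Nat.totient_pos.2 (mem_sieveSet.1 hl).1.1
    positivity
  · simp [mem_sieveSet, hz]

/-- Each `n ≤ z` is sorted according to the product `l` of its primes not dividing `m`; the
cofactor `n / l` is composed of primes dividing `l * m`, so an Euler product bounds each class. -/
lemma log_le_sieveMass (m z : ℕ) (hm : 0 < m) :
    Real.log z ≤ m / m.totient * sieveMass m z := by
  have h0 : Real.log z ≤ ∑ n ∈ Icc 1 z, (1 / n : ℝ) := by
    rcases Nat.eq_zero_or_pos z with rfl | hz
    · simp
    have h := log_add_one_le_harmonic z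
    rw [harmonic_eq_sum_Icc] at h
    push_cast at h
    simp only [one_div]
    refine le_trans (Real.log_le_log (by exact_mod_cast hz) ?_) h
    linarith
  refine h0.trans ?_
  let f : ℕ → ℕ := fun n => ∏ p ∈ n.primeFactors with ¬ p ∣ m, p
  have hfd : ∀ n, f n ∣ n := fun n =>
    (prod_dvd_prod_of_subset _ _ _ (filter_subset _ _)).trans (Nat.prod_primeFactors_dvd n)
  have hmaps : ∀ n ∈ Icc 1 z, f n ∈ sieveSet m z := by
    intro n hn
    rw [mem_Icc] at hn
    rw [mem_sieveSet]
    refine ⟨⟨Nat.pos_of_dvd_of_pos (hfd n) hn.1, (Nat.le_of_dvd hn.1 (hfd n)).trans hn.2⟩, ?_, ?_⟩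
    · have : Squarefree (∏ p ∈ n.primeFactors, p) := by
        refine squarefree_prod_of_pairwise_isCoprime (fun a ha b hb hab => ?_) fun a ha => ?_
        · exact Nat.coprime_iff_isRelPrime.1 ((Nat.coprime_primes
            (Nat.prime_of_mem_primeFactors ha) (Nat.prime_of_mem_primeFactors hb)).2 hab)
        · exact (Nat.prime_of_mem_primeFactors ha).squarefree
      exact this.squarefree_of_dvd (prod_dvd_prod_of_subset _ _ _ (filter_subset _ _))
    · refine Nat.Coprime.prod_left fun p hp => ?_
      rw [mem_filter] at hp
      exact (Nat.prime_of_mem_primeFactors hp.1).coprime_iff_not_dvd.2 hp.2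
  rw [← sum_fiberwise_of_maps_to hmaps, sieveMass, mul_sum]
  refine sum_le_sum fun l hl => ?_
  obtain ⟨⟨hl1, _⟩, _, hlm⟩ := mem_sieveSet.1 hl
  have hl0 : (0:ℝ) < l := by exact_mod_cast hl1
  set F := {n ∈ Icc 1 z | f n = l} with hF
  have hdvd : ∀ n ∈ F, l * (n / l) = n := by
    intro n hn
    rw [hF, mem_filter] at hn
    exact Nat.mul_div_cancel' (hn.2 ▸ hfd n)
  have hinj : Set.InjOn (fun n => n / l) (F : Set ℕ) := by
    intro a ha b hb hab
    rw [← hdvd a ha, ← hdvd b hb]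
    exact congrArg (l * ·) hab
  have h1 : ∑ n ∈ F, (1 / n : ℝ) = 1 / l * ∑ c ∈ F.image (fun n => n / l), (1 / c : ℝ) := by
    rw [sum_image hinj, mul_sum]
    refine sum_congr rfl fun n hn => ?_
    conv_lhs => rw [← hdvd n hn]
    push_cast
    rw [one_div_mul_one_div]
  have hlm0 : 0 < l * m := Nat.mul_pos hl1 hm
  have h2 : ∑ c ∈ F.image (fun n => n / l), (1 / c : ℝ) ≤ (l * m : ℕ) / (l * m).totient := by
    refine sum_inv_factored _ hlm0 _ fun c hc => ?_
    obtain ⟨n, hn, rfl⟩ := mem_image.1 hc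
    have hn' := hdvd n hn
    rw [hF, mem_filter, mem_Icc] at hn
    obtain ⟨⟨hn1, _⟩, hn3⟩ := hn
    rw [Nat.mem_factoredNumbers_iff_primeFactors_subset]
    have hdn : n / l ∣ n := ⟨l, by rw [mul_comm]; exact hn'.symm⟩
    refine ⟨(Nat.pos_of_dvd_of_pos hdn hn1).ne', fun p hp => ?_⟩
    have hpp := Nat.prime_of_mem_primeFactors hp
    have hpn : p ∣ n := (Nat.dvd_of_mem_primeFactors hp).trans hdn
    rw [Nat.mem_primeFactors]
    refine ⟨hpp, ?_, hlm0.ne'⟩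
    by_cases hpm : p ∣ m
    · exact hpm.mul_left _
    · refine Dvd.dvd.mul_right ?_ m
      rw [← hn3]
      exact dvd_prod_of_mem _ (by simp [hpp, hpn, hpm, (show n ≠ 0 by omega)])
  rw [h1]
  refine (mul_le_mul_of_nonneg_left h2 (by positivity)).trans (le_of_eq ?_)
  rw [Nat.totient_mul hlm]
  have : (0:ℝ) < l.totient := by exact_mod_cast Nat.totient_pos.2 hl1
  have : (0:ℝ) < m.totient := by exact_mod_cast Nat.totient_pos.2 hm
  push_cast
  field_simp

/-- The diagonalised Selberg variables `y_l = μ(l) / (φ(l) G)`. -/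
noncomputable def selbergY (m z l : ℕ) : ℝ :=
  ArithmeticFunction.moebius l / (l.totient * sieveMass m z)

/-- The Selberg weights `λ_d`, recovered from `selbergY` by Möbius inversion over multiples. -/
noncomputable def selbergWt (m z d : ℕ) : ℝ :=
  d * ∑ l ∈ sieveSet m z, if d ∣ l then
    (ArithmeticFunction.moebius (l / d) : ℝ) * selbergY m z l else 0

lemma moebius_sq_real {l : ℕ} (hl : Squarefree l) :
    (ArithmeticFunction.moebius l : ℝ) * ArithmeticFunction.moebius l = 1 := by
  have := ArithmeticFunction.moebius_sq_eq_one_of_squarefree hl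
  rw [sq] at this
  exact_mod_cast this

lemma selbergWt_one (m z : ℕ) (hz : 1 ≤ z) : selbergWt m z 1 = 1 := by
  have hG := sieveMass_pos m z hz
  simp only [selbergWt, selbergY, Nat.cast_one, one_mul, one_dvd, if_true, Nat.div_one]
  have : ∀ l ∈ sieveSet m z, (ArithmeticFunction.moebius l : ℝ) *
      (ArithmeticFunction.moebius l / (l.totient * sieveMass m z)) =
      (1 / l.totient) / sieveMass m z := by
    intro l hl
    rw [← mul_div_assoc, moebius_sq_real (mem_sieveSet.1 hl).2.1, div_div]
  rw [sum_congr rfl this, ← sum_div]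
  exact div_self hG.ne'

lemma abs_selbergWt_le (m z d : ℕ) (hz : 1 ≤ z) : |selbergWt m z d| ≤ d := by
  have hG := sieveMass_pos m z hz
  rw [selbergWt, abs_mul, Nat.abs_cast]
  refine mul_le_of_le_one_right (by positivity) ?_
  refine (abs_sum_le_sum_abs _ _).trans ?_
  have : ∀ l ∈ sieveSet m z, |(if d ∣ l then (ArithmeticFunction.moebius (l / d) : ℝ) *
      selbergY m z l else 0)| ≤ (1 / l.totient) / sieveMass m z := by
    intro l hl
    have hmu : ∀ n, |(ArithmeticFunction.moebius n : ℝ)| ≤ 1 := fun n => by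
      exact_mod_cast ArithmeticFunction.abs_moebius_le_one
    split_ifs
    · rw [abs_mul, selbergY, abs_div, abs_of_nonneg (show 0 ≤ l.totient * sieveMass m z by positivity),
        div_div, ← mul_div_assoc]
      gcongr
      exact mul_le_one₀ (hmu _) (abs_nonneg _) (hmu _)
    · rw [abs_zero]; positivity
  refine (sum_le_sum this).trans ?_
  rw [← sum_div]
  exact (div_self hG.ne').le

lemma sum_selbergWt_multiples (m z e : ℕ) (he : e ∈ sieveSet m z) :
    ∑ d ∈ sieveSet m z, (if e ∣ d then selbergWt m z d / d else 0) = selbergY m z e := by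
  have h1 : ∀ d ∈ sieveSet m z, (if e ∣ d then selbergWt m z d / d else 0) =
      ∑ l ∈ sieveSet m z, (if e ∣ d ∧ d ∣ l then
        (ArithmeticFunction.moebius (l / d) : ℝ) else 0) * selbergY m z l := by
    intro d hd
    have hd0 : (d:ℝ) ≠ 0 := by have := (mem_sieveSet.1 hd).1.1; positivity
    by_cases h : e ∣ d
    · simp only [h, if_true, true_and, selbergWt, ite_mul, zero_mul]
      rw [mul_div_cancel_left₀ _ hd0]
    · simp [h]
  rw [sum_congr rfl h1, sum_comm]
  have h2 : ∀ l ∈ sieveSet m z, ∑ d ∈ sieveSet m z, (if e ∣ d ∧ d ∣ l then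
        (ArithmeticFunction.moebius (l / d) : ℝ) else 0) * selbergY m z l =
      if l = e then selbergY m z l else 0 := by
    intro l hl
    have hl1 := (mem_sieveSet.1 hl).1.1
    rw [← sum_mul]
    have h3 : ∑ d ∈ sieveSet m z, (if e ∣ d ∧ d ∣ l then
        (ArithmeticFunction.moebius (l / d) : ℝ) else 0) =
        ∑ d ∈ l.divisors, (if e ∣ d then (ArithmeticFunction.moebius (l / d) : ℝ) else 0) := by
      have hs : l.divisors ⊆ sieveSet m z := fun d hd =>
        sieveSet_of_dvd hl (Nat.dvd_of_mem_divisors hd)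
      rw [← sum_subset hs]
      · refine sum_congr rfl fun d hd => ?_
        simp [Nat.dvd_of_mem_divisors hd]
      · intro d _ hd
        rw [if_neg]
        rintro ⟨_, h⟩
        exact hd (Nat.mem_divisors.2 ⟨h, by omega⟩)
    have h4 : ∑ d ∈ l.divisors, (if e ∣ d then (ArithmeticFunction.moebius (l / d) : ℝ) else 0) =
        if l = e then 1 else 0 := by
      have := congrArg (fun t : ℤ => (t : ℝ)) (moebius_interval e l hl1)
      push_cast at this
      exact this
    rw [h3, h4, ite_mul, one_mul, zero_mul]
  rw [sum_congr rfl h2, sum_ite_eq' , if_pos he]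

/-- Selberg's diagonalisation: the quadratic form takes the value `1 / G` at the chosen weights. -/
lemma selberg_form (m z : ℕ) (hz : 1 ≤ z) :
    ∑ d ∈ sieveSet m z, ∑ d' ∈ sieveSet m z,
      selbergWt m z d * selbergWt m z d' / (d.lcm d' : ℕ) = 1 / sieveMass m z := by
  have hG := sieveMass_pos m z hz
  set S := sieveSet m z with hS
  have h1 : ∀ d ∈ S, ∀ d' ∈ S, selbergWt m z d * selbergWt m z d' / (d.lcm d' : ℕ) =
      ∑ e ∈ S, e.totient * ((if e ∣ d then selbergWt m z d / d else 0) *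
        (if e ∣ d' then selbergWt m z d' / d' else 0)) := by
    intro d hd d' hd'
    have hd0 : 0 < d := (mem_sieveSet.1 hd).1.1
    have hd0' : 0 < d' := (mem_sieveSet.1 hd').1.1
    have hg : ((d.gcd d' : ℕ) : ℝ) = ∑ e ∈ S, if e ∣ d ∧ e ∣ d' then (e.totient : ℝ) else 0 := by
      rw [← sum_filter]
      have : {e ∈ S | e ∣ d ∧ e ∣ d'} = (d.gcd d').divisors := by
        ext e
        rw [mem_filter, Nat.mem_divisors, Nat.dvd_gcd_iff]
        constructor
        · rintro ⟨_, h⟩; exact ⟨h, (Nat.gcd_pos_of_pos_left _ hd0).ne'⟩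
        · rintro ⟨h, _⟩; exact ⟨sieveSet_of_dvd hd h.1, h⟩
      rw [this]
      exact_mod_cast (Nat.sum_totient (d.gcd d')).symm
    have hl : ((d.gcd d' : ℕ) : ℝ) * (d.lcm d' : ℕ) = d * d' := by
      exact_mod_cast Nat.gcd_mul_lcm d d'
    have hl0 : ((d.lcm d' : ℕ) : ℝ) ≠ 0 := by
      exact_mod_cast (Nat.lcm_pos hd0 hd0').ne'
    have e1 : selbergWt m z d * selbergWt m z d' / (d.lcm d' : ℕ) =
        (d.gcd d' : ℕ) * (selbergWt m z d / d * (selbergWt m z d' / d')) := by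
      have : (d:ℝ) ≠ 0 := by positivity
      have : (d':ℝ) ≠ 0 := by positivity
      rw [div_mul_div_comm, ← hl]
      have : ((d.gcd d' : ℕ) : ℝ) ≠ 0 := by
        exact_mod_cast (Nat.gcd_pos_of_pos_left _ hd0).ne'
      field_simp
    rw [e1, hg, sum_mul]
    refine sum_congr rfl fun e _ => ?_
    by_cases a : e ∣ d <;> by_cases b : e ∣ d' <;> simp [a, b]
  rw [sum_congr rfl fun d hd => sum_congr rfl fun d' hd' => h1 d hd d' hd']
  have h2 : ∑ d ∈ S, ∑ d' ∈ S, ∑ e ∈ S, (e.totient : ℝ) *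
      ((if e ∣ d then selbergWt m z d / d else 0) *
        (if e ∣ d' then selbergWt m z d' / d' else 0)) =
      ∑ e ∈ S, (e.totient : ℝ) * (selbergY m z e * selbergY m z e) := by
    rw [sum_congr rfl fun d _ => sum_comm, sum_comm]
    refine sum_congr rfl fun e he => ?_
    rw [← sum_selbergWt_multiples m z e he, sum_mul_sum, mul_sum]
    refine sum_congr rfl fun d _ => ?_
    rw [mul_sum]
  rw [h2]
  have h3 : ∀ e ∈ S, (e.totient : ℝ) * (selbergY m z e * selbergY m z e) =
      (1 / e.totient) / (sieveMass m z) ^ 2 := by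
    intro e he
    have he' := mem_sieveSet.1 he
    have : (0:ℝ) < e.totient := by exact_mod_cast Nat.totient_pos.2 he'.1.1
    rw [selbergY, div_mul_div_comm, moebius_sq_real he'.2.1]
    field_simp
  rw [sum_congr rfl h3, ← sum_div]
  change sieveMass m z / sieveMass m z ^ 2 = _
  field_simp

/-- Selberg's upper bound sieve for primes `≡ 1 (mod m)`. -/
lemma prime_count_le (m z K : ℕ) (hm : 0 < m) (hz : 1 ≤ z) :
    (#{k ∈ Ioc 0 K | (m * k + 1).Prime} : ℝ) ≤ K / sieveMass m z + z ^ 4 + z := by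
  set S := sieveSet m z with hS
  set w := selbergWt m z with hw
  have h1 : (#{k ∈ Ioc 0 K | (m * k + 1).Prime} : ℝ) ≤
      z + ∑ k ∈ Ioc 0 K, (∑ d ∈ S, if d ∣ m * k + 1 then w d else 0) ^ 2 := by
    have hA : (#{k ∈ Ioc 0 K | (m * k + 1).Prime} : ℝ) ≤
        #{k ∈ Ioc 0 K | (m * k + 1).Prime ∧ z < m * k + 1} + z := by
      have hsub : {k ∈ Ioc 0 K | (m * k + 1).Prime} ⊆
          {k ∈ Ioc 0 K | (m * k + 1).Prime ∧ z < m * k + 1} ∪ Ioc 0 z := by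
        intro k hk
        simp only [mem_union, mem_filter, mem_Ioc] at *
        by_cases h : z < m * k + 1
        · exact Or.inl ⟨hk.1, hk.2, h⟩
        · refine Or.inr ⟨hk.1.1, ?_⟩
          have : k ≤ m * k := Nat.le_mul_of_pos_left k hm
          omega
      have := (card_le_card hsub).trans (card_union_le _ _)
      rw [Nat.card_Ioc, Nat.sub_zero] at this
      exact_mod_cast this
    have hB : (#{k ∈ Ioc 0 K | (m * k + 1).Prime ∧ z < m * k + 1} : ℝ) ≤
        ∑ k ∈ Ioc 0 K, (∑ d ∈ S, if d ∣ m * k + 1 then w d else 0) ^ 2 := by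
      rw [card_filter, Nat.cast_sum]
      refine sum_le_sum fun k _ => ?_
      split_ifs with h
      · have : ∑ d ∈ S, (if d ∣ m * k + 1 then w d else 0) = w 1 := by
          -- a prime exceeding `z` has `1` as its only divisor in `S`
          rw [sum_eq_single 1]
          · simp
          · intro d hd hd1
            rw [if_neg]
            intro hdv
            rcases (Nat.dvd_prime h.1).1 hdv with h' | h'
            · exact hd1 h'
            · have := (mem_sieveSet.1 hd).1.2
              omega
          · intro h1
            exact absurd (mem_sieveSet.2 (by simp [hz])) h1
        rw [this, hw, selbergWt_one m z hz]; norm_num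
      · simpa using sq_nonneg _
    linarith
  have h2 : ∑ k ∈ Ioc 0 K, (∑ d ∈ S, if d ∣ m * k + 1 then w d else 0) ^ 2 =
      ∑ d ∈ S, ∑ d' ∈ S, w d * w d' * #{k ∈ Ioc 0 K | d.lcm d' ∣ m * k + 1} := by
    have : ∀ k ∈ Ioc 0 K, (∑ d ∈ S, if d ∣ m * k + 1 then w d else 0) ^ 2 =
        ∑ d ∈ S, ∑ d' ∈ S, w d * w d' * (if d.lcm d' ∣ m * k + 1 then 1 else 0) := by
      intro k _
      rw [sq, sum_mul_sum]
      refine sum_congr rfl fun d _ => sum_congr rfl fun d' _ => ?_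
      simp only [Nat.lcm_dvd_iff]
      by_cases a : d ∣ m * k + 1 <;> by_cases b : d' ∣ m * k + 1 <;> simp [a, b]
    rw [sum_congr rfl this, sum_comm]
    refine sum_congr rfl fun d _ => ?_
    rw [sum_comm]
    refine sum_congr rfl fun d' _ => ?_
    rw [← mul_sum, card_filter]
    push_cast
    rfl
  have h3 : ∑ d ∈ S, ∑ d' ∈ S, w d * w d' * (#{k ∈ Ioc 0 K | d.lcm d' ∣ m * k + 1} : ℝ) ≤
      ∑ d ∈ S, ∑ d' ∈ S, (K * (w d * w d' / (d.lcm d' : ℕ)) + (z:ℝ) * z) := by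
    refine sum_le_sum fun d hd => sum_le_sum fun d' hd' => ?_
    have hd1 := mem_sieveSet.1 hd
    have hd1' := mem_sieveSet.1 hd'
    have hp := progression_count m (d.lcm d') K (Nat.lcm_pos hd1.1.1 hd1'.1.1)
      (Nat.Coprime.coprime_dvd_left (Nat.lcm_dvd_mul d d') (hd1.2.2.mul_left hd1'.2.2))
    have hww : |w d * w d'| ≤ (z:ℝ) * z := by
      rw [abs_mul]
      have a1 : |w d| ≤ z := (abs_selbergWt_le m z d hz).trans (by exact_mod_cast hd1.1.2)
      have a2 : |w d'| ≤ z := (abs_selbergWt_le m z d' hz).trans (by exact_mod_cast hd1'.1.2)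
      exact mul_le_mul a1 a2 (abs_nonneg _) (by positivity)
    have h5 := le_abs_self (w d * w d' * ((#{k ∈ Ioc 0 K | d.lcm d' ∣ m * k + 1} : ℝ) -
      K / (d.lcm d' : ℕ)))
    rw [abs_mul] at h5
    have h6 := mul_le_mul hww hp (abs_nonneg _) (by positivity)
    have h7 : (K:ℝ) * (w d * w d' / (d.lcm d' : ℕ)) = w d * w d' * (K / (d.lcm d' : ℕ)) := by ring
    rw [h7]
    linarith
  have h4 : ∑ d ∈ S, ∑ d' ∈ S, (K * (w d * w d' / (d.lcm d' : ℕ)) + (z:ℝ) * z) ≤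
      K / sieveMass m z + z ^ 4 := by
    have hc : (#S : ℝ) ≤ z := by
      have : #S ≤ #(Icc 1 z) := card_le_card (filter_subset _ _)
      rw [Nat.card_Icc] at this
      exact_mod_cast this
    simp only [sum_add_distrib, ← mul_sum, sum_const, nsmul_eq_mul]
    rw [selberg_form m z hz, mul_one_div]
    have : (#S : ℝ) * (#S * ((z:ℝ) * z)) ≤ z * (z * (z * z)) := by gcongr
    have e : (z:ℝ) * (z * (z * z)) = z ^ 4 := by ring
    linarith
  linarith

/-! ### Brun–Titchmarsh with logarithmic weights -/

/-- The sieve bound at the scales `k ≤ 2 ^ (8 j)` with level `z = 2 ^ j`, summed over `j`. -/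
lemma sum_inv_prime_dyadic (m J : ℕ) (hm : 0 < m) :
    ∑ k ∈ Ioc 0 (256 ^ J) with (m * k + 1).Prime, (1 / k : ℝ) ≤
      1 + 1024 * (m / m.totient) * ∑ j ∈ Icc 1 J, (1 / j : ℝ) := by
  set c : ℝ := m / m.totient with hc
  have hφ : (0:ℝ) < m.totient := by exact_mod_cast Nat.totient_pos.2 hm
  have hc1 : 1 ≤ c := by
    rw [hc, le_div_iff₀ hφ, one_mul]; exact_mod_cast Nat.totient_le m
  induction J with
  | zero =>
    have : ∑ k ∈ Ioc 0 (256 ^ 0) with (m * k + 1).Prime, (1 / k : ℝ) ≤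
        ∑ k ∈ Ioc (0 : ℕ) (256 ^ 0), (1 / (k : ℝ)) :=
      sum_le_sum_of_subset_of_nonneg (filter_subset _ _) fun _ _ _ => by positivity
    refine (this.trans ?_).trans (le_add_of_nonneg_right (by simp))
    rw [pow_zero, show Ioc 0 1 = {1} from rfl]
    simp
  | succ J ih =>
    have hsplit : {k ∈ Ioc 0 (256 ^ (J + 1)) | (m * k + 1).Prime} =
        {k ∈ Ioc 0 (256 ^ J) | (m * k + 1).Prime} ∪
        {k ∈ Ioc (256 ^ J) (256 ^ (J + 1)) | (m * k + 1).Prime} := by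
      rw [← filter_union, Ioc_union_Ioc_eq_Ioc (by positivity)
        (Nat.pow_le_pow_right (by norm_num) (by omega))]
    have h1 : ∑ k ∈ Ioc (256 ^ J) (256 ^ (J + 1)) with (m * k + 1).Prime, (1 / k : ℝ) ≤
        1024 * c * (1 / (J + 1 : ℕ)) := by
      have h2 : ∑ k ∈ Ioc (256 ^ J) (256 ^ (J + 1)) with (m * k + 1).Prime, (1 / k : ℝ) ≤
          #{k ∈ Ioc 0 (256 ^ (J + 1)) | (m * k + 1).Prime} * (1 / 256 ^ J : ℝ) := by
        rw [← nsmul_eq_mul, ← sum_const]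
        refine (sum_le_sum (g := fun _ => (1 / 256 ^ J : ℝ)) fun k hk => ?_).trans
          (sum_le_sum_of_subset_of_nonneg ?_ fun _ _ _ => by positivity)
        · rw [mem_filter, mem_Ioc] at hk
          have : (256 ^ J : ℝ) ≤ k := by exact_mod_cast hk.1.1.le
          gcongr
        · exact filter_subset_filter _ (Ioc_subset_Ioc_left (by positivity))
      have h3 := prime_count_le m (2 ^ (J + 1)) (256 ^ (J + 1)) hm Nat.one_le_two_pow
      have h4 := log_le_sieveMass m (2 ^ (J + 1)) hm
      have hG := sieveMass_pos m (2 ^ (J + 1)) Nat.one_le_two_pow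
      set G := sieveMass m (2 ^ (J + 1))
      push_cast at h3 h4
      rw [Real.log_pow] at h4
      have hl2 := Real.log_two_gt_d9
      have hJ : (0:ℝ) < (J + 1 : ℕ) := by positivity
      have h5 : 1 / G ≤ 3 / 2 * c / (J + 1 : ℕ) := by
        rw [div_le_div_iff₀ hG hJ]
        have : (J + 1 : ℕ) * (2 / 3 : ℝ) ≤ (J + 1 : ℕ) * Real.log 2 := by
          gcongr; linarith
        nlinarith
      have hz : ((J + 1 : ℕ) : ℝ) ≤ 2 ^ (J + 1) := by
        exact_mod_cast (Nat.lt_two_pow_self).le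
      have hK : (256 : ℝ) ^ (J + 1) = (2 ^ (J + 1)) ^ 8 := by
        rw [← pow_mul, mul_comm, pow_mul]; norm_num
      have hK2 : (256 : ℝ) ^ (J + 1) = 256 * 256 ^ J := by ring
      set z : ℝ := 2 ^ (J + 1) with hzdef
      have hz1 : 1 ≤ z := one_le_pow₀ (by norm_num)
      have h6 : z ^ 4 + z ≤ 2 * z ^ 8 / (J + 1 : ℕ) := by
        rw [le_div_iff₀ hJ]
        have e1 : z ≤ z ^ 4 := by
          calc z = z ^ 1 := (pow_one z).symm
            _ ≤ z ^ 4 := pow_le_pow_right₀ hz1 (by norm_num)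
        have e2 : z ^ 5 ≤ z ^ 8 := pow_le_pow_right₀ hz1 (by norm_num)
        calc (z ^ 4 + z) * (J + 1 : ℕ) ≤ (z ^ 4 + z ^ 4) * z := by gcongr
          _ = 2 * z ^ 5 := by ring
          _ ≤ _ := by linarith
      have h7 : (#{k ∈ Ioc 0 (256 ^ (J + 1)) | (m * k + 1).Prime} : ℝ) ≤
          4 * c * 256 ^ (J + 1) / (J + 1 : ℕ) := by
        have e3 : (256:ℝ) ^ (J + 1) / G ≤ 256 ^ (J + 1) * (3 / 2 * c / (J + 1 : ℕ)) := by
          rw [div_eq_mul_one_div]; gcongr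
        have e4 : 2 * z ^ 8 / (J + 1 : ℕ) ≤ 2 * c * 256 ^ (J + 1) / (J + 1 : ℕ) := by
          rw [hK]; gcongr; nlinarith
        have e5 : 0 ≤ (1 / 2) * c * 256 ^ (J + 1) / (J + 1 : ℕ) := by positivity
        have e6 : (256:ℝ) ^ (J + 1) * (3 / 2 * c / (J + 1 : ℕ)) + 2 * c * 256 ^ (J + 1) / (J + 1 : ℕ)
          + (1 / 2) * c * 256 ^ (J + 1) / (J + 1 : ℕ) = 4 * c * 256 ^ (J + 1) / (J + 1 : ℕ) := by
          ring
        linarith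
      refine h2.trans ((mul_le_mul_of_nonneg_right h7 (by positivity)).trans (le_of_eq ?_))
      rw [hK2]
      field_simp
      ring
    rw [hsplit, sum_Icc_succ_top (by omega), mul_add, ← add_assoc]
    exact (sum_union_inter (s₁ := {k ∈ Ioc 0 (256 ^ J) | (m * k + 1).Prime})
      (s₂ := {k ∈ Ioc (256 ^ J) (256 ^ (J + 1)) | (m * k + 1).Prime})
      (f := fun k : ℕ => (1 / k : ℝ)) ▸ le_add_of_nonneg_right
        (sum_nonneg fun _ _ => by positivity)).trans (add_le_add ih h1)

/-- The primes up to `X`. -/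
def primesTo (X : ℕ) : Finset ℕ := {p ∈ Icc 1 X | p.Prime}

lemma mem_primesTo {X p : ℕ} : p ∈ primesTo X ↔ p.Prime ∧ p ≤ X := by
  simp only [primesTo, mem_filter, mem_Icc]
  exact ⟨fun h => ⟨h.2, h.1.2⟩, fun h => ⟨⟨h.1.one_le, h.2⟩, h.1⟩⟩

/-- Brun–Titchmarsh in logarithmic form, uniform in the modulus. -/
lemma sum_inv_primes_ap (x : ℝ) (hL : 1 ≤ Real.log (Real.log x)) (hx : 1 < x) (m : ℕ)
    (hm : 0 < m) :
    ∑ p ∈ primesTo ⌊x⌋₊ with m ∣ p - 1, (1 / p : ℝ) ≤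
      4096 * Real.log (Real.log x) / m.totient := by
  set L := Real.log (Real.log x) with hLdef
  have hlx : 1 < Real.log x := by
    by_contra h
    have := Real.log_nonpos (Real.log_nonneg hx.le) (not_lt.1 h)
    linarith
  set J := ⌈Real.log x⌉₊ with hJ
  have hJ1 : 1 ≤ J := Nat.one_le_ceil_iff.2 (by linarith)
  have hJle : (J:ℝ) ≤ 2 * Real.log x := by
    have := Nat.ceil_lt_add_one (show 0 ≤ Real.log x by linarith)
    linarith
  have hxJ : x ≤ 256 ^ J := by
    have h1 : Real.log x ≤ J := Nat.le_ceil _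
    calc x = Real.exp (Real.log x) := (Real.exp_log (by linarith)).symm
      _ ≤ Real.exp J := Real.exp_le_exp.2 h1
      _ = Real.exp 1 ^ J := by rw [← Real.exp_nat_mul, mul_one]
      _ ≤ 256 ^ J := by
        gcongr
        have := Real.exp_one_lt_d9
        linarith
  have hφ : (0:ℝ) < m.totient := by exact_mod_cast Nat.totient_pos.2 hm
  have hm' : (0:ℝ) < m := by exact_mod_cast hm
  have hmφ : (m.totient : ℝ) ≤ m := by exact_mod_cast Nat.totient_le m
  set F := {p ∈ primesTo ⌊x⌋₊ | m ∣ p - 1} with hF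
  have hmem : ∀ p ∈ F, m * ((p - 1) / m) + 1 = p ∧ p.Prime ∧ (p:ℝ) ≤ x := by
    intro p hp
    rw [hF, mem_filter, mem_primesTo] at hp
    have := hp.1.1.one_lt
    rw [Nat.mul_div_cancel' hp.2]
    exact ⟨by omega, hp.1.1, (Nat.cast_le.2 hp.1.2).trans (Nat.floor_le (by linarith))⟩
  have h1 : ∑ p ∈ F, (1 / p : ℝ) ≤ ∑ p ∈ F, 1 / m * (1 / ((p - 1) / m : ℕ) : ℝ) := by
    refine sum_le_sum fun p hp => ?_
    obtain ⟨a, b, _⟩ := hmem p hp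
    set k := (p - 1) / m
    have hk : 0 < k := by
      rcases Nat.eq_zero_or_pos k with h | h
      · rw [h] at a; have := b.one_lt; omega
      · exact h
    have hk' : (0:ℝ) < k := by exact_mod_cast hk
    rw [one_div_mul_one_div]
    apply one_div_le_one_div_of_le (by positivity)
    rw [← a]; push_cast; linarith
  have h2 : ∑ p ∈ F, (1 / ((p - 1) / m : ℕ) : ℝ) ≤
      ∑ k ∈ Ioc 0 (256 ^ J) with (m * k + 1).Prime, (1 / k : ℝ) := by
    rw [← sum_image (f := fun k : ℕ => (1 / k : ℝ)) (g := fun p => (p - 1) / m)]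
    · refine sum_le_sum_of_subset_of_nonneg ?_ fun _ _ _ => by positivity
      intro k hk
      obtain ⟨p, hp, rfl⟩ := mem_image.1 hk
      obtain ⟨a, b, c⟩ := hmem p hp
      rw [mem_filter, mem_Ioc, a]
      refine ⟨⟨?_, ?_⟩, b⟩
      · rcases Nat.eq_zero_or_pos ((p - 1) / m) with h | h
        · rw [h] at a; have := b.one_lt; omega
        · exact h
      · have h3 : p ≤ 256 ^ J := by exact_mod_cast c.trans hxJ
        exact (Nat.div_le_self _ _).trans (by omega)
    · intro p hp q hq hpq
      rw [← (hmem p hp).1, ← (hmem q hq).1]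
      exact congrArg (fun t => m * t + 1) hpq
  have h3 := sum_inv_prime_dyadic m J hm
  have h4 : ∑ j ∈ Icc 1 J, (1 / j : ℝ) ≤ 1 + Real.log J := by
    have := harmonic_le_one_add_log J
    rw [harmonic_eq_sum_Icc] at this
    push_cast at this
    simpa [one_div] using this
  have h5 : Real.log J ≤ 1 + L := by
    have a : Real.log J ≤ Real.log (2 * Real.log x) :=
      Real.log_le_log (by exact_mod_cast hJ1) hJle
    rw [Real.log_mul (by norm_num) (by linarith)] at a
    have := Real.log_two_lt_d9
    linarith
  rw [← mul_sum] at h1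
  set c : ℝ := m / m.totient with hc
  have hc1 : 1 ≤ c := by rw [hc, le_div_iff₀ hφ, one_mul]; exact hmφ
  have h6 : 1 + 1024 * c * ∑ j ∈ Icc 1 J, (1 / j : ℝ) ≤ 4096 * c * L := by
    have : 1024 * c * ∑ j ∈ Icc 1 J, (1 / j : ℝ) ≤ 1024 * c * (2 + L) := by
      gcongr; linarith
    nlinarith
  have h7 : (1:ℝ) / m * ∑ p ∈ F, (1 / ((p - 1) / m : ℕ) : ℝ) ≤ 1 / m * (4096 * c * L) := by
    gcongr
    exact h2.trans (h3.trans h6)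
  refine h1.trans (h7.trans (le_of_eq ?_))
  rw [hc]
  field_simp

/-! ### Moments of divisor sums over shifted primes -/

/-- The function `p ↦ ∑ a(i)` over those `i ∈ R` with `N i ∣ p - 1`; both `h_x` at primes and its
inner sum have this shape. -/
noncomputable def shiftSum {ι : Type*} (R : Finset ι) (N : ι → ℕ) (a : ι → ℝ) (p : ℕ) : ℝ :=
  ∑ i ∈ R, if N i ∣ p - 1 then a i else 0

lemma shiftSum_nonneg {ι : Type*} (R : Finset ι) (N : ι → ℕ) (a : ι → ℝ)
    (ha : ∀ i ∈ R, 0 ≤ a i) (p : ℕ) : 0 ≤ shiftSum R N a p :=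
  sum_nonneg fun i hi => by split_ifs <;> [exact ha i hi; rfl]

/-- First moment of a `shiftSum` over a set of primes satisfying a Brun–Titchmarsh bound. -/
lemma first_moment {ι : Type*} (P : Finset ℕ) (B : ℝ)
    (hP : ∀ m, 0 < m → ∑ p ∈ P with m ∣ p - 1, (1 / p : ℝ) ≤ B / m.totient)
    (R : Finset ι) (N : ι → ℕ) (a : ι → ℝ) (hN : ∀ i ∈ R, 0 < N i) (ha : ∀ i ∈ R, 0 ≤ a i) :
    ∑ p ∈ P, shiftSum R N a p / p ≤ B * ∑ i ∈ R, a i / (N i).totient := by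
  have h : ∑ p ∈ P, shiftSum R N a p / p =
      ∑ i ∈ R, a i * ∑ p ∈ P with N i ∣ p - 1, (1 / p : ℝ) := by
    simp only [shiftSum, sum_div, mul_sum, sum_filter]
    rw [sum_comm]
    refine sum_congr rfl fun i _ => sum_congr rfl fun p _ => ?_
    split_ifs <;> ring
  rw [h, mul_sum]
  refine sum_le_sum fun i hi => ?_
  calc _ ≤ a i * (B / (N i).totient) := mul_le_mul_of_nonneg_left (hP _ (hN i hi)) (ha i hi)
    _ = _ := by ring

/-- Second moment of a `shiftSum` over a set of primes satisfying a Brun–Titchmarsh bound. -/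
lemma second_moment {ι : Type*} (P : Finset ℕ) (B : ℝ)
    (hP : ∀ m, 0 < m → ∑ p ∈ P with m ∣ p - 1, (1 / p : ℝ) ≤ B / m.totient)
    (R : Finset ι) (N : ι → ℕ) (a : ι → ℝ) (hN : ∀ i ∈ R, 0 < N i) (ha : ∀ i ∈ R, 0 ≤ a i) :
    ∑ p ∈ P, shiftSum R N a p ^ 2 / p ≤
      B * ∑ i ∈ R, ∑ j ∈ R, a i * a j / ((N i).lcm (N j)).totient := by
  have h := first_moment P B hP (R ×ˢ R) (fun ij => (N ij.1).lcm (N ij.2))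
    (fun ij => a ij.1 * a ij.2)
    (fun ij h => Nat.lcm_pos (hN _ (mem_product.1 h).1) (hN _ (mem_product.1 h).2))
    (fun ij h => mul_nonneg (ha _ (mem_product.1 h).1) (ha _ (mem_product.1 h).2))
  rw [sum_product] at h
  refine le_trans (le_of_eq ?_) h
  refine sum_congr rfl fun p _ => ?_
  congr 1
  rw [shiftSum, shiftSum, sq, sum_mul_sum, sum_product]
  refine sum_congr rfl fun i _ => sum_congr rfl fun j _ => ?_
  simp only [Nat.lcm_dvd_iff]
  by_cases u : N i ∣ p - 1 <;> by_cases v : N j ∣ p - 1 <;> simp [u, v]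

/-! ### Sums over small primes and their powers -/

/-- An upper bound of Mertens type, from `log Y! ≥ ∑ ⌊Y / q⌋ log q`. -/
lemma mertens_upper (Y : ℕ) (hY : 1 ≤ Y) :
    ∑ q ∈ primesTo Y, Real.log q / q ≤ 2 * Real.log Y := by
  have hY0 : (0:ℝ) < Y := by exact_mod_cast hY
  have hlog : ∀ n : ℕ, 0 ≤ Real.log n := fun n => Real.log_natCast_nonneg n
  have h1 : ∑ q ∈ primesTo Y, Real.log q * (Y / q : ℕ) ≤ ∑ n ∈ Ioc 0 Y, Real.log n := by
    have e : ∑ q ∈ primesTo Y, Real.log q * (Y / q : ℕ) =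
        ∑ n ∈ Ioc 0 Y, ∑ q ∈ primesTo Y with q ∣ n, Real.log q := by
      have : ∀ q ∈ primesTo Y, Real.log q * (Y / q : ℕ) =
          ∑ n ∈ Ioc 0 Y, if q ∣ n then Real.log q else 0 := by
        intro q _
        rw [← sum_filter, sum_const, Nat.Ioc_filter_dvd_card_eq_div, nsmul_eq_mul, mul_comm]
      rw [sum_congr rfl this, sum_comm]
      exact sum_congr rfl fun n _ => (sum_filter _ _).symm
    rw [e]
    refine sum_le_sum fun n hn => ?_
    rw [mem_Ioc] at hn
    have hsub : {q ∈ primesTo Y | q ∣ n} ⊆ n.primeFactors := by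
      intro q hq
      rw [mem_filter, mem_primesTo] at hq
      exact Nat.mem_primeFactors.2 ⟨hq.1.1, hq.2, by omega⟩
    refine (sum_le_sum_of_subset_of_nonneg hsub fun _ _ _ => hlog _).trans ?_
    rw [← Real.log_prod fun q hq => by
      exact_mod_cast (Nat.prime_of_mem_primeFactors hq).ne_zero]
    rw [← Nat.cast_prod]
    refine Real.log_le_log ?_ ?_
    · exact_mod_cast prod_pos fun q hq => (Nat.prime_of_mem_primeFactors hq).pos
    · exact_mod_cast Nat.le_of_dvd hn.1 (Nat.prod_primeFactors_dvd n)
  have h2 : ∑ n ∈ Ioc 0 Y, Real.log n ≤ Y * Real.log Y := by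
    have := sum_le_card_nsmul (Ioc 0 Y) (fun n : ℕ => Real.log n) (Real.log Y) fun n hn => by
      rw [mem_Ioc] at hn
      exact Real.log_le_log (by exact_mod_cast hn.1) (by exact_mod_cast hn.2)
    simpa using this
  have h3 : ∑ q ∈ primesTo Y, Real.log q / q ≤
      ∑ q ∈ primesTo Y, 2 / Y * (Real.log q * (Y / q : ℕ)) := by
    refine sum_le_sum fun q hq => ?_
    rw [mem_primesTo] at hq
    have hq0 : (0:ℝ) < q := by exact_mod_cast hq.1.pos
    have hk : 1 ≤ Y / q := (Nat.one_le_div_iff hq.1.pos).2 hq.2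
    -- `q ≤ Y`, so passing to the integer part loses at most a factor `2`
    have h4 : (Y:ℝ) ≤ 2 * (Y / q : ℕ) * q := by
      have a := Nat.lt_div_mul_add hq.1.pos (a := Y)
      have b : q ≤ Y / q * q := Nat.le_mul_of_pos_left q hk
      have : Y ≤ 2 * (Y / q) * q := by rw [mul_assoc]; omega
      exact_mod_cast this
    have h5 : 1 / (q:ℝ) ≤ 2 / Y * (Y / q : ℕ) := by
      rw [div_mul_eq_mul_div, div_le_div_iff₀ hq0 hY0]; linarith
    calc Real.log q / q = Real.log q * (1 / q) := by ring
      _ ≤ Real.log q * (2 / Y * (Y / q : ℕ)) := mul_le_mul_of_nonneg_left h5 (hlog q)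
      _ = _ := by ring
  rw [← mul_sum] at h3
  refine h3.trans ((mul_le_mul_of_nonneg_left (h1.trans h2) (by positivity)).trans (le_of_eq ?_))
  field_simp

lemma sum_inv_pow_le (s : ℝ) (hs : 4 / 3 ≤ s) (X : ℕ) :
    ∑ k ∈ Icc 1 X, 1 / s ^ k ≤ 4 / s := by
  have hs0 : 0 < s := by linarith
  have key : ∀ X : ℕ, ∑ k ∈ Icc 1 X, 1 / s ^ k ≤ 4 / s - 4 / s ^ (X + 1) := by
    intro X
    induction X with
    | zero => simp
    | succ X ih =>
      rw [sum_Icc_succ_top (by omega)]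
      have h : 4 / s ^ (X + 1 + 1) ≤ 3 / s ^ (X + 1) := by
        rw [div_le_div_iff₀ (by positivity) (by positivity), pow_succ s (X + 1)]
        have : 0 < s ^ (X + 1) := by positivity
        nlinarith
      have e : 1 / s ^ (X + 1) + 3 / s ^ (X + 1) = 4 / s ^ (X + 1) := by ring
      linarith
  have := key X
  have h : 0 ≤ 4 / s ^ (X + 1) := by positivity
  linarith

lemma inv_totient_pow_le (q k : ℕ) (hq : q.Prime) (hk : 0 < k) :
    (1 / (q ^ k).totient : ℝ) ≤ 2 / q ^ k := by
  have h : (q ^ k : ℕ) ≤ 2 * (q ^ k).totient := by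
    rw [Nat.totient_prime_pow hq hk]
    obtain ⟨j, rfl⟩ : ∃ j, k = j + 1 := ⟨k - 1, by omega⟩
    have := hq.two_le
    rw [Nat.add_sub_cancel, pow_succ]
    calc q ^ j * q ≤ q ^ j * (2 * (q - 1)) := by gcongr; omega
      _ = _ := by ring
  have hpos : (0:ℝ) < (q ^ k).totient := by
    exact_mod_cast Nat.totient_pos.2 (pow_pos hq.pos k)
  have hpos' : (0:ℝ) < q ^ k := by have := hq.pos; positivity
  rw [div_le_div_iff₀ hpos hpos', one_mul]
  exact_mod_cast h

/-- The prime powers `q ^ k`, `q ≤ Y`, `k ≤ X`, indexed by `(q, k)`. -/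
def primePowIdx (Y X : ℕ) : Finset (ℕ × ℕ) := primesTo Y ×ˢ Icc 1 X

/-- `∑_{q ≤ Y} v_q(r - 1) log q`, written as a sum over prime powers dividing `r - 1`
(see `smoothLog_eq`). -/
noncomputable def smoothLog (Y X r : ℕ) : ℝ :=
  shiftSum (primePowIdx Y X) (fun i => i.1 ^ i.2) (fun i => Real.log i.1) r

lemma smoothLog_eq (Y X r : ℕ) (hr : r.Prime) (hrX : r ≤ X) :
    smoothLog Y X r = ∑ q ∈ primesTo Y, ((r - 1).factorization q : ℝ) * Real.log q := by
  rw [smoothLog, shiftSum, primePowIdx, sum_product]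
  refine sum_congr rfl fun q hq => ?_
  have hq' := (mem_primesTo.1 hq).1
  have h1 : 0 < r - 1 := by have := hr.one_lt; omega
  have h2 : r - 1 < q ^ (X + 1) := by
    have := Nat.lt_pow_self (n := X + 1) hq'.one_lt
    omega
  rw [Nat.factorization_eq_card_pow_dvd_of_lt hq' h1 h2]
  simp only
  rw [← sum_filter, sum_const, nsmul_eq_mul]
  rfl

lemma primePow_first (Y X : ℕ) (hY : 1 ≤ Y) :
    ∑ i ∈ primePowIdx Y X, Real.log i.1 / (i.1 ^ i.2).totient ≤ 16 * Real.log Y := by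
  rw [primePowIdx, sum_product]
  have h : ∀ q ∈ primesTo Y, ∑ k ∈ Icc 1 X, Real.log q / (q ^ k).totient ≤
      8 * (Real.log q / q) := by
    intro q hq
    have hq' := (mem_primesTo.1 hq).1
    have hq2 : (2:ℝ) ≤ q := by exact_mod_cast hq'.two_le
    have hl : 0 ≤ Real.log q := Real.log_natCast_nonneg q
    calc ∑ k ∈ Icc 1 X, Real.log q / (q ^ k).totient
        ≤ ∑ k ∈ Icc 1 X, Real.log q * 2 * (1 / (q:ℝ) ^ k) := by
          refine sum_le_sum fun k hk => ?_
          have := inv_totient_pow_le q k hq' (mem_Icc.1 hk).1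
          calc Real.log q / (q ^ k).totient = Real.log q * (1 / (q ^ k).totient) := by ring
            _ ≤ Real.log q * (2 / q ^ k) := mul_le_mul_of_nonneg_left this hl
            _ = _ := by ring
      _ ≤ Real.log q * 2 * (4 / q) := by
          rw [← mul_sum]
          exact mul_le_mul_of_nonneg_left (sum_inv_pow_le q (by linarith) X) (by positivity)
      _ = _ := by ring
  refine (sum_le_sum h).trans ?_
  rw [← mul_sum]
  have := mertens_upper Y hY
  linarith

/-- For powers of the same prime, `1 / q ^ max(j, k) ≤ √q ^ (-j) * √q ^ (-k)` decouples the sum. -/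
lemma primePow_same (q X : ℕ) (hq : q.Prime) :
    ∑ j ∈ Icc 1 X, ∑ k ∈ Icc 1 X, (1 / ((q ^ j).lcm (q ^ k)).totient : ℝ) ≤ 32 / q := by
  have hq2 : (2:ℝ) ≤ q := by exact_mod_cast hq.two_le
  set s := Real.sqrt q with hs
  have hss : s * s = q := Real.mul_self_sqrt (by linarith)
  have hs43 : 4 / 3 ≤ s := by
    rw [hs]; apply Real.le_sqrt_of_sq_le; norm_num; linarith
  have h1 : ∀ j ∈ Icc 1 X, ∀ k ∈ Icc 1 X, (1 / ((q ^ j).lcm (q ^ k)).totient : ℝ) ≤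
      2 * ((1 / s ^ j) * (1 / s ^ k)) := by
    intro j hj k hk
    rw [mem_Icc] at hj hk
    have e : (q ^ j).lcm (q ^ k) = q ^ max j k := by
      rcases le_total j k with h | h
      · rw [max_eq_right h, Nat.lcm_eq_right (pow_dvd_pow q h)]
      · rw [max_eq_left h, Nat.lcm_eq_left (pow_dvd_pow q h)]
    rw [e]
    refine (inv_totient_pow_le q _ hq (by omega)).trans ?_
    have : s ^ j * s ^ k ≤ (q:ℝ) ^ max j k := by
      rw [← hss, ← sq, ← pow_mul, ← pow_add]
      exact pow_le_pow_right₀ (by linarith) (by omega)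
    rw [one_div_mul_one_div, div_eq_mul_one_div]
    gcongr
  refine (sum_le_sum fun j hj => sum_le_sum fun k hk => h1 j hj k hk).trans ?_
  have h2 := sum_inv_pow_le s hs43 X
  simp only [← mul_sum]
  rw [← sum_mul]
  have h3 : 0 ≤ ∑ k ∈ Icc 1 X, 1 / s ^ k := sum_nonneg fun _ _ => by positivity
  calc 2 * ((∑ k ∈ Icc 1 X, 1 / s ^ k) * ∑ k ∈ Icc 1 X, 1 / s ^ k) ≤ 2 * (4 / s * (4 / s)) := by
        gcongr
    _ = 32 / q := by rw [div_mul_div_comm, hss]; ring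

lemma primePow_second (Y X : ℕ) (hY : 1 ≤ Y) :
    ∑ i ∈ primePowIdx Y X, ∑ j ∈ primePowIdx Y X,
      Real.log i.1 * Real.log j.1 / ((i.1 ^ i.2).lcm (j.1 ^ j.2)).totient ≤
        320 * Real.log Y ^ 2 := by
  have hlog : ∀ n : ℕ, 0 ≤ Real.log n := fun n => Real.log_natCast_nonneg n
  set R := primePowIdx Y X with hR
  set t : ℕ × ℕ → ℝ := fun i => Real.log i.1 / (i.1 ^ i.2).totient with ht
  -- terms with distinct primes factor, those with the same prime are kept separately
  have h1 : ∀ i ∈ R, ∀ j ∈ R,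
      Real.log i.1 * Real.log j.1 / ((i.1 ^ i.2).lcm (j.1 ^ j.2)).totient ≤
      t i * t j + if i.1 = j.1 then
        Real.log i.1 ^ 2 * (1 / ((i.1 ^ i.2).lcm (i.1 ^ j.2)).totient) else 0 := by
    intro i hi j hj
    rw [hR, primePowIdx, mem_product, mem_primesTo] at hi hj
    have h0 : ∀ i : ℕ × ℕ, 0 ≤ t i := fun i => div_nonneg (hlog _) (by positivity)
    by_cases h : i.1 = j.1
    · rw [if_pos h, ← h]
      have := mul_nonneg (h0 i) (h0 j)
      have e : Real.log i.1 * Real.log i.1 / ((i.1 ^ i.2).lcm (i.1 ^ j.2)).totient =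
        Real.log i.1 ^ 2 * (1 / ((i.1 ^ i.2).lcm (i.1 ^ j.2)).totient) := by ring
      linarith
    · rw [if_neg h, add_zero]
      have hc : (i.1 ^ i.2).Coprime (j.1 ^ j.2) :=
        Nat.Coprime.pow _ _ ((Nat.coprime_primes hi.1.1 hj.1.1).2 h)
      rw [hc.lcm_eq_mul, Nat.totient_mul hc, ht]
      push_cast
      rw [div_mul_div_comm]
  refine (sum_le_sum fun i hi => sum_le_sum fun j hj => h1 i hi j hj).trans ?_
  simp only [sum_add_distrib]
  have h2 : ∑ i ∈ R, ∑ j ∈ R, t i * t j ≤ 256 * Real.log Y ^ 2 := by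
    rw [← sum_mul_sum]
    have a : ∑ i ∈ R, t i ≤ 16 * Real.log Y := primePow_first Y X hY
    have b : 0 ≤ ∑ i ∈ R, t i := sum_nonneg fun i _ => div_nonneg (hlog _) (by positivity)
    nlinarith
  have h3 : ∑ i ∈ R, ∑ j ∈ R, (if i.1 = j.1 then
        Real.log i.1 ^ 2 * (1 / ((i.1 ^ i.2).lcm (i.1 ^ j.2)).totient) else 0) ≤
      64 * Real.log Y ^ 2 := by
    have e : ∑ i ∈ R, ∑ j ∈ R, (if i.1 = j.1 then
        Real.log i.1 ^ 2 * (1 / ((i.1 ^ i.2).lcm (i.1 ^ j.2)).totient : ℝ) else 0) =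
        ∑ q ∈ primesTo Y, Real.log q ^ 2 *
          ∑ j ∈ Icc 1 X, ∑ k ∈ Icc 1 X, (1 / ((q ^ j).lcm (q ^ k)).totient : ℝ) := by
      rw [hR, primePowIdx, sum_product]
      refine sum_congr rfl fun q hq => ?_
      rw [mul_sum]
      refine sum_congr rfl fun j _ => ?_
      rw [sum_product, sum_eq_single_of_mem q hq]
      · simp [mul_sum]
      · intro q' _ hne
        exact sum_eq_zero fun k _ => if_neg (Ne.symm hne)
    rw [e]
    have h4 : ∀ q ∈ primesTo Y, Real.log q ^ 2 *
          ∑ j ∈ Icc 1 X, ∑ k ∈ Icc 1 X, (1 / ((q ^ j).lcm (q ^ k)).totient : ℝ) ≤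
        32 * Real.log Y * (Real.log q / q) := by
      intro q hq
      rw [mem_primesTo] at hq
      have a := primePow_same q X hq.1
      have b : Real.log q ≤ Real.log Y :=
        Real.log_le_log (by exact_mod_cast hq.1.pos) (by exact_mod_cast hq.2)
      have hq0 : (0:ℝ) ≤ 32 / q := by positivity
      calc _ ≤ Real.log q ^ 2 * (32 / q) := mul_le_mul_of_nonneg_left a (by positivity)
        _ = Real.log q * (Real.log q * (32 / q)) := by ring
        _ ≤ Real.log Y * (Real.log q * (32 / q)) :=
            mul_le_mul_of_nonneg_right b (mul_nonneg (hlog q) hq0)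
        _ = _ := by ring
    refine (sum_le_sum h4).trans ?_
    rw [← mul_sum]
    have := mertens_upper Y hY
    nlinarith [hlog Y]
  linarith

/-! ### The second moment of `h_x` -/

lemma inv_totient_prime_le (r : ℕ) (hr : r.Prime) : (1 / r.totient : ℝ) ≤ 2 / r := by
  have := inv_totient_pow_le r 1 hr one_pos
  simpa using this

/-- The second moment of `h_x` over primes, with the Brun–Titchmarsh constant `B` as parameter. -/
lemma moment_bound (X Y : ℕ) (hY : 1 ≤ Y) (B : ℝ) (hB : 0 ≤ B)
    (hP : ∀ m, 0 < m → ∑ p ∈ primesTo X with m ∣ p - 1, (1 / p : ℝ) ≤ B / m.totient) :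
    ∑ p ∈ primesTo X, shiftSum (primesTo X) id (smoothLog Y X) p ^ 2 / p ≤
      B * ((32 * B * Real.log Y) ^ 2 + 640 * B * Real.log Y ^ 2) := by
  have hlog : ∀ n : ℕ, 0 ≤ Real.log n := fun n => Real.log_natCast_nonneg n
  set P := primesTo X with hPdef
  have hg : ∀ r, 0 ≤ smoothLog Y X r := fun r => shiftSum_nonneg _ _ _ (fun i _ => hlog _) r
  have hpp : ∀ r ∈ P, r.Prime := fun r hr => (mem_primesTo.1 hr).1
  have hpow : ∀ i ∈ primePowIdx Y X, 0 < i.1 ^ i.2 := fun i hi =>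
    pow_pos (mem_primesTo.1 (mem_product.1 hi).1).1.pos _
  have m1 : ∑ r ∈ P, smoothLog Y X r / r ≤ B * (16 * Real.log Y) :=
    (first_moment P B hP _ _ _ hpow fun i _ => hlog _).trans
      (mul_le_mul_of_nonneg_left (primePow_first Y X hY) hB)
  have m2 : ∑ r ∈ P, smoothLog Y X r ^ 2 / r ≤ B * (320 * Real.log Y ^ 2) :=
    (second_moment P B hP _ _ _ hpow fun i _ => hlog _).trans
      (mul_le_mul_of_nonneg_left (primePow_second Y X hY) hB)
  have n1 : ∑ r ∈ P, smoothLog Y X r / r.totient ≤ 32 * B * Real.log Y := by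
    have : ∑ r ∈ P, smoothLog Y X r / r.totient ≤ ∑ r ∈ P, 2 * (smoothLog Y X r / r) := by
      refine sum_le_sum fun r hr => ?_
      have := mul_le_mul_of_nonneg_left (inv_totient_prime_le r (hpp r hr)) (hg r)
      calc _ = smoothLog Y X r * (1 / r.totient) := by ring
        _ ≤ _ := this
        _ = _ := by ring
    rw [← mul_sum] at this
    linarith
  have n2 : ∑ r ∈ P, smoothLog Y X r ^ 2 / r.totient ≤ 640 * B * Real.log Y ^ 2 := by
    have : ∑ r ∈ P, smoothLog Y X r ^ 2 / r.totient ≤ ∑ r ∈ P, 2 * (smoothLog Y X r ^ 2 / r) := by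
      refine sum_le_sum fun r hr => ?_
      have := mul_le_mul_of_nonneg_left (inv_totient_prime_le r (hpp r hr))
        (sq_nonneg (smoothLog Y X r))
      calc _ = smoothLog Y X r ^ 2 * (1 / r.totient) := by ring
        _ ≤ _ := this
        _ = _ := by ring
    rw [← mul_sum] at this
    linarith
  refine (second_moment P B hP P id _ (fun r hr => (hpp r hr).pos) fun r _ => hg r).trans
    (mul_le_mul_of_nonneg_left ?_ hB)
  have h1 : ∀ r ∈ P, ∀ r' ∈ P,
      smoothLog Y X r * smoothLog Y X r' / ((id r).lcm (id r')).totient ≤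
      smoothLog Y X r / r.totient * (smoothLog Y X r' / r'.totient) +
        if r = r' then smoothLog Y X r ^ 2 / r.totient else 0 := by
    intro r hr r' hr'
    have h0 : ∀ r : ℕ, 0 ≤ smoothLog Y X r / r.totient := fun r =>
      div_nonneg (hg r) (by positivity)
    simp only [id]
    by_cases h : r = r'
    · rw [if_pos h, ← h, Nat.lcm_self, ← sq]
      have := mul_nonneg (h0 r) (h0 r)
      linarith
    · rw [if_neg h, add_zero]
      have hc := (Nat.coprime_primes (hpp r hr) (hpp r' hr')).2 h
      rw [hc.lcm_eq_mul, Nat.totient_mul hc, div_mul_div_comm]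
      push_cast
      rfl
  refine (sum_le_sum fun r hr => sum_le_sum fun r' hr' => h1 r hr r' hr').trans ?_
  simp only [sum_add_distrib]
  rw [← sum_mul_sum, ← sq]
  have h2 : ∑ r ∈ P, ∑ r' ∈ P, (if r = r' then smoothLog Y X r ^ 2 / (r.totient : ℝ) else 0) =
      ∑ r ∈ P, smoothLog Y X r ^ 2 / r.totient :=
    sum_congr rfl fun r hr => by rw [sum_ite_eq, if_pos hr]
  rw [h2]
  have h3 : 0 ≤ ∑ r ∈ P, smoothLog Y X r / r.totient :=
    sum_nonneg fun r _ => div_nonneg (hg r) (by positivity)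
  gcongr

lemma finsum_primes_eq (t : ℝ) (ht : 0 ≤ t) (f : ℕ → ℝ) :
    ∑ᶠ (q : ℕ) (_ : q.Prime ∧ (q : ℝ) ≤ t), f q = ∑ q ∈ primesTo ⌊t⌋₊, f q := by
  rw [← finsum_mem_finset_eq_sum]
  refine finsum_congr fun q => ?_
  refine finsum_congr_Prop ?_ fun _ => rfl
  rw [mem_primesTo, Nat.le_floor_iff ht]

lemma hAux_prime (x : ℝ) (p : ℕ) (hp : p ∈ primesTo ⌊x⌋₊) :
    hAux x p = shiftSum (primesTo ⌊x⌋₊) id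
      (smoothLog ⌊(Real.log (Real.log x)) ^ 2⌋₊ ⌊x⌋₊) p := by
  rw [mem_primesTo] at hp
  rw [hAux, hp.1.primeFactors, sum_singleton, shiftSum, ← sum_filter]
  have hp1 := hp.1.one_lt
  have hset : (p - 1).primeFactors = {r ∈ primesTo ⌊x⌋₊ | id r ∣ p - 1} := by
    ext r
    simp only [Nat.mem_primeFactors, mem_filter, mem_primesTo, id]
    constructor
    · rintro ⟨a, b, c⟩
      have := Nat.le_of_dvd (by omega) b
      exact ⟨⟨a, by omega⟩, b⟩
    · rintro ⟨⟨a, _⟩, b⟩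
      exact ⟨a, b, by omega⟩
  rw [hset]
  refine sum_congr rfl fun r hr => ?_
  rw [mem_filter, mem_primesTo] at hr
  rw [smoothLog_eq _ _ r hr.1.1 hr.1.2]
  exact finsum_primes_eq _ (sq_nonneg _) _

/-- For `x > e^{e^e}`,
`Σ_{p ≤ x} h_x(p)²/p ≤ C (log log x)³ (log log log x)²`. -/
theorem M2_estimate :
    ∃ C : ℝ, 0 < C ∧ ∀ x : ℝ, Real.exp (Real.exp (Real.exp 1)) < x →
      (∑ᶠ (p : ℕ) (_ : p.Prime ∧ (p : ℝ) ≤ x), (hAux x p)^2 / p) ≤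
        C * (Real.log (Real.log x))^3 * (Real.log (Real.log (Real.log x)))^2 := by
  refine ⟨6656 * 4096 ^ 3, by norm_num, fun x hx => ?_⟩
  have hx0 : 0 < x := (Real.exp_pos _).trans hx
  have hx1 : 1 < x := (Real.one_lt_exp_iff.2 (Real.exp_pos _)).trans hx
  have hl1 : Real.exp (Real.exp 1) < Real.log x := (Real.lt_log_iff_exp_lt hx0).2 hx
  have hl2 : Real.exp 1 < Real.log (Real.log x) :=
    (Real.lt_log_iff_exp_lt ((Real.exp_pos _).trans hl1)).2 hl1
  set L := Real.log (Real.log x) with hL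
  have hL1 : 1 ≤ L := (Real.one_le_exp zero_le_one).trans hl2.le
  have hY : 1 ≤ ⌊L ^ 2⌋₊ := Nat.one_le_floor_iff _ |>.2 (one_le_pow₀ hL1)
  have hlogY : Real.log ⌊L ^ 2⌋₊ ≤ 2 * Real.log L := by
    have : Real.log ⌊L ^ 2⌋₊ ≤ Real.log (L ^ 2) :=
      Real.log_le_log (by exact_mod_cast hY) (Nat.floor_le (by positivity))
    rw [Real.log_pow] at this
    exact_mod_cast this
  rw [finsum_primes_eq x hx0.le]
  have h1 := moment_bound ⌊x⌋₊ ⌊L ^ 2⌋₊ hY (4096 * L) (by linarith)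
    (sum_inv_primes_ap x hL1 hx1)
  have h2 : ∑ p ∈ primesTo ⌊x⌋₊, hAux x p ^ 2 / p = ∑ p ∈ primesTo ⌊x⌋₊,
      shiftSum (primesTo ⌊x⌋₊) id (smoothLog ⌊L ^ 2⌋₊ ⌊x⌋₊) p ^ 2 / p :=
    sum_congr rfl fun p hp => by rw [hAux_prime x p hp]
  rw [h2]
  refine h1.trans ?_
  set B := 4096 * L with hB
  set W := Real.log L
  have hB1 : 1 ≤ B := by linarith
  have h3 : Real.log ⌊L ^ 2⌋₊ ^ 2 ≤ 4 * W ^ 2 := by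
    have := pow_le_pow_left₀ (Real.log_natCast_nonneg _) hlogY 2
    linarith [mul_pow 2 W 2]
  set U := Real.log ⌊L ^ 2⌋₊
  calc B * ((32 * B * U) ^ 2 + 640 * B * U ^ 2)
      = (1024 * B ^ 3 + 640 * B ^ 2) * U ^ 2 := by ring
    _ ≤ (1024 * B ^ 3 + 640 * B ^ 3) * (4 * W ^ 2) := by
        gcongr
        norm_num
    _ = _ := by rw [hB]; ring
end

section
/- Let ℓ ≥ 2 and n ≥ 2 be integers, and let u be an integer with 1 ≤ u ≤ n. Set d = gcd(u, n). Then u is a periodic point of the map x ↦ x^ℓ on ℤ/nℤ (i.e., some positive iterate of this map sends u back to u) if and only if gcd(ℓ, ord*(u, n)) = 1 and gcd(d, n/d) = 1. -/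
/-!
`u` is periodic exactly when `n ∣ u * (u ^ (ℓ ^ k - 1) - 1)` for some `k ≥ 1`
(`natCast_mem_periodicPts_iff`). With `d = gcd(u, n)`, this says that `n / d` divides
`u ^ (ℓ ^ k - 1) - 1`, because `u / d` and `n / d` are coprime. Since `u ^ (ℓ ^ k - 1) - 1` is
coprime to `u`, it follows that `n / d` is coprime to `u`, hence to `d`. Conversely, if `d` and
`n / d` are coprime then `n / d` is the largest divisor of `n` coprime to `u`
(`coprimePart_eq_div`). The condition then becomes `ord*(u, n) ∣ ℓ ^ k - 1`, which is solvable with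
`k ≥ 1` if and only if `ℓ` is coprime to `ord*(u, n)`, by Euler's theorem.
-/

/-- `coprimePart m u` is `m_{(u)}`, the largest divisor of `m` coprime to `u`. -/
def coprimePart (m u : ℕ) : ℕ :=
  (m.divisors.filter (fun d => Nat.Coprime d u)).sup id

/-- `ordStar u m = ord*(u, m)` is the multiplicative order of `u` modulo `m_{(u)}`,
the largest divisor of `m` coprime to `u`. -/
noncomputable def ordStar (u m : ℕ) : ℕ :=
  orderOf (u : ZMod (coprimePart m u))

theorem coprimePart_dvd_and_coprime (m u : ℕ) (hm : m ≠ 0) :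
    coprimePart m u ∣ m ∧ Nat.Coprime (coprimePart m u) u := by
  have hne : (m.divisors.filter (fun d => Nat.Coprime d u)).Nonempty := ⟨1, by simp [hm]⟩
  obtain ⟨x, hx, hxe⟩ := Finset.exists_mem_eq_sup _ hne id
  have h : coprimePart m u = x := hxe
  rw [h]
  simp only [Finset.mem_filter, Nat.mem_divisors] at hx
  exact ⟨hx.1.1, hx.2⟩

theorem coprimePart_eq_div (n u : ℕ) (hn : n ≠ 0)
    (h : Nat.Coprime (u.gcd n) (n / u.gcd n)) : coprimePart n u = n / u.gcd n := by
  obtain ⟨hd, hc⟩ := coprimePart_dvd_and_coprime n u hn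
  have hdn : u.gcd n ∣ n := Nat.gcd_dvd_right u n
  have hdpos : 0 < u.gcd n := Nat.gcd_pos_of_pos_right u (Nat.pos_of_ne_zero hn)
  have hcop : Nat.Coprime (n / u.gcd n) u := by
    have h1 : Nat.Coprime (u / u.gcd n) (n / u.gcd n) := Nat.coprime_div_gcd_div_gcd hdpos
    have h2 := Nat.Coprime.mul_left h h1
    rw [Nat.mul_div_cancel' (Nat.gcd_dvd_left u n)] at h2
    exact h2.symm
  apply le_antisymm
  · have hcd : Nat.Coprime (coprimePart n u) (u.gcd n) :=
      hc.coprime_dvd_right (Nat.gcd_dvd_left u n)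
    apply Nat.le_of_dvd (Nat.div_pos (Nat.le_of_dvd (Nat.pos_of_ne_zero hn) hdn) hdpos)
    apply hcd.dvd_of_dvd_mul_left
    rwa [Nat.mul_div_cancel' hdn]
  · have hmem : n / u.gcd n ∈ n.divisors.filter (fun d => Nat.Coprime d u) := by
      simp only [Finset.mem_filter, Nat.mem_divisors]
      exact ⟨⟨Nat.div_dvd_of_dvd hdn, hn⟩, hcop⟩
    exact Finset.le_sup (f := id) hmem

theorem iterate_pow_apply (ℓ n k : ℕ) (x : ZMod n) :
    (fun x : ZMod n => x ^ ℓ)^[k] x = x ^ ℓ ^ k := by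
  induction k with
  | zero => simp
  | succ k ih => rw [Function.iterate_succ_apply', ih, ← pow_mul, pow_succ]

theorem natCast_pow_eq_one_iff (m u e : ℕ) (hu : 1 ≤ u) :
    (u : ZMod m) ^ e = 1 ↔ m ∣ u ^ e - 1 := by
  rw [← Nat.modEq_iff_dvd' (Nat.one_le_pow _ _ hu), ← ZMod.natCast_eq_natCast_iff]
  push_cast
  exact eq_comm

theorem natCast_mem_periodicPts_iff (ℓ n u : ℕ) (hℓ : 1 ≤ ℓ) :
    (u : ZMod n) ∈ Function.periodicPts (fun x : ZMod n => x ^ ℓ) ↔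
      ∃ k > 0, n ∣ u * (u ^ (ℓ ^ k - 1) - 1) := by
  refine exists_congr fun k => and_congr_right fun _ => ?_
  have hL : 1 ≤ ℓ ^ k := Nat.one_le_pow _ _ hℓ
  have h1 : u * (u ^ (ℓ ^ k - 1) - 1) = u ^ ℓ ^ k - u := by
    rw [Nat.mul_sub, mul_one, ← pow_succ', Nat.sub_add_cancel hL]
  rw [Function.IsPeriodicPt, Function.IsFixedPt, iterate_pow_apply, h1,
    ← Nat.modEq_iff_dvd' (Nat.le_self_pow (by omega) u), ← ZMod.natCast_eq_natCast_iff]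
  push_cast
  exact eq_comm

theorem coprime_pow_sub_one (a e : ℕ) (ha : 1 ≤ a) (he : e ≠ 0) : Nat.Coprime a (a ^ e - 1) := by
  have h : Nat.Coprime (a ^ e) (a ^ e - 1) :=
    (Nat.coprime_self_sub_right (Nat.one_le_pow _ _ ha)).2 (Nat.coprime_one_right _)
  exact h.coprime_dvd_left (dvd_pow_self a he)

/-- A residue `u` with `1 ≤ u ≤ n` is a periodic point of `x ↦ x^ℓ` on `ℤ/nℤ` if and
only if `gcd(ℓ, ord*(u,n)) = 1` and, with `d = gcd(u,n)`, `gcd(d, n/d) = 1`. -/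
theorem cycle_criterion (ℓ n : ℕ) (hℓ : 2 ≤ ℓ) (hn : 2 ≤ n)
    (u : ℕ) (hu1 : 1 ≤ u) (hun : u ≤ n) :
    (u : ZMod n) ∈ Function.periodicPts (fun x : ZMod n => x ^ ℓ) ↔
      (Nat.Coprime ℓ (ordStar u n) ∧ Nat.Coprime (u.gcd n) (n / u.gcd n)) := by
  have hn0 : n ≠ 0 := by omega
  have hdn : u.gcd n ∣ n := Nat.gcd_dvd_right u n
  have hdu : u.gcd n ∣ u := Nat.gcd_dvd_left u n
  have hdpos : 0 < u.gcd n := Nat.gcd_pos_of_pos_left n hu1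
  rw [natCast_mem_periodicPts_iff ℓ n u (by omega)]
  constructor
  · rintro ⟨k, hk, hdvd⟩
    have hL : 1 < ℓ ^ k := Nat.one_lt_pow (by omega) (by omega)
    have hcop : Nat.Coprime u (u ^ (ℓ ^ k - 1) - 1) := coprime_pow_sub_one u _ hu1 (by omega)
    obtain ⟨hmd, hmc⟩ := coprimePart_dvd_and_coprime n u hn0
    constructor
    · have hord : ordStar u n ∣ ℓ ^ k - 1 := by
        apply orderOf_dvd_of_pow_eq_one
        rw [natCast_pow_eq_one_iff _ _ _ hu1]
        exact hmc.dvd_of_dvd_mul_left (hmd.trans hdvd)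
      exact (coprime_pow_sub_one ℓ k (by omega) (by omega)).coprime_dvd_right hord
    · have h1 : n / u.gcd n ∣ u / u.gcd n * (u ^ (ℓ ^ k - 1) - 1) := by
        apply Nat.dvd_of_mul_dvd_mul_left hdpos
        rwa [Nat.mul_div_cancel' hdn, ← mul_assoc, Nat.mul_div_cancel' hdu]
      have h2 : n / u.gcd n ∣ u ^ (ℓ ^ k - 1) - 1 :=
        (Nat.coprime_div_gcd_div_gcd hdpos).symm.dvd_of_dvd_mul_left h1
      exact (hcop.coprime_dvd_left hdu).coprime_dvd_right h2
  · rintro ⟨hord, hcop⟩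
    -- `ordStar u n = 0` would make `ℓ` coprime to `0`, that is `ℓ = 1`.
    have hpos : 0 < ordStar u n := by
      rcases Nat.eq_zero_or_pos (ordStar u n) with h | h
      · rw [h, Nat.coprime_zero_right] at hord
        omega
      · exact h
    refine ⟨(ordStar u n).totient, Nat.totient_pos.2 hpos, ?_⟩
    have h1 : ordStar u n ∣ ℓ ^ (ordStar u n).totient - 1 :=
      (Nat.modEq_iff_dvd' (Nat.one_le_pow _ _ (by omega))).1 (Nat.ModEq.pow_totient hord).symm
    have h2 : coprimePart n u ∣ u ^ (ℓ ^ (ordStar u n).totient - 1) - 1 :=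
      (natCast_pow_eq_one_iff _ _ _ hu1).1 (orderOf_dvd_iff_pow_eq_one.1 h1)
    rw [coprimePart_eq_div n u hn0 hcop] at h2
    have h3 := mul_dvd_mul hdu h2
    rwa [Nat.mul_div_cancel' hdn] at h3
end

section
/- Let ℓ ≥ 2 and n ≥ 2 be integers. Then C₁(ℓ, n) ≥ φ(n)_{(ℓ)}/λ(λ(n)), where C₁(ℓ, n) denotes the number of cycles of the map x ↦ x^ℓ on ℤ/nℤ that consist of residues u with gcd(u, n) = 1. -/
/-!
Let `d` be the largest divisor of `φ(n)` coprime to `ℓ` and write `φ(n) = d * e`; every prime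
dividing `e` divides `ℓ`, so `d` and `e` are coprime. The kernel of the `e`-th power map on
`(ℤ/nℤ)ˣ` has exponent dividing `e`, hence order coprime to `d`, so the image of this map has
order at least `d` (`le_card_range_pow`). Each element `g` of the image satisfies `g ^ d = 1`, so
its order `m` is coprime to `ℓ` and divides `λ(n)`; therefore `λ(m) ∣ λ(λ(n))` and
`ℓ ^ λ(λ(n)) ≡ 1 [MOD m]`, that is, `g` is fixed by the `λ(λ(n))`-th iterate of `x ↦ x ^ ℓ`
(`pow_pow_lam_lam`). So these at least `d` elements all lie on unit cycles of length at most
`λ(λ(n))`, and counting them cycle by cycle gives the bound.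
-/

/-- Carmichael's function: the exponent of the multiplicative group `(ℤ/nℤ)ˣ`. -/
noncomputable def lam (n : ℕ) : ℕ := Monoid.exponent (ZMod n)ˣ

/-- `numUnitCycles ℓ n = C₁(ℓ, n)`, the number of cycles of the map `x ↦ x^ℓ` on
`ℤ/nℤ` that consist of residues `u` with `gcd(u, n) = 1`, i.e. of units mod `n`. -/
noncomputable def numUnitCycles (ℓ n : ℕ) : ℕ :=
  Set.ncard {S : Set (ZMod n) |
    (∃ u ∈ Function.periodicPts (fun x : ZMod n => x ^ ℓ),
      S = {v | ∃ k : ℕ, (fun x : ZMod n => x ^ ℓ)^[k] u = v}) ∧ ∀ v ∈ S, IsUnit v}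

theorem coprimePart_spec (m u : ℕ) :
    coprimePart m u ∣ m ∧ (m ≠ 0 → Nat.Coprime (coprimePart m u) u) := by
  rcases eq_or_ne m 0 with rfl | hm
  · simp
  have hne : (m.divisors.filter (fun d => Nat.Coprime d u)).Nonempty :=
    ⟨1, by simp [hm]⟩
  obtain ⟨d, hd, h⟩ := Finset.exists_mem_eq_sup _ hne id
  rw [Finset.mem_filter, Nat.mem_divisors] at hd
  have h' : coprimePart m u = d := h
  rw [h']
  exact ⟨hd.1.1, fun _ => hd.2⟩

/-- The cofactor of the largest divisor of `m` coprime to `u` shares no prime with it: a prime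
dividing the cofactor and not `u` could be absorbed into a larger divisor. -/
theorem coprimePart_coprime_cofactor {m u e : ℕ} (hm : m ≠ 0) (h : m = coprimePart m u * e) :
    Nat.Coprime (coprimePart m u) e := by
  have hc := (coprimePart_spec m u).2 hm
  have hpos : 0 < coprimePart m u :=
    Nat.pos_of_ne_zero fun h0 => hm (by rw [h, h0, zero_mul])
  refine Nat.Coprime.symm (Nat.coprime_of_dvd fun p hp hpe hpd => ?_)
  have hpu : Nat.Coprime p u := Nat.Coprime.coprime_dvd_left hpd hc
  have hmem : coprimePart m u * p ∈ m.divisors.filter (fun d => Nat.Coprime d u) := by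
    rw [Finset.mem_filter, Nat.mem_divisors]
    refine ⟨⟨?_, hm⟩, Nat.Coprime.mul_left hc hpu⟩
    conv_rhs => rw [h]
    exact mul_dvd_mul_left _ hpe
  have hle : coprimePart m u * p ≤ coprimePart m u :=
    Finset.le_sup (f := id) hmem
  nlinarith [hp.two_le]

/-- In a finite abelian group of order `d * e` with `d`, `e` coprime, at least `d` elements are
`e`-th powers. -/
theorem le_card_range_pow {G : Type*} [CommGroup G] [Finite G] {d e : ℕ}
    (hG : Nat.card G = d * e) (hde : Nat.Coprime d e) :
    d ≤ Nat.card (powMonoidHom e : G →* G).range := by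
  have hK : Nat.Coprime d (Nat.card (powMonoidHom e : G →* G).ker) := by
    refine Nat.coprime_of_dvd fun p hp hpd hpK => ?_
    have := Fact.mk hp
    obtain ⟨x, hx⟩ := exists_prime_orderOf_dvd_card' p hpK
    have hxe : (x : G) ^ e = 1 := x.2
    have hpe : p ∣ e := by
      rw [← hx, ← Subgroup.orderOf_coe]
      exact orderOf_dvd_of_pow_eq_one hxe
    exact hp.one_lt.ne' (Nat.dvd_one.1 (hde ▸ Nat.dvd_gcd hpd hpe))
  have hmul : Nat.card (powMonoidHom e : G →* G).ker
      * Nat.card (powMonoidHom e : G →* G).range = d * e := by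
    rw [← hG, ← Subgroup.index_ker, Subgroup.card_mul_index]
  exact Nat.le_of_dvd Nat.card_pos (hK.dvd_of_dvd_mul_left ⟨e, hmul⟩)

theorem lam_ne_zero {n : ℕ} (hn : n ≠ 0) : lam n ≠ 0 := by
  have := NeZero.mk hn
  exact Monoid.exponent_ne_zero_of_finite

theorem lam_dvd_lam {m n : ℕ} (h : m ∣ n) (hn : n ≠ 0) : lam m ∣ lam n := by
  have := NeZero.mk hn
  exact MonoidHom.exponent_dvd (f := ZMod.unitsMap h) (ZMod.unitsMap_surjective h)

theorem pow_lam_modEq {ℓ m : ℕ} (h : Nat.Coprime ℓ m) : ℓ ^ lam m ≡ 1 [MOD m] := by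
  rw [← ZMod.natCast_eq_natCast_iff]
  have := congrArg Units.val (Monoid.pow_exponent_eq_one (ZMod.unitOfCoprime ℓ h))
  simpa [lam] using this

/-- An element of order coprime to `ℓ` is fixed by the `λ(λ(n))`-th iterate of the `ℓ`-th power
map. -/
theorem pow_pow_lam_lam {ℓ n : ℕ} (hn : n ≠ 0) (g : (ZMod n)ˣ)
    (h : Nat.Coprime ℓ (orderOf g)) : g ^ ℓ ^ lam (lam n) = g := by
  have hdvd : lam (orderOf g) ∣ lam (lam n) :=
    lam_dvd_lam (Monoid.order_dvd_exponent g) (lam_ne_zero hn)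
  obtain ⟨c, hc⟩ := hdvd
  have h1 : ℓ ^ lam (lam n) ≡ 1 [MOD orderOf g] := by
    rw [hc, pow_mul]
    simpa using (pow_lam_modEq h).pow c
  simpa using pow_eq_pow_iff_modEq.2 h1

theorem iterate_pow_map {M : Type*} [Monoid M] (ℓ k : ℕ) (x : M) :
    (fun x : M => x ^ ℓ)^[k] x = x ^ ℓ ^ k := by
  induction k with
  | zero => simp
  | succ k ih => rw [Function.iterate_succ_apply', ih, ← pow_mul, pow_succ]

/-- `C₁(ℓ, n) ≥ φ(n)_{(ℓ)} / λ(λ(n))`. -/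
theorem unit_cycles_lower_bound (ℓ n : ℕ) (hℓ : 2 ≤ ℓ) (hn : 2 ≤ n) :
    (coprimePart (Nat.totient n) ℓ : ℝ) / (lam (lam n) : ℝ) ≤ numUnitCycles ℓ n := by
  classical
  have hn0 : n ≠ 0 := by omega
  have := NeZero.mk hn0
  set L := lam (lam n) with hL
  have hLpos : 0 < L := Nat.pos_of_ne_zero (lam_ne_zero (lam_ne_zero hn0))
  have hφ : n.totient ≠ 0 := (Nat.totient_pos.2 (by omega)).ne'
  obtain ⟨⟨e, he⟩, hdl⟩ := coprimePart_spec n.totient ℓ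
  have hde := coprimePart_coprime_cofactor hφ he
  replace hdl := hdl hφ
  set d := coprimePart n.totient ℓ with hd
  have hG : Nat.card (ZMod n)ˣ = d * e := by
    rw [Nat.card_eq_fintype_card, ZMod.card_units_eq_totient, he]
  have hcard := le_card_range_pow hG hde
  set f : ZMod n → ZMod n := fun x => x ^ ℓ with hf
  let orb : ZMod n → Set (ZMod n) := fun u => {v | ∃ k : ℕ, f^[k] u = v}
  let A : Finset (ZMod n) :=
    (Finset.univ.filter (· ∈ (powMonoidHom e : (ZMod n)ˣ →* (ZMod n)ˣ).range)).image Units.val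
  have hA : d ≤ A.card := by
    rw [Finset.card_image_of_injective _ Units.val_injective, ← Fintype.card_subtype,
      ← Nat.card_eq_fintype_card]
    exact hcard
  have hAmem : ∀ x ∈ A, IsUnit x ∧ Function.IsPeriodicPt f L x := by
    intro x hx
    obtain ⟨g, hg, rfl⟩ := Finset.mem_image.1 hx
    obtain ⟨y, rfl⟩ := (Finset.mem_filter.1 hg).2
    have hgd : (powMonoidHom e y) ^ d = 1 := by
      rw [powMonoidHom_apply, ← pow_mul, mul_comm, ← hG, pow_card_eq_one']
    refine ⟨Units.isUnit _, ?_⟩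
    have hfix := pow_pow_lam_lam (ℓ := ℓ) hn0 (powMonoidHom e y)
      (Nat.Coprime.coprime_dvd_left (orderOf_dvd_of_pow_eq_one hgd) hdl).symm
    have := congrArg Units.val hfix
    rw [Units.val_pow_eq_pow_val] at this
    exact (iterate_pow_map ℓ L _).trans this
  have hfib : ∀ S ∈ A.image orb, (A.filter (fun x => orb x = S)).card ≤ L := by
    intro S hS
    obtain ⟨x₀, hx₀, rfl⟩ := Finset.mem_image.1 hS
    have hsub : A.filter (fun x => orb x = orb x₀) ⊆
        (Finset.range L).image (fun k => f^[k] x₀) := by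
      intro x hx
      have hxx : x ∈ orb x₀ := by
        rw [← (Finset.mem_filter.1 hx).2]
        exact ⟨0, rfl⟩
      obtain ⟨k, hk⟩ := hxx
      refine Finset.mem_image.2 ⟨k % L, Finset.mem_range.2 (Nat.mod_lt _ hLpos), ?_⟩
      rw [← hk]
      exact (hAmem x₀ hx₀).2.iterate_mod_apply k
    calc _ ≤ _ := Finset.card_le_card hsub
      _ ≤ _ := Finset.card_image_le
      _ = L := Finset.card_range L
  have hcycles : (A.image orb).card ≤ numUnitCycles ℓ n := by
    rw [← Set.ncard_coe_finset]
    refine Set.ncard_le_ncard ?_ (Set.toFinite _)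
    intro S hS
    obtain ⟨x, hx, rfl⟩ := Finset.mem_image.1 (Finset.mem_coe.1 hS)
    obtain ⟨hu, hp⟩ := hAmem x hx
    refine ⟨⟨x, ⟨L, hLpos, hp⟩, rfl⟩, ?_⟩
    rintro v ⟨k, rfl⟩
    rw [hf, iterate_pow_map]
    exact hu.pow _
  have hmain : d ≤ numUnitCycles ℓ n * L :=
    calc d ≤ A.card := hA
      _ ≤ L * (A.image orb).card := Finset.card_le_mul_card_image A L hfib
      _ ≤ numUnitCycles ℓ n * L := by
        rw [mul_comm]
        exact Nat.mul_le_mul_right _ hcycles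
  rw [div_le_iff₀ (by exact_mod_cast hLpos)]
  exact_mod_cast hmain
end

section
/- Let G be a finite abelian group with exponent λ(G) (the least common multiple of the orders of the elements of G). Then for any element d ∈ G and any positive integer j dividing λ(G), the number of elements u ∈ G such that the order of d·u divides λ(G)/j is at most (#G)/j; equivalently, j · #{u ∈ G : (d·u)^{λ(G)/j} = 1} ≤ #G. -/
/-!
With `m = λ(G) / j`, translation by `d` identifies the set being counted with the kernel of the
endomorphism `x ↦ x ^ m`. The index of this kernel is the size of the image, and the image contains
`g ^ m`, an element of order `j`, for any `g` of order `λ(G)`; such a `g` exists because `G` is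
abelian (`Monoid.exists_orderOf_eq_exponent`).
-/

/-- In a finite abelian group `G` with exponent `λ(G)`, for any `d ∈ G` and any
`j ∣ λ(G)`, the number of `u ∈ G` with the order of `d·u` dividing `λ(G)/j` is at
most `#G / j`; equivalently `j · #{u : (d·u)^{λ(G)/j} = 1} ≤ #G`. -/
theorem card_order_dividing_exponent_div (G : Type*) [CommGroup G] [Finite G]
    (d : G) (j : ℕ) (hj : 0 < j) (hdvd : j ∣ Monoid.exponent G) :
    j * Nat.card {u : G | (d * u) ^ (Monoid.exponent G / j) = 1} ≤ Nat.card G := by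
  obtain ⟨g, hg⟩ := Monoid.exists_orderOf_eq_exponent (Monoid.ExponentExists.of_finite (G := G))
  obtain ⟨m, hm⟩ := hdvd
  have hm0 : m ≠ 0 := by
    rintro rfl
    exact Monoid.exponent_ne_zero_of_finite (G := G) (by simpa using hm)
  rw [hm, Nat.mul_div_cancel_left m hj]
  let f : G →* G := powMonoidHom m
  have hker : Nat.card {u : G | (d * u) ^ m = 1} = Nat.card f.ker :=
    Nat.card_congr ((Equiv.mulLeft d).subtypeEquiv fun _ => Iff.rfl)
  have hord : orderOf (g ^ m) = j := by
    rw [orderOf_pow_of_dvd hm0 (hg ▸ hm ▸ dvd_mul_left m j), hg, hm,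
      Nat.mul_div_cancel _ (Nat.pos_of_ne_zero hm0)]
  have hrange : j ≤ f.ker.index := by
    rw [Subgroup.index_ker, ← hord, ← Nat.card_zpowers]
    exact Subgroup.card_le_of_le (Subgroup.zpowers_le.mpr ⟨g, rfl⟩)
  rw [hker, ← f.ker.index_mul_card]
  exact Nat.mul_le_mul_right _ hrange
end
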